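/- arXiv:1501.03377 — 5 statements merged into one kernel-verified Lean document; each statement's English description precedes it below -/
import Mathlib

section
/- Let (G,x,y) encode a reflexive regular map that is simple, satisfies 2q² > |G| and 3q² ≤ 2|G| (i.e. 1/2 < den ≤ 2/3), has p = 3, and is not the tetrahedral map tet. If v, w, u are vertices with V = V_v ∪ V_w ∪ V_u, then the set of neighbours of v in Γ is exactly V_w ∪ V_u. -/
namespace RegularMap

variable {G : Type*} [Group G]

/-- The vertex set of the map: left cosets of the cyclic subgroup generated by `y`. -/
abbrev Vertex (y : G) : Type _ := G ⧸ Subgroup.zpowers y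

/-- The rotation about the vertex `v = g⟨y⟩`, namely `g * y * g⁻¹`. -/
def rot (y : G) (v : Vertex y) : G :=
  Quotient.liftOn' v (fun g => g * y * g⁻¹) (by
    intro a b h
    obtain ⟨k, hk⟩ := QuotientGroup.leftRel_apply.mp h
    have hk' : y ^ k = a⁻¹ * b := hk
    have hb : b = a * y ^ k := by rw [hk']; group
    subst hb
    group)

/-- Two vertices are adjacent iff they are distinct and form the endpoint pair of
some edge `g⟨x*y⟩`, whose endpoints are `g⟨y⟩` and `g*x*y⟨y⟩`. -/
def Adj (x y : G) (v w : Vertex y) : Prop :=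
  v ≠ w ∧ ∃ g : G,
    ({v, w} : Set (Vertex y)) = {QuotientGroup.mk g, QuotientGroup.mk (g * x * y)}

/-- The map is simple: no edge has equal endpoints, and distinct edges (left cosets
of `⟨x*y⟩`) have distinct endpoint pairs. -/
def IsSimple (x y : G) : Prop :=
  (∀ g : G, (QuotientGroup.mk g : Vertex y) ≠ QuotientGroup.mk (g * x * y)) ∧
  ∀ g h : G,
    ({QuotientGroup.mk g, QuotientGroup.mk (g * x * y)} : Set (Vertex y)) =
      {QuotientGroup.mk h, QuotientGroup.mk (h * x * y)} →
    (QuotientGroup.mk g : G ⧸ Subgroup.zpowers (x * y)) = QuotientGroup.mk h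

/-- The map is reflexive: some group automorphism inverts both `x` and `y`. -/
def IsReflexive (x y : G) : Prop :=
  ∃ σ : G ≃* G, σ x = x⁻¹ ∧ σ y = y⁻¹

/-- An automorphism of the map (given a reflection σ): either orientation preserving,
`g⟨y⟩ ↦ a*g⟨y⟩`, or orientation reversing, `g⟨y⟩ ↦ a*σ(g)⟨y⟩`. -/
def IsMapAut (y : G) (σ : G ≃* G) (φ : Vertex y → Vertex y) : Prop :=
  (∃ a : G, ∀ g : G, φ (QuotientGroup.mk g) = QuotientGroup.mk (a * g)) ∨
  (∃ a : G, ∀ g : G, φ (QuotientGroup.mk g) = QuotientGroup.mk (a * σ g))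

/-- `v'` is a diagonal neighbour of `v`: `v' = S_w² • v` for some vertex `w` adjacent to `v`. -/
def DiagNeighbor (x y : G) (v v' : Vertex y) : Prop :=
  ∃ w : Vertex y, Adj x y v w ∧ v' = rot y w ^ 2 • v

/-- Diagonal alignment: the reflexive-transitive closure of the diagonal-neighbour relation. -/
def Aligned (x y : G) : Vertex y → Vertex y → Prop :=
  Relation.ReflTransGen (DiagNeighbor x y)

/-- The primitive period `J`: the least `j ≥ 1` such that `S_v^j` fixes every vertex
diagonally aligned with `v` (this is independent of `v`). -/
noncomputable def primPeriod (x y : G) : ℕ :=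
  sInf {j : ℕ | 1 ≤ j ∧ ∀ v v' : Vertex y, Aligned x y v v' → rot y v ^ j • v' = v'}

/-- The even period `T = lcm(J, 2)`. -/
noncomputable def evenPeriod (x y : G) : ℕ := Nat.lcm (primPeriod x y) 2

/-- Relators of the tetrahedral group ⟨X,Y ∣ X³, Y³, (XY)²⟩. -/
def tetRels : Set (FreeGroup (Fin 2)) :=
  {FreeGroup.of 0 ^ 3, FreeGroup.of 1 ^ 3, (FreeGroup.of 0 * FreeGroup.of 1) ^ 2}

/-- Relators of the Fermat group ⟨X,Y ∣ X³, Y^(2n), (XY)², [X,Y]³⟩. -/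
def fermatRels (n : ℕ) : Set (FreeGroup (Fin 2)) :=
  {FreeGroup.of 0 ^ 3, FreeGroup.of 1 ^ (2 * n), (FreeGroup.of 0 * FreeGroup.of 1) ^ 2,
    (FreeGroup.of 0 * FreeGroup.of 1 * (FreeGroup.of 0)⁻¹ * (FreeGroup.of 1)⁻¹) ^ 3}

/-- `(G,x,y)` is the tetrahedral map: the canonical homomorphism from the presented
group ⟨X,Y ∣ X³, Y³, (XY)²⟩ sending X to x and Y to y is an isomorphism. -/
def IsTet (G : Type*) [Group G] (x y : G) : Prop :=
  ∃ e : PresentedGroup tetRels ≃* G,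
    e (PresentedGroup.of 0) = x ∧ e (PresentedGroup.of 1) = y

/-- `(G,x,y)` is the Fermat map `Fer(n)`: the canonical homomorphism from the Fermat
group `G_n` sending X to x and Y to y is an isomorphism. -/
def IsFermat (n : ℕ) (G : Type*) [Group G] (x y : G) : Prop :=
  ∃ e : PresentedGroup (fermatRels n) ≃* G,
    e (PresentedGroup.of 0) = x ∧ e (PresentedGroup.of 1) = y

def Tor (y : G) (s : ℕ) : Set G := {w | w ∈ Subgroup.zpowers y ∧ w ^ s = 1}

def NN (y : G) (s : ℕ) : Subgroup G := Subgroup.normalizer (Tor y s)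

theorem zcomm {y a b : G} (ha : a ∈ Subgroup.zpowers y) (hb : b ∈ Subgroup.zpowers y) :
    a * b = b * a := by
  obtain ⟨i, rfl⟩ := ha
  obtain ⟨j, rfl⟩ := hb
  exact (Commute.refl y).zpow_zpow i j

theorem tor_zpow [Finite G] {y w w' : G} {s : ℕ} (hs : 0 < s) (hw : w ∈ Subgroup.zpowers y)
    (hws : orderOf w = s) (hw' : w' ∈ Tor y s) : w' ∈ Subgroup.zpowers w := by
  classical
  have : Fintype (Subgroup.zpowers y) := Fintype.ofFinite _
  let W : Subgroup.zpowers y := ⟨w, hw⟩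
  let W' : Subgroup.zpowers y := ⟨w', hw'.1⟩
  have hW : orderOf W = s := by rw [← hws]; exact Subgroup.orderOf_mk w hw
  have h1 := IsCyclic.card_pow_eq_one_le (α := Subgroup.zpowers y) hs
  have h2 : (Finset.univ.filter (fun a => a ∈ Subgroup.zpowers W)) ⊆
      Finset.univ.filter (fun a : Subgroup.zpowers y => a ^ s = 1) := by
    intro a ha
    simp only [Finset.mem_filter, Finset.mem_univ, true_and] at ha ⊢
    obtain ⟨k, rfl⟩ := ha
    show (W ^ k) ^ s = 1
    rw [← zpow_natCast, ← zpow_mul, mul_comm, zpow_mul, zpow_natCast, ← hW, pow_orderOf_eq_one,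
      one_zpow]
  have h3 : (Finset.univ.filter (fun a => a ∈ Subgroup.zpowers W)).card = s := by
    rw [← Fintype.card_subtype, ← Nat.card_eq_fintype_card]
    exact (Nat.card_zpowers W).trans hW
  have h4 := Finset.eq_of_subset_of_card_le h2 (by rw [h3]; exact h1)
  have h5 : W' ∈ Finset.univ.filter (fun a : Subgroup.zpowers y => a ^ s = 1) := by
    simp only [Finset.mem_filter, Finset.mem_univ, true_and]
    exact Subtype.ext hw'.2
  rw [← h4] at h5
  simp only [Finset.mem_filter, Finset.mem_univ, true_and] at h5
  obtain ⟨k, hk⟩ := h5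
  exact ⟨k, congrArg Subtype.val hk⟩

theorem mem_NN_of_conj [Finite G] {y a g : G} (ha : a ∈ Subgroup.zpowers y) (ha1 : a ≠ 1)
    (hg : g * a * g⁻¹ ∈ Subgroup.zpowers y) :
    ∃ s : ℕ, s.Prime ∧ (∃ w ∈ Tor y s, w ≠ 1) ∧ g ∈ NN y s := by
  have ho : orderOf a ≠ 1 := fun h => ha1 (orderOf_eq_one_iff.mp h)
  obtain ⟨s, hs, hd⟩ := Nat.exists_prime_and_dvd ho
  have hw : orderOf (a ^ (orderOf a / s)) = s :=
    orderOf_pow_orderOf_div (orderOf_pos a).ne' hd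
  set w := a ^ (orderOf a / s) with hwdef
  have hwY : w ∈ Subgroup.zpowers y := Subgroup.pow_mem _ ha _
  have hws : w ^ s = 1 := by rw [← hw]; exact pow_orderOf_eq_one w
  have hgw : g * w * g⁻¹ ∈ Subgroup.zpowers y := by
    rw [hwdef, ← conj_pow]; exact Subgroup.pow_mem _ hg _
  refine ⟨s, hs, ⟨w, ⟨hwY, hws⟩, ?_⟩, ?_⟩
  · intro h; rw [h, orderOf_one] at hw; exact hs.one_lt.ne hw
  · apply Subgroup.mem_normalizer_fintype
    intro n hn
    obtain ⟨k, rfl⟩ := tor_zpow hs.pos hwY hw hn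
    refine ⟨?_, ?_⟩
    · show g * w ^ k * g⁻¹ ∈ _
      rw [← conj_zpow]; exact Subgroup.zpow_mem _ hgw _
    · show (g * w ^ k * g⁻¹) ^ s = 1
      have : (w ^ k) ^ s = 1 := hn.2
      rw [conj_pow, this]; group

structure Ctx (y t : G) (φ : G ≃* G) : Prop where
  tt : t * t = 1
  gen : Subgroup.closure {t, y} = ⊤
  ft : φ t = t
  fy : φ y = y⁻¹
  tyt : t * y * t = y⁻¹ * t * y⁻¹
  dis : ∀ a ∈ Subgroup.zpowers y, t * a * t ∈ Subgroup.zpowers y → a = 1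
  tY : t ∉ Subgroup.zpowers y
  d1 : Nat.card G < 2 * orderOf y ^ 2
  d2 : 3 * orderOf y ^ 2 ≤ 2 * Nat.card G

def YtY (y t : G) : Set G := {g | ∃ a ∈ Subgroup.zpowers y, ∃ b ∈ Subgroup.zpowers y, g = a * t * b}

section
variable {y t : G} {φ : G ≃* G}

theorem Ctx.tinv (h : Ctx y t φ) : t⁻¹ = t := inv_eq_of_mul_eq_one_left h.tt

theorem Ctx.t2 (h : Ctx y t φ) (a : G) : t * (t * a) = a := by
  rw [← mul_assoc, h.tt, one_mul]

theorem Ctx.fa (h : Ctx y t φ) {a : G} (ha : a ∈ Subgroup.zpowers y) : φ a = a⁻¹ := by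
  obtain ⟨i, rfl⟩ := ha
  show φ (y ^ i) = (y ^ i)⁻¹
  rw [map_zpow, h.fy, inv_zpow]

theorem Ctx.uniq (h : Ctx y t φ) {a b c d : G} (ha : a ∈ Subgroup.zpowers y)
    (hb : b ∈ Subgroup.zpowers y) (hc : c ∈ Subgroup.zpowers y) (hd : d ∈ Subgroup.zpowers y)
    (e : a * t * b = c * t * d) : a = c ∧ b = d := by
  have e1 : t * (c⁻¹ * a) * t = d * b⁻¹ := by
    have : a * t = c * t * d * b⁻¹ := by rw [← e]; group
    calc t * (c⁻¹ * a) * t = t * c⁻¹ * (a * t) := by group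
      _ = t * c⁻¹ * (c * t * d * b⁻¹) := by rw [this]
      _ = (t * t) * d * b⁻¹ := by group
      _ = d * b⁻¹ := by rw [h.tt]; group
  have e2 := h.dis (c⁻¹ * a) (mul_mem (inv_mem hc) ha) (by rw [e1]; exact mul_mem hd (inv_mem hb))
  have e3 : a = c := (inv_mul_eq_one.mp e2).symm
  refine ⟨e3, ?_⟩
  subst e3
  exact mul_left_cancel e

theorem Ctx.good (h : Ctx y t φ) {i : G} (hi : i ∈ Subgroup.zpowers y)
    (hg : t * i * t ∈ YtY y t) : t * i * t = i⁻¹ * t * i⁻¹ := by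
  have key : ∀ j ∈ Subgroup.zpowers y, ∀ a ∈ Subgroup.zpowers y, ∀ b ∈ Subgroup.zpowers y,
      t * j * t = a * t * b → a = b := by
    intro j hj a ha b hb e
    have e1 : t * j⁻¹ * t = b⁻¹ * t * a⁻¹ := by
      have := congrArg (fun z => z⁻¹) e
      simpa [mul_assoc, h.tinv] using this
    have e2 : t * j⁻¹ * t = a⁻¹ * t * b⁻¹ := by
      have := congrArg φ e
      simpa [map_mul, h.ft, h.fa hj, h.fa ha, h.fa hb] using this
    have := (h.uniq (inv_mem hb) (inv_mem ha) (inv_mem ha) (inv_mem hb) (e1.symm.trans e2)).1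
    exact (inv_injective this).symm
  obtain ⟨a, ha, b, hb, e⟩ := hg
  have hab := key i hi a ha b hb e
  subst hab
  have e3 : t * a * t = a⁻¹ * t * i := by
    calc t * a * t = a⁻¹ * (a * t * a) * t := by group
      _ = a⁻¹ * (t * i * t) * t := by rw [e]
      _ = a⁻¹ * t * i * (t * t) := by group
      _ = a⁻¹ * t * i := by rw [h.tt, mul_one]
  have := key a ha a⁻¹ (inv_mem ha) i hi e3
  rw [e, ← this, inv_inv]

theorem Ctx.yY : y ∈ Subgroup.zpowers y := Subgroup.mem_zpowers y

theorem Ctx.ZZ (h : Ctx y t φ) : t * (y * y) * t = y⁻¹ * (t * (y⁻¹ * y⁻¹) * t) * y⁻¹ := by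
  calc t * (y * y) * t = t * y * (t * t) * y * t := by rw [h.tt]; group
    _ = (t * y * t) * (t * y * t) := by group
    _ = _ := by rw [h.tyt]; group

theorem Ctx.good_inv (h : Ctx y t φ) {i : G} (hg : t * i * t = i⁻¹ * t * i⁻¹) :
    t * i⁻¹ * t = i * t * i := by
  have := congrArg (fun z => z⁻¹) hg
  simpa [mul_assoc, h.tinv] using this

theorem Ctx.ZU [Finite G] (h : Ctx y t φ) : t * (y * y) * t ∉ YtY y t := by
  intro hg
  have e := h.good (mul_mem Ctx.yY Ctx.yY) hg
  have e1 : t * (y * y) * t = y * t * y := by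
    calc t * (y * y) * t = t * y * (t * t) * y * t := by rw [h.tt]; group
      _ = (t * y * t) * (t * y * t) := by group
      _ = y⁻¹ * (t * (y * y)⁻¹ * t) * y⁻¹ := by rw [h.tyt]; group
      _ = y * t * y := by rw [h.good_inv e]; group
  have e2 := (h.uniq Ctx.yY Ctx.yY (inv_mem (mul_mem Ctx.yY Ctx.yY))
    (inv_mem (mul_mem Ctx.yY Ctx.yY)) (e1.symm.trans e)).1
  have e3 : y ^ 3 = 1 := by
    calc y ^ 3 = y * (y * y) := by rw [pow_succ, pow_two, mul_assoc]
      _ = 1 := by nth_rw 1 [e2]; group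
  have hq := orderOf_dvd_of_pow_eq_one e3
  have h3 := (Nat.dvd_prime Nat.prime_three).mp hq
  have d1 := h.d1
  have d2 := h.d2
  rcases h3 with h3 | h3
  · rw [h3] at d1 d2; omega
  · have hc : 3 ∣ Nat.card G := by rw [← h3]; exact orderOf_dvd_natCard y
    have ht1 : t ≠ 1 := fun e => h.tY (e ▸ one_mem _)
    have ht : orderOf t = 2 := orderOf_eq_prime (by rw [pow_two, h.tt]) ht1
    have hc2 : 2 ∣ Nat.card G := by rw [← ht]; exact orderOf_dvd_natCard t
    rw [h3] at d1 d2; omega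

theorem Ctx.cover [Finite G] (h : Ctx y t φ) (g : G) :
    g ∈ YtY y t ∨ ∃ s : ℕ, s.Prime ∧ (∃ w ∈ Tor y s, w ≠ 1) ∧ g ∈ NN y s := by
  by_contra hcon
  push Not at hcon
  obtain ⟨h1, h2⟩ := hcon
  let Y := Subgroup.zpowers y
  let f1 : Y × Y → G := fun p => p.1 * t * p.2
  let f2 : Y × Y → G := fun p => p.1 * g * p.2
  have i1 : Function.Injective f1 := by
    rintro ⟨a, b⟩ ⟨c, d⟩ e
    obtain ⟨u, v⟩ := h.uniq a.2 b.2 c.2 d.2 e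
    exact Prod.ext (Subtype.ext u) (Subtype.ext v)
  have i2 : Function.Injective f2 := by
    rintro ⟨⟨a, ha⟩, ⟨b, hb⟩⟩ ⟨⟨c, hc⟩, ⟨d, hd⟩⟩ e
    have e : a * g * b = c * g * d := e
    have hbd : b * d⁻¹ = 1 := by
      by_contra hne
      obtain ⟨s, hs, hw, hg⟩ := mem_NN_of_conj (y := y) (a := b * d⁻¹) (g := g)
        (mul_mem hb (inv_mem hd)) hne (by
          have : g * (b * d⁻¹) * g⁻¹ = a⁻¹ * c := by
            calc g * (b * d⁻¹) * g⁻¹ = a⁻¹ * (a * g * b) * d⁻¹ * g⁻¹ := by group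
              _ = a⁻¹ * c := by rw [e]; group
          rw [this]; exact mul_mem (inv_mem ha) hc)
      exact h2 s hs hw hg
    have hbd' : b = d := mul_inv_eq_one.mp hbd
    subst hbd'
    have : a = c := mul_right_cancel (mul_right_cancel e)
    subst this
    rfl
  have i3 : Function.Injective (Sum.elim f1 f2) := by
    refine i1.sumElim i2 ?_
    rintro ⟨⟨a, ha⟩, ⟨b, hb⟩⟩ ⟨⟨c, hc⟩, ⟨d, hd⟩⟩ e
    have e : a * t * b = c * g * d := e
    apply h1
    refine ⟨c⁻¹ * a, mul_mem (inv_mem hc) ha, b * d⁻¹, mul_mem hb (inv_mem hd), ?_⟩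
    calc g = c⁻¹ * (c * g * d) * d⁻¹ := by group
      _ = _ := by rw [← e]; group
  have := Nat.card_le_card_of_injective _ i3
  rw [Nat.card_sum, Nat.card_prod, Nat.card_zpowers] at this
  have := h.d1
  nlinarith

theorem Ctx.tri (h : Ctx y t φ) (D : Subgroup G) (hy : y ∈ D) (hZ : t * (y * y) * t ∈ D) (g : G) :
    g ∈ D ∨ t * g ∈ D ∨ t * y⁻¹ * g ∈ D := by
  have hyt : ∀ g, t * y⁻¹ * g ∈ D → t * (y * g) ∈ D := by
    intro g hg
    have : t * (y * g) = t * (y * y) * t * (t * y⁻¹ * g) := by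
      calc t * (y * g) = t * (y * y) * (t * t) * (y⁻¹ * g) := by rw [h.tt]; group
        _ = _ := by group
    rw [this]; exact mul_mem hZ hg
  have htm : ∀ g, (g ∈ D ∨ t * g ∈ D ∨ t * y⁻¹ * g ∈ D) →
      (t * g ∈ D ∨ t * (t * g) ∈ D ∨ t * y⁻¹ * (t * g) ∈ D) := by
    rintro g (hg | hg | hg)
    · right; left; rwa [h.t2]
    · left; exact hg
    · right; right
      have : t * y⁻¹ * (t * g) = y * (t * (y * g)) := by
        calc t * y⁻¹ * (t * g) = (t * y⁻¹ * t) * g := by group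
          _ = _ := by rw [h.good_inv h.tyt]; group
      rw [this]; exact mul_mem hy (hyt g hg)
  have hg : g ∈ Subgroup.closure {t, y} := by rw [h.gen]; trivial
  induction hg using Subgroup.closure_induction_left with
  | one => left; exact one_mem _
  | mul_left x hx g _ ih =>
    rcases hx with rfl | hx
    · exact htm g ih
    · rw [Set.mem_singleton_iff] at hx; subst hx
      rcases ih with hg | hg | hg
      · left; exact mul_mem hy hg
      · right; right; rwa [show t * x⁻¹ * (x * g) = t * g by group]
      · right; left; exact hyt g hg
  | inv_mul_cancel x hx g _ ih =>
    rcases hx with rfl | hx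
    · rw [h.tinv]; exact htm g ih
    · rw [Set.mem_singleton_iff] at hx; subst hx
      rcases ih with hg | hg | hg
      · left; exact mul_mem (inv_mem hy) hg
      · right; right
        have : t * x⁻¹ * (x⁻¹ * g) = (t * (x * x) * t)⁻¹ * (t * g) := by
          rw [mul_inv_rev, mul_inv_rev, h.tinv]
          calc t * x⁻¹ * (x⁻¹ * g) = t * (x⁻¹ * x⁻¹) * 1 * g := by group
            _ = t * (x⁻¹ * x⁻¹) * (t * t) * g := by rw [h.tt]
            _ = _ := by group
        rw [this]; exact mul_mem (inv_mem hZ) hg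
      · right; left; rwa [← mul_assoc]

theorem mem_NN_y (s : ℕ) : y ∈ NN y s := by
  refine Subgroup.mem_set_normalizer_iff.mpr ?_
  intro k
  constructor
  · intro hk
    rw [zcomm Ctx.yY hk.1, mul_assoc, mul_inv_cancel, mul_one]; exact hk
  · intro hk
    have e : k = y⁻¹ * (y * k * y⁻¹) * y := by group
    rw [e, zcomm (inv_mem Ctx.yY) hk.1, mul_assoc, inv_mul_cancel, mul_one]; exact hk

theorem Ctx.t_not_NN (h : Ctx y t φ) {s : ℕ} (hw : ∃ w ∈ Tor y s, w ≠ 1) : t ∉ NN y s := by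
  intro ht
  obtain ⟨w, hw, hw1⟩ := hw
  have := ((Subgroup.mem_set_normalizer_iff.mp ht) w).mp hw
  rw [h.tinv] at this
  exact hw1 (h.dis w hw.1 this.1)

theorem Ctx.phi_NN [Finite G] (h : Ctx y t φ) {s : ℕ} {g : G} (hg : g ∈ NN y s) : φ g ∈ NN y s := by
  apply Subgroup.mem_normalizer_fintype
  intro n hn
  have hn' : n⁻¹ ∈ Tor y s := ⟨inv_mem hn.1, by rw [inv_pow, hn.2, inv_one]⟩
  have h1 := ((Subgroup.mem_set_normalizer_iff.mp hg) n⁻¹).mp hn'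
  have e : φ g * n * (φ g)⁻¹ = (g * n⁻¹ * g⁻¹)⁻¹ := by
    rw [← h.fa h1.1, map_mul, map_mul, map_inv, map_inv, h.fa hn.1, inv_inv]
  rw [e]
  exact ⟨inv_mem h1.1, by rw [inv_pow, h1.2, inv_one]⟩

end

section
variable {y t : G} {φ : G ≃* G}

theorem Ctx.comm_sq (h : Ctx y t φ) {w : G} (hw : w ∈ Subgroup.zpowers y)
    (g1 : t * (w * y) * t = (w * y)⁻¹ * t * (w * y)⁻¹)
    (g2 : t * (w * y⁻¹) * t = (w * y⁻¹)⁻¹ * t * (w * y⁻¹)⁻¹) :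
    (w * w) * (t * (y * y) * t) = (t * (y * y) * t) * (w * w) := by
  have hy : y ∈ Subgroup.zpowers y := Ctx.yY
  have gi1 := h.good_inv g1
  have gi2 := h.good_inv g2
  have c1 : w * y = y * w := zcomm hw hy
  set a := w * y with ha
  set b := w * y⁻¹ with hb
  have haY : a ∈ Subgroup.zpowers y := mul_mem hw hy
  have hbY : b ∈ Subgroup.zpowers y := mul_mem hw (inv_mem hy)
  have hb2 : b = y⁻¹ * w := zcomm hw (inv_mem hy)
  have e0 : y * y = a * b⁻¹ := by rw [c1, hb2]; group
  have e0' : y * y = b⁻¹ * a := by rw [e0, zcomm haY (inv_mem hbY)]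
  have e0i : (y * y)⁻¹ = a⁻¹ * b := by rw [e0']; group
  have e0j : (y * y)⁻¹ = b * a⁻¹ := by rw [e0]; group
  have eww : w * w = b * a := by
    rw [c1, hb]; group
  have hZi : (t * (y * y) * t)⁻¹ = t * (y * y)⁻¹ * t := by
    rw [mul_inv_rev, mul_inv_rev, h.tinv, mul_assoc]
  have E1 : t * (y * y) * t = a⁻¹ * (t * (y * y)⁻¹ * t) * b := by
    calc t * (y * y) * t = t * a * 1 * b⁻¹ * t := by rw [e0]; group
      _ = t * a * (t * t) * b⁻¹ * t := by rw [h.tt]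
      _ = (t * a * t) * (t * b⁻¹ * t) := by group
      _ = a⁻¹ * (t * (a⁻¹ * b) * t) * b := by rw [g1, gi2]; group
      _ = _ := by rw [e0i]
  have E2 : t * (y * y) * t = b * (t * (y * y)⁻¹ * t) * a⁻¹ := by
    calc t * (y * y) * t = t * b⁻¹ * 1 * a * t := by rw [e0']; group
      _ = t * b⁻¹ * (t * t) * a * t := by rw [h.tt]
      _ = (t * b⁻¹ * t) * (t * a * t) := by group
      _ = b * (t * (b * a⁻¹) * t) * a⁻¹ := by rw [g1, gi2]; group
      _ = _ := by rw [e0j]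
  set Z := t * (y * y) * t
  set Z' := t * (y * y)⁻¹ * t
  rw [eww]
  calc b * a * Z = b * a * (a⁻¹ * Z' * b) := by rw [← E1]
    _ = (b * Z' * a⁻¹) * (a * b) := by group
    _ = Z * (b * a) := by rw [← E2, zcomm haY hbY]

/-- the subgroup of squares in `Y` whose squares commute with `Z` -/
def KK (y Z : G) : Subgroup (Subgroup.zpowers (y * y)) where
  carrier := {w | (w : G) * w * Z = Z * (w * w)}
  one_mem' := by simp
  mul_mem' := by
    intro a b ha hb
    have ha : (a : G) * a * Z = Z * (a * a) := ha
    have hb : (b : G) * b * Z = Z * (b * b) := hb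
    show ((a * b : Subgroup.zpowers (y * y)) : G) * (a * b : Subgroup.zpowers (y * y)) * Z
      = Z * ((a * b : Subgroup.zpowers (y * y)) * (a * b : Subgroup.zpowers (y * y)))
    have c : ((a * b : Subgroup.zpowers (y * y)) : G) * (a * b : Subgroup.zpowers (y * y))
        = ((a : G) * a) * (b * b) := by
      push_cast
      have := zcomm a.2 b.2
      calc (a : G) * b * (a * b) = a * (b * a) * b := by group
        _ = a * (a * b) * b := by rw [this]
        _ = _ := by group
    rw [c, mul_assoc, hb, ← mul_assoc, ha, mul_assoc]
  inv_mem' := by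
    intro a ha
    have ha : Commute ((a : G) * a) Z := ha
    have := ha.inv_left
    show ((a⁻¹ : Subgroup.zpowers (y * y)) : G) * (a⁻¹ : Subgroup.zpowers (y * y)) * Z
      = Z * ((a⁻¹ : Subgroup.zpowers (y * y)) * (a⁻¹ : Subgroup.zpowers (y * y)))
    push_cast
    rw [mul_inv_rev] at this
    exact this

theorem sqle : Subgroup.zpowers (y * y) ≤ Subgroup.zpowers y :=
  Subgroup.zpowers_le.mpr (mul_mem Ctx.yY Ctx.yY)

theorem Ctx.twt (h : Ctx y t φ) {N : Subgroup G} (hZ : t * (y * y) * t ∈ N) {w : G}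
    (hw : w ∈ Subgroup.zpowers (y * y)) : t * w * t ∈ N := by
  obtain ⟨k, rfl⟩ := hw
  have e : t * (y * y) ^ k * t = (t * (y * y) * t) ^ k := by
    have := @conj_zpow G _ k t (y * y)
    rw [h.tinv] at this
    exact this.symm
  show t * (y * y) ^ k * t ∈ N
  rw [e]; exact Subgroup.zpow_mem _ hZ _

theorem Ctx.tyt_not (h : Ctx y t φ) {N : Subgroup G} (hy : y ∈ N) (ht : t ∉ N) :
    t * y * t ∉ N := by
  rw [h.tyt]
  intro hc
  apply ht
  have : t = y * (y⁻¹ * t * y⁻¹) * y := by group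
  rw [this]; exact mul_mem (mul_mem hy hc) hy

theorem Ctx.count [Finite G] (h : Ctx y t φ) {N : Subgroup G} (hy : y ∈ N) (ht : t ∉ N)
    (hZ : t * (y * y) * t ∈ N) :
    Nat.card N + orderOf y ^ 2 +
      2 * (Nat.card {w : Subgroup.zpowers (y * y) // t * (w * y) * t ∉ YtY y t} * orderOf y)
      ≤ Nat.card G := by
  let Y := Subgroup.zpowers y
  have hYN : Y ≤ N := Subgroup.zpowers_le.mpr hy
  let B := {w : Subgroup.zpowers (y * y) // t * (w * y) * t ∉ YtY y t}
  let f1 : N → G := fun n => n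
  let f2 : Y × Y → G := fun p => p.1 * t * p.2
  let f3 : B × Y → G := fun p => t * (p.1.1 * y) * t * p.2
  let f4 : B × Y → G := fun p => y * (t * (p.1.1 * y) * t * p.2)
  have n3 : ∀ p, f3 p ∉ N := by
    rintro ⟨⟨⟨w, hw⟩, hb⟩, ⟨u, hu⟩⟩ hc
    have hc : t * (w * y) * t * u ∈ N := hc
    have hc2 : t * (w * y) * t ∈ N := (Subgroup.mul_mem_cancel_right _ (hYN hu)).mp hc
    have e : t * (w * y) * t = (t * w * t) * (t * y * t) := by
      calc t * (w * y) * t = t * w * 1 * y * t := by group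
        _ = t * w * (t * t) * y * t := by rw [h.tt]
        _ = _ := by group
    rw [e] at hc2
    exact h.tyt_not hy ht ((Subgroup.mul_mem_cancel_left _ (h.twt hZ hw)).mp hc2)
  have n4 : ∀ p, f4 p ∉ N := fun p hc => n3 p ((Subgroup.mul_mem_cancel_left _ hy).mp hc)
  have m3 : ∀ p, f3 p ∉ YtY y t := by
    rintro ⟨⟨⟨w, hw⟩, hb⟩, ⟨u, hu⟩⟩ ⟨a, ha, b, hb', e⟩
    have e : t * (w * y) * t * u = a * t * b := e
    apply hb
    refine ⟨a, ha, b * u⁻¹, mul_mem hb' (inv_mem hu), ?_⟩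
    rw [← mul_assoc (a * t), ← e]; group
  have m4 : ∀ p, f4 p ∉ YtY y t := by
    rintro p ⟨a, ha, b, hb', e⟩
    apply m3 p
    refine ⟨y⁻¹ * a, mul_mem (inv_mem Ctx.yY) ha, b, hb', ?_⟩
    have e : y * f3 p = a * t * b := e
    rw [eq_comm, ← inv_mul_eq_iff_eq_mul.mpr e.symm.symm]; group
  have i1 : Function.Injective f1 := Subtype.val_injective
  have i2 : Function.Injective f2 := by
    rintro ⟨a, b⟩ ⟨c, d⟩ e
    obtain ⟨u, v⟩ := h.uniq a.2 b.2 c.2 d.2 e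
    exact Prod.ext (Subtype.ext u) (Subtype.ext v)
  have i3 : Function.Injective f3 := by
    rintro ⟨⟨⟨w, hw⟩, hb⟩, ⟨u, hu⟩⟩ ⟨⟨⟨w', hw'⟩, hb'⟩, ⟨u', hu'⟩⟩ e
    have e : t * (w * y) * t * u = t * (w' * y) * t * u' := e
    have e' : w * y * t * u = w' * y * t * u' := by
      have := congrArg (fun z => t * z) e
      simpa only [mul_assoc, h.t2] using this
    obtain ⟨p, q⟩ := h.uniq (mul_mem (sqle hw) Ctx.yY) hu (mul_mem (sqle hw') Ctx.yY) hu' e'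
    have p := mul_right_cancel p
    subst p; subst q; rfl
  have i4 : Function.Injective f4 := fun p q e => i3 (mul_left_cancel e)
  have d34 : ∀ p q, f3 p ≠ f4 q := by
    rintro ⟨⟨⟨w, hw⟩, hb⟩, ⟨u, hu⟩⟩ ⟨⟨⟨w', hw'⟩, hb'⟩, ⟨u', hu'⟩⟩ e
    have e : t * (w * y) * t * u = y * (t * (w' * y) * t * u') := e
    have h1 : t * y⁻¹ * (t * (w * y) * t * u) ∈ N := by
      have c := zcomm (sqle hw) Ctx.yY
      have : t * y⁻¹ * (t * (w * y) * t * u) = y * (t * (w * (y * y)) * t) * u := by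
        calc t * y⁻¹ * (t * (w * y) * t * u) = (t * y⁻¹ * t) * (w * y) * t * u := by group
          _ = y * (t * ((y * w) * y) * t) * u := by rw [h.good_inv h.tyt]; group
          _ = _ := by rw [← c]; group
      rw [this]
      exact mul_mem (mul_mem hy (h.twt hZ (mul_mem hw (Subgroup.mem_zpowers _)))) (hYN hu)
    have h2 : t * y⁻¹ * (y * (t * (w' * y) * t * u')) = w' * y * t * u' := by
      calc t * y⁻¹ * (y * (t * (w' * y) * t * u')) = (t * t) * (w' * y * t * u') := by group
        _ = _ := by rw [h.tt, one_mul]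
    rw [e, h2] at h1
    have h3 := (Subgroup.mul_mem_cancel_right _ (hYN hu')).mp h1
    exact ht ((Subgroup.mul_mem_cancel_left _ (mul_mem (hYN (sqle hw')) hy)).mp h3)
  have d12 : ∀ n p, f1 n ≠ f2 p := by
    rintro ⟨n, hn⟩ ⟨⟨a, ha⟩, ⟨b, hb⟩⟩ e
    have e : n = a * t * b := e
    rw [e] at hn
    have h3 := (Subgroup.mul_mem_cancel_right _ (hYN hb)).mp hn
    exact ht ((Subgroup.mul_mem_cancel_left _ (hYN ha)).mp h3)
  have inj : Function.Injective (Sum.elim (Sum.elim f1 f2) (Sum.elim f3 f4)) := by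
    refine (i1.sumElim i2 d12).sumElim (i3.sumElim i4 d34) ?_
    rintro (n | p) (r | r) e
    · exact n3 r (by rw [← show f1 n = f3 r from e]; exact n.2)
    · exact n4 r (by rw [← show f1 n = f4 r from e]; exact n.2)
    · exact m3 r (by rw [← show f2 p = f3 r from e]; exact ⟨_, p.1.2, _, p.2.2, rfl⟩)
    · exact m4 r (by rw [← show f2 p = f4 r from e]; exact ⟨_, p.1.2, _, p.2.2, rfl⟩)
  have := Nat.card_le_card_of_injective _ inj
  rw [Nat.card_sum, Nat.card_sum, Nat.card_sum, Nat.card_prod, Nat.card_prod,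
    Nat.card_zpowers] at this
  show Nat.card N + orderOf y ^ 2 + 2 * (Nat.card B * orderOf y) ≤ _
  rw [pow_two, two_mul]
  exact this

theorem Ctx.y8 [Finite G] (h : Ctx y t φ) {N : Subgroup G} (hy : y ∈ N) (ht : t ∉ N)
    (hZ : t * (y * y) * t ∈ N) : Commute (y ^ 8) (t * (y * y) * t) := by
  classical
  set Z := t * (y * y) * t with hZdef
  let S := Subgroup.zpowers (y * y)
  let B := {w : S // t * (w * y) * t ∉ YtY y t}
  have hcount : Nat.card N + orderOf y ^ 2 + 2 * (Nat.card B * orderOf y) ≤ Nat.card G :=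
    h.count hy ht hZ
  have hN3 : Nat.card G ≤ 3 * Nat.card N := by
    let f : N ⊕ (N ⊕ N) → G :=
      Sum.elim (fun n => n) (Sum.elim (fun n => t * n) (fun n => y * (t * n)))
    have hf : Function.Surjective f := by
      intro g
      rcases h.tri N hy hZ g with hg | hg | hg
      · exact ⟨Sum.inl ⟨g, hg⟩, rfl⟩
      · exact ⟨Sum.inr (Sum.inl ⟨_, hg⟩), h.t2 g⟩
      · refine ⟨Sum.inr (Sum.inr ⟨_, hg⟩), ?_⟩
        show y * (t * (t * y⁻¹ * g)) = g
        rw [mul_assoc t, h.t2]; group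
    have := Nat.card_le_card_of_surjective _ hf
    rw [Nat.card_sum, Nat.card_sum] at this
    omega
  have hq2 : orderOf y ≤ 2 * Nat.card S := by
    let f : S ⊕ S → Subgroup.zpowers y :=
      Sum.elim (fun n => ⟨n, sqle n.2⟩) (fun n => ⟨n * y, mul_mem (sqle n.2) Ctx.yY⟩)
    have hf : Function.Surjective f := by
      rintro ⟨g, k, rfl⟩
      rcases Int.even_or_odd' k with ⟨c, rfl | rfl⟩
      · refine ⟨Sum.inl ⟨(y * y) ^ c, Subgroup.zpow_mem _ (Subgroup.mem_zpowers _) _⟩, ?_⟩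
        apply Subtype.ext
        show (y * y) ^ c = y ^ (2 * c)
        rw [zpow_mul, zpow_two]
      · refine ⟨Sum.inr ⟨(y * y) ^ c, Subgroup.zpow_mem _ (Subgroup.mem_zpowers _) _⟩, ?_⟩
        apply Subtype.ext
        show (y * y) ^ c * y = y ^ (2 * c + 1)
        rw [zpow_add, zpow_mul, zpow_two, zpow_one]
    have := Nat.card_le_card_of_surjective _ hf
    rw [Nat.card_sum, Nat.card_zpowers y] at this
    omega
  have hK : Nat.card S ≤ Nat.card (KK y Z) + 2 * Nat.card B := by
    let s : S := ⟨y * y, Subgroup.mem_zpowers _⟩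
    let f : KK y Z ⊕ (B ⊕ B) → S :=
      Sum.elim (fun n => n) (Sum.elim (fun n => n.1) (fun n => n.1 * s))
    have hf : Function.Surjective f := by
      intro w
      by_cases h1 : t * ((w : G) * y) * t ∈ YtY y t
      · by_cases h2 : t * (((w * s⁻¹ : S) : G) * y) * t ∈ YtY y t
        · have hw : (w : G) ∈ Subgroup.zpowers y := sqle w.2
          have e : ((w * s⁻¹ : S) : G) * y = w * y⁻¹ := by
            show (w : G) * (y * y)⁻¹ * y = w * y⁻¹
            group
          rw [e] at h2
          refine ⟨Sum.inl ⟨w, ?_⟩, rfl⟩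
          exact h.comm_sq hw (h.good (mul_mem hw Ctx.yY) h1)
            (h.good (mul_mem hw (inv_mem Ctx.yY)) h2)
        · exact ⟨Sum.inr (Sum.inr ⟨w * s⁻¹, h2⟩), by
            show w * s⁻¹ * s = w
            group⟩
      · exact ⟨Sum.inr (Sum.inl ⟨w, h1⟩), rfl⟩
    have := Nat.card_le_card_of_surjective _ hf
    rw [Nat.card_sum, Nat.card_sum] at this
    omega
  have hd1 := h.d1
  have hqpos : 0 < orderOf y := orderOf_pos y
  have hB : 6 * Nat.card B < orderOf y := by
    have : 6 * Nat.card B * orderOf y < orderOf y * orderOf y := by nlinarith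
    exact lt_of_mul_lt_mul_right this (Nat.zero_le _)
  have hlt : Nat.card S < 3 * Nat.card (KK y Z) := by omega
  have hidx := Subgroup.card_mul_index (KK y Z)
  have hidx3 : (KK y Z).index < 3 := by
    by_contra hge
    push Not at hge
    have : Nat.card (KK y Z) * 3 ≤ Nat.card (KK y Z) * (KK y Z).index :=
      Nat.mul_le_mul_left _ hge
    have e : Nat.card S = Nat.card (Subgroup.zpowers (y * y)) := rfl
    omega
  have hidx0 : (KK y Z).index ≠ 0 := Subgroup.index_ne_zero_of_finite
  have hnorm : (KK y Z).Normal := by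
    refine ⟨fun n hn g => ?_⟩
    have : g * n * g⁻¹ = n := by
      apply Subtype.ext
      show (g : G) * n * (g : G)⁻¹ = n
      rw [zcomm g.2 n.2]; group
    rw [this]; exact hn
  let s : S := ⟨y * y, Subgroup.mem_zpowers _⟩
  have hs := Subgroup.pow_index_mem (KK y Z) s
  have hs2 : s ^ 2 ∈ KK y Z := by
    have : (KK y Z).index = 1 ∨ (KK y Z).index = 2 := by omega
    rcases this with e | e
    · rw [e, pow_one] at hs; exact Subgroup.pow_mem _ hs 2
    · rwa [e] at hs
  have hs3 : ((s ^ 2 : S) : G) * (s ^ 2 : S) * Z = Z * ((s ^ 2 : S) * (s ^ 2 : S)) := hs2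
  have e : ((s ^ 2 : S) : G) * (s ^ 2 : S) = y ^ 8 := by
    show (y * y) ^ 2 * (y * y) ^ 2 = y ^ 8
    simp only [pow_succ, pow_zero, one_mul, mul_assoc]
  rw [e] at hs3
  exact hs3

theorem Ctx.main [Finite G] (h : Ctx y t φ) : ∃ N : Subgroup G, y ∈ N ∧ t ∉ N ∧
    t * (y * y) * t ∈ N ∧ ∀ g, g ∈ N ∨ g ∈ YtY y t := by
  obtain ⟨r, hr, hrw, hZ⟩ := (h.cover (t * (y * y) * t)).resolve_left h.ZU
  have hy : y ∈ NN y r := mem_NN_y r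
  have ht := h.t_not_NN hrw
  refine ⟨NN y r, hy, ht, hZ, ?_⟩
  generalize NN y r = N at hy ht hZ
  clear hr hrw
  have hYN : Subgroup.zpowers y ≤ N := Subgroup.zpowers_le.mpr hy
  have hN : ∀ D : Subgroup G, y ∈ D → t * (y * y) * t ∈ D → N ≤ D := by
    intro D hyD hZD g hg
    rcases h.tri (D ⊓ N) ⟨hyD, hy⟩ ⟨hZD, hZ⟩ g with h1 | h1 | h1
    · exact h1.1
    · exact absurd ((Subgroup.mul_mem_cancel_right _ hg).mp h1.2) ht
    · exact absurd ((Subgroup.mul_mem_cancel_right _ (inv_mem hy)).mp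
        ((Subgroup.mul_mem_cancel_right _ hg).mp h1.2)) ht
  have hc8 : ∀ n ∈ N, n * y ^ 8 = y ^ 8 * n := by
    intro n hn
    have := hN (Subgroup.centralizer {y ^ 8})
      (Subgroup.mem_centralizer_singleton_iff.mpr (by group))
      (Subgroup.mem_centralizer_singleton_iff.mpr (h.y8 hy ht hZ).symm) hn
    exact Subgroup.mem_centralizer_singleton_iff.mp this
  -- any prime with `N_s` not inside `N` is 2
  have hs2 : ∀ s : ℕ, s.Prime → (∃ w ∈ Tor y s, w ≠ 1) → ¬ NN y s ≤ N → s = 2 := by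
    intro s hs hw hle
    by_contra hne
    have hNs : N ≤ NN y s := by
      intro n hn
      apply Subgroup.mem_normalizer_fintype
      rintro w ⟨⟨j, rfl⟩, hws⟩
      have hws : (y ^ j) ^ s = 1 := hws
      have hcop : Nat.Coprime s 8 := by
        have : Nat.Coprime s 2 := (Nat.coprime_primes hs Nat.prime_two).mpr hne
        exact Nat.Coprime.pow_right 3 this
      have hcm : Commute n (y ^ j) := by
        have h8 : Commute n ((y ^ j) ^ 8) := by
          have : (y ^ j) ^ 8 = (y ^ 8) ^ j := by
            rw [← zpow_natCast, ← zpow_natCast, ← zpow_mul, ← zpow_mul, mul_comm]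
          rw [this]; exact Commute.zpow_right (hc8 n hn) j
        have hg := Nat.gcd_eq_gcd_ab s 8
        rw [hcop.gcd_eq_one] at hg
        have e : y ^ j = ((y ^ j) ^ 8) ^ (Nat.gcdB s 8) := by
          have e1 : (y ^ j) ^ ((s : ℤ) * Nat.gcdA s 8 + (8 : ℕ) * Nat.gcdB s 8) = (y ^ j) ^ (1:ℤ) := by
            rw [← hg]; rfl
          rw [zpow_add, zpow_mul, zpow_mul, zpow_natCast, zpow_natCast, hws, one_zpow, one_mul,
            zpow_one] at e1
          exact e1.symm
        rw [e]; exact h8.zpow_right _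
      have e : n * y ^ j * n⁻¹ = y ^ j := by rw [hcm.eq]; group
      show n * y ^ j * n⁻¹ ∈ Tor y s
      rw [e]; exact ⟨⟨j, rfl⟩, hws⟩
    apply hle
    intro g hg
    have ht' := h.t_not_NN hw
    rcases h.tri N hy hZ g with h1 | h1 | h1
    · exact h1
    · exact absurd ((Subgroup.mul_mem_cancel_right _ hg).mp (hNs h1)) ht'
    · exact absurd ((Subgroup.mul_mem_cancel_right _ (inv_mem (hNs hy))).mp
        ((Subgroup.mul_mem_cancel_right _ hg).mp (hNs h1))) ht'
  intro g0
  by_contra hcon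
  push Not at hcon
  obtain ⟨hg0N, hg0⟩ := hcon
  obtain ⟨s, hs, hsw, hg0s⟩ := (h.cover g0).resolve_left hg0
  obtain rfl := hs2 s hs hsw (fun hle => hg0N (hle hg0s))
  have htH := h.t_not_NN hsw
  have hyH : y ∈ NN y 2 := mem_NN_y 2
  have hphi : ∀ g ∈ NN y 2, φ g ∈ NN y 2 := fun g hg => h.phi_NN hg
  have hcov : ∀ g, g ∈ YtY y t ∨ g ∈ N ∨ g ∈ NN y 2 := by
    intro g
    rcases h.cover g with h1 | ⟨s, hs, hw, hg⟩
    · exact Or.inl h1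
    · by_cases hle : NN y s ≤ N
      · exact Or.inr (Or.inl (hle hg))
      · obtain rfl := hs2 s hs hw hle
        exact Or.inr (Or.inr hg)
  have hnorm : ∀ g ∈ NN y 2, ∀ w, w ∈ Tor y 2 ↔ g * w * g⁻¹ ∈ Tor y 2 :=
    fun g hg => Subgroup.mem_set_normalizer_iff.mp hg
  have hmk : ∀ g, (∀ w ∈ Tor y 2, g * w * g⁻¹ ∈ Tor y 2) → g ∈ NN y 2 :=
    fun g hg => Subgroup.mem_normalizer_fintype hg
  generalize NN y 2 = H at *
  have hYH : Subgroup.zpowers y ≤ H := Subgroup.zpowers_le.mpr hyH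
  have hZH : t * (y * y) * t ∉ H := fun hc => hg0N (by
    have hNH := hN H hyH hc
    exfalso
    rcases h.tri N hy hZ g0 with h1 | h1 | h1
    · exact hg0N h1
    · exact htH ((Subgroup.mul_mem_cancel_right _ hg0s).mp (hNH h1))
    · exact htH ((Subgroup.mul_mem_cancel_right _ (inv_mem hyH)).mp
        ((Subgroup.mul_mem_cancel_right _ hg0s).mp (hNH h1))))
  -- `Z` lies in `Y t H`
  obtain ⟨a, ha, k, hk, eZ⟩ : ∃ a ∈ Subgroup.zpowers y, ∃ k ∈ H,
      t * (y * y) * t = a * t * k := by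
    rcases hcov (t * (y * y) * t * g0) with ⟨a, ha, b, hb, e⟩ | h1 | h1
    · refine ⟨a, ha, b * g0⁻¹, mul_mem (hYH hb) (inv_mem hg0s), ?_⟩
      rw [← mul_assoc (a * t), ← e]; group
    · exact absurd ((Subgroup.mul_mem_cancel_left _ hZ).mp h1) hg0N
    · exact absurd ((Subgroup.mul_mem_cancel_right _ hg0s).mp h1) hZH
  have eZ' : t * (y⁻¹ * y⁻¹) * t = a⁻¹ * t * φ k := by
    have := congrArg φ eZ
    simpa [map_mul, h.ft, h.fy, h.fa ha] using this
  have odd_mem : t * (y * a * a) * t ∈ H := by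
    have e := h.ZZ
    rw [eZ, eZ'] at e
    have e2 : t * (y * a * a) * t = φ k * y⁻¹ * k⁻¹ := by
      have e3 : a * t = y⁻¹ * (a⁻¹ * t * φ k) * y⁻¹ * k⁻¹ := by rw [← e]; group
      have c := zcomm Ctx.yY ha
      calc t * (y * a * a) * t = t * (y * a) * (a * t) := by group
        _ = t * (a * y) * (y⁻¹ * (a⁻¹ * t * φ k) * y⁻¹ * k⁻¹) := by rw [c, ← e3]
        _ = (t * t) * φ k * y⁻¹ * k⁻¹ := by group
        _ = _ := by rw [h.tt, one_mul]
    rw [e2]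
    exact mul_mem (mul_mem (hphi k hk) (inv_mem hyH)) (inv_mem hk)
  -- `t y^8 t ∈ H`
  obtain ⟨k1, hk1, n1, hn1, ek⟩ : ∃ k1 ∈ H, ∃ n1 ∈ N, k1 = t * n1 := by
    rcases h.tri N hy hZ g0 with h1 | h1 | h1
    · exact absurd h1 hg0N
    · exact ⟨g0, hg0s, t * g0, h1, (h.t2 g0).symm⟩
    · exact ⟨y⁻¹ * g0, mul_mem (inv_mem hyH) hg0s, t * y⁻¹ * g0, h1, by
        rw [mul_assoc t, h.t2]⟩
  have htw : ∀ w ∈ Tor y 2, t * w * t ∈ N := by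
    intro w hw
    have h1 := ((hnorm k1⁻¹ (inv_mem hk1)) w).mp hw
    have h2 := hYN h1.1
    rw [ek, inv_inv, mul_inv_rev, h.tinv] at h2
    have e : t * w * t = n1 * (n1⁻¹ * t * w * (t * n1)) * n1⁻¹ := by group
    rw [e]; exact mul_mem (mul_mem hn1 h2) (inv_mem hn1)
  have h8 : t * y ^ 8 * t ∈ H := by
    apply hmk
    intro w hw
    have c := hc8 _ (htw w hw)
    have e : t * y ^ 8 * t * w * (t * y ^ 8 * t)⁻¹ = w := by
      rw [mul_inv_rev, mul_inv_rev, h.tinv]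
      calc t * y ^ 8 * t * w * (t * ((y ^ 8)⁻¹ * t))
          = t * (y ^ 8 * (t * w * t)) * ((y ^ 8)⁻¹ * t) := by group
        _ = (t * t) * w * (t * t) := by rw [← c]; group
        _ = w := by rw [h.tt, one_mul, mul_one]
    rw [e]; exact hw
  -- Bezout
  obtain ⟨i, rfl⟩ := ha
  have conjz : ∀ (b : G) (j : ℤ), t * b * t ∈ H → t * b ^ j * t ∈ H := by
    intro b j hb
    have := @conj_zpow G _ j t b
    rw [h.tinv] at this
    rw [← this]; exact Subgroup.zpow_mem _ hb _
  have e1 : y * (fun x : ℤ => y ^ x) i * (fun x : ℤ => y ^ x) i = y ^ (2 * i + 1) := by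
    show y * y ^ i * y ^ i = _
    group
  rw [e1] at odd_mem
  obtain ⟨l, hl⟩ : ∃ l : ℤ, (2 * i + 1) * (2 * i + 1) = 8 * l + 1 := by
    rcases Int.even_or_odd' i with ⟨c, rfl | rfl⟩
    · exact ⟨2 * c * c + c, by ring⟩
    · exact ⟨2 * c * c + 3 * c + 1, by ring⟩
  have A1 := conjz _ (2 * i + 1) odd_mem
  have A2 := conjz _ (-l) h8
  have A3 := mul_mem A2 A1
  have e3 : t * (y ^ 8) ^ (-l) * t * (t * (y ^ (2 * i + 1)) ^ (2 * i + 1) * t) = t * y * t := by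
    rw [← zpow_mul, hl, ← zpow_natCast y 8, ← zpow_mul]
    calc t * y ^ (((8 : ℕ) : ℤ) * -l) * t * (t * y ^ (8 * l + 1) * t)
        = t * y ^ (((8 : ℕ) : ℤ) * -l) * (t * t) * (y ^ (8 * l + 1) * t) := by group
      _ = t * (y ^ (((8 : ℕ) : ℤ) * -l) * y ^ (8 * l + 1)) * t := by rw [h.tt]; group
      _ = t * y * t := by
        rw [← zpow_add]
        have : ((8 : ℕ) : ℤ) * -l + (8 * l + 1) = 1 := by push_cast; ring
        rw [this, zpow_one]
  rw [e3] at A3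
  exact h.tyt_not hyH htH A3

end

theorem adj_iff {x y : G} (ht : x * y ∉ Subgroup.zpowers y) (htt : (x * y) * (x * y) = 1) (g h : G) :
    Adj x y (QuotientGroup.mk g) (QuotientGroup.mk h) ↔ g⁻¹ * h ∈ YtY y (x * y) := by
  constructor
  · rintro ⟨-, c, hc⟩
    rw [Set.pair_eq_pair_iff] at hc
    rcases hc with ⟨h1, h2⟩ | ⟨h1, h2⟩
    · rw [QuotientGroup.eq] at h1 h2
      refine ⟨_, h1, _, inv_mem h2, ?_⟩
      group
    · rw [QuotientGroup.eq] at h1 h2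
      refine ⟨_, h1, _, inv_mem h2, ?_⟩
      calc g⁻¹ * h = g⁻¹ * c * 1 * (c⁻¹ * h) := by group
        _ = g⁻¹ * c * ((x * y) * (x * y)) * (c⁻¹ * h) := by rw [htt]
        _ = _ := by group
  · rintro ⟨a, ha, b, hb, e⟩
    have hh : h = g * a * (x * y) * b := by
      rw [mul_assoc, mul_assoc, ← mul_assoc a, ← e]; group
    refine ⟨?_, g * a, ?_⟩
    · intro hc
      rw [QuotientGroup.eq, e] at hc
      exact ht ((Subgroup.mul_mem_cancel_left _ ha).mp ((Subgroup.mul_mem_cancel_right _ hb).mp hc))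
    · rw [Set.pair_eq_pair_iff]
      left
      constructor
      · rw [QuotientGroup.eq]
        rwa [show g⁻¹ * (g * a) = a by group]
      · rw [QuotientGroup.eq, hh]
        rw [show (g * a * (x * y) * b)⁻¹ * (g * a * x * y) = b⁻¹ by group]
        exact inv_mem hb

theorem aligned_mem {x y : G} (ht : x * y ∉ Subgroup.zpowers y) (htt : (x * y) * (x * y) = 1)
    {N : Subgroup G} (hy : y ∈ N) (hZ : (x * y) * (y * y) * (x * y) ∈ N) (g h : G)
    (hal : Aligned x y (QuotientGroup.mk g) (QuotientGroup.mk h)) : g⁻¹ * h ∈ N := by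
  have hYN : Subgroup.zpowers y ≤ N := Subgroup.zpowers_le.mpr hy
  have key : ∀ v : Vertex y, Aligned x y (QuotientGroup.mk g) v →
      ∀ h : G, v = QuotientGroup.mk h → g⁻¹ * h ∈ N := by
    intro v hv
    induction hv with
    | refl =>
      intro h hh
      rw [QuotientGroup.eq] at hh
      exact hYN hh
    | tail h1 h2 ih =>
      rename_i b c
      intro h hh
      obtain ⟨k, rfl⟩ := QuotientGroup.mk_surjective b
      have hk := ih k rfl
      obtain ⟨w, hw, e⟩ := h2
      obtain ⟨l, rfl⟩ := QuotientGroup.mk_surjective w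
      rw [adj_iff ht htt] at hw
      obtain ⟨a, ha, b, hb, e2⟩ := hw
      have e3 : c = QuotientGroup.mk ((l * y * l⁻¹) ^ 2 * k) := e
      rw [hh, QuotientGroup.eq] at e3
      have hl : l = k * (a * (x * y) * b) := by rw [← e2]; group
      have hb2 : b * (y * y) * b⁻¹ = y * y := by
        rw [zcomm hb (mul_mem (Subgroup.mem_zpowers y) (Subgroup.mem_zpowers y))]; group
      have e4 : (l * y * l⁻¹) ^ 2 * k = k * (a * ((x * y) * (y * y) * (x * y)) * a⁻¹) := by
        have hti : (x * y)⁻¹ = x * y := inv_eq_of_mul_eq_one_left htt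
        calc (l * y * l⁻¹) ^ 2 * k = l * (y * y) * l⁻¹ * k := by rw [pow_two]; group
          _ = k * (a * ((x * y) * (b * (y * y) * b⁻¹) * (x * y)⁻¹) * a⁻¹) := by rw [hl]; group
          _ = _ := by rw [hb2, hti]
      rw [e4] at e3
      have h5 : a * ((x * y) * (y * y) * (x * y)) * a⁻¹ ∈ N :=
        mul_mem (mul_mem (hYN ha) hZ) (inv_mem (hYN ha))
      set d := a * ((x * y) * (y * y) * (x * y)) * a⁻¹
      have e6 : g⁻¹ * h = (g⁻¹ * k) * d * (h⁻¹ * (k * d))⁻¹ := by group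
      rw [e6]
      exact mul_mem (mul_mem hk h5) (inv_mem (hYN e3))
  exact key _ hal h rfl

theorem mkCtx [Finite G] (x y : G)
    (hgen : Subgroup.closure {x, y} = ⊤) (hxy : (x * y) ^ 2 = 1)
    (hrefl : IsReflexive x y) (hsimple : IsSimple x y)
    (hden₁ : 2 * orderOf y ^ 2 > Nat.card G)
    (hden₂ : 3 * orderOf y ^ 2 ≤ 2 * Nat.card G)
    (hp : orderOf x = 3) : ∃ φ : G ≃* G, Ctx y (x * y) φ := by
  obtain ⟨σ, hx, hy⟩ := hrefl
  have htt : (x * y) * (x * y) = 1 := by rw [← pow_two, hxy]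
  have hti : (x * y)⁻¹ = x * y := inv_eq_of_mul_eq_one_left htt
  have hx3 : x * x * x = 1 := by
    have h3 : x ^ 3 = 1 := by rw [← hp, pow_orderOf_eq_one]
    rw [pow_succ, pow_two] at h3; exact h3
  have htY : x * y ∉ Subgroup.zpowers y := by
    intro hc
    apply hsimple.1 1
    rw [QuotientGroup.eq]
    simpa using hc
  refine ⟨σ.trans (MulAut.conj y⁻¹), htt, ?_, ?_, ?_, ?_, ?_, htY, hden₁, hden₂⟩
  · rw [eq_top_iff, ← hgen, Subgroup.closure_le]
    have h1 : x * y ∈ Subgroup.closure {x * y, y} := Subgroup.subset_closure (by simp)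
    have h2 : y ∈ Subgroup.closure {x * y, y} := Subgroup.subset_closure (by simp)
    rintro z (rfl | hz)
    · exact (Subgroup.mul_mem_cancel_right _ h2).mp h1
    · rw [Set.mem_singleton_iff] at hz; subst hz; exact h2
  · simp only [MulEquiv.trans_apply, MulAut.conj_apply, map_mul, hx, hy]
    rw [← hti]; group
  · simp only [MulEquiv.trans_apply, MulAut.conj_apply, hy]
    group
  · have e : x * y * x = y⁻¹ := by
      calc x * y * x = (x * y * (x * y)) * y⁻¹ := by group
        _ = y⁻¹ := by rw [htt, one_mul]
    have e' : x⁻¹ = x * x := inv_eq_of_mul_eq_one_left hx3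
    have e2 : y * x * y = x⁻¹ := by
      calc y * x * y = x⁻¹ * (x * y * (x * y)) := by group
        _ = x⁻¹ := by rw [htt, mul_one]
    calc x * y * y * (x * y) = x * y * (y * x * y) := by group
      _ = (x * y * x) * (x⁻¹ * x⁻¹) := by rw [e2]; group
      _ = y⁻¹ * x := by rw [e, e']; rw [show x * x * (x * x) = x * x * x * x by group, hx3, one_mul]
      _ = y⁻¹ * (x * y) * y⁻¹ := by group
  · intro a ha hb
    have h2 := hsimple.2 1 (x * y * a * (x * y)) (by
      rw [Set.pair_eq_pair_iff]
      left
      constructor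
      · rw [QuotientGroup.eq]; simpa using hb
      · rw [QuotientGroup.eq]
        have : (1 * x * y)⁻¹ * (x * y * a * (x * y) * x * y) = a * ((x * y) * (x * y)) := by group
        rw [this, htt, mul_one]; exact ha)
    rw [QuotientGroup.eq, inv_one, one_mul] at h2
    obtain ⟨k, hk⟩ := h2
    have hk : (x * y) ^ k = x * y * a * (x * y) := hk
    rcases Int.even_or_odd' k with ⟨c, rfl | rfl⟩
    · rw [zpow_mul, zpow_two, htt, one_zpow] at hk
      have : a = (x * y)⁻¹ * (x * y * a * (x * y)) * (x * y)⁻¹ := by group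
      rw [this, ← hk, hti, mul_one, htt]
    · rw [zpow_add, zpow_mul, zpow_two, htt, one_zpow, one_mul, zpow_one] at hk
      rw [← hk] at hb
      exact absurd hb htY

/-- If `V = V_v ∪ V_w ∪ V_u` then the set of neighbours of `v` is exactly `V_w ∪ V_u`. -/
theorem neighbours_eq_other_classes
    (G : Type*) [Group G] [Finite G] (x y : G)
    (hgen : Subgroup.closure {x, y} = ⊤) (hxy : (x * y) ^ 2 = 1)
    (hrefl : IsReflexive x y) (hsimple : IsSimple x y)
    (hden₁ : 2 * orderOf y ^ 2 > Nat.card G)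
    (hden₂ : 3 * orderOf y ^ 2 ≤ 2 * Nat.card G)
    (hp : orderOf x = 3) (hnt : ¬ IsTet G x y)
    (v w u : Vertex y)
    (hcover : ∀ z : Vertex y, Aligned x y v z ∨ Aligned x y w z ∨ Aligned x y u z) :
    ∀ z : Vertex y, Adj x y v z ↔ (Aligned x y w z ∨ Aligned x y u z) := by
  obtain ⟨φ, h⟩ := mkCtx x y hgen hxy hrefl hsimple hden₁ hden₂ hp
  obtain ⟨N, hyN, htN, hZ, hN⟩ := h.main
  have htt := h.tt
  have htY := h.tY
  have hYN : Subgroup.zpowers y ≤ N := Subgroup.zpowers_le.mpr hyN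
  obtain ⟨gv, rfl⟩ := QuotientGroup.mk_surjective v
  obtain ⟨gw, rfl⟩ := QuotientGroup.mk_surjective w
  obtain ⟨gu, rfl⟩ := QuotientGroup.mk_surjective u
  have hal := aligned_mem htY htt hyN hZ
  have hadj : ∀ g k : G, Adj x y (QuotientGroup.mk g) (QuotientGroup.mk k) ↔ g⁻¹ * k ∉ N := by
    intro g k
    rw [adj_iff htY htt]
    constructor
    · rintro ⟨a, ha, b, hb, e⟩ hc
      rw [e] at hc
      exact htN ((Subgroup.mul_mem_cancel_left _ (hYN ha)).mp
        ((Subgroup.mul_mem_cancel_right _ (hYN hb)).mp hc))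
    · intro hc
      exact (hN _).resolve_left hc
  have tr : ∀ a b c : G, a⁻¹ * b ∈ N → a⁻¹ * c ∈ N → b⁻¹ * c ∈ N := by
    intro a b c h1 h2
    rw [show b⁻¹ * c = (a⁻¹ * b)⁻¹ * (a⁻¹ * c) by group]
    exact mul_mem (inv_mem h1) h2
  have aux : ∀ gw gu : G, (∀ z : Vertex y, Aligned x y (QuotientGroup.mk gv) z ∨
      Aligned x y (QuotientGroup.mk gw) z ∨ Aligned x y (QuotientGroup.mk gu) z) →
      gv⁻¹ * gw ∉ N := by
    intro gw gu hcov hvw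
    have step : ∀ k, gv⁻¹ * k ∉ N → gu⁻¹ * k ∈ N := by
      intro k hk
      rcases hcov (QuotientGroup.mk k) with h1 | h1 | h1
      · exact absurd (hal _ _ h1) hk
      · refine absurd (tr gw gv k ?_ (hal _ _ h1)) hk
        rw [show gw⁻¹ * gv = (gv⁻¹ * gw)⁻¹ by group]; exact inv_mem hvw
      · exact hal _ _ h1
    have s1 := step (gv * (x * y)) (by rwa [inv_mul_cancel_left])
    have s2 := step (gv * (y * (x * y))) (by
      rw [inv_mul_cancel_left]
      exact fun hc => htN ((Subgroup.mul_mem_cancel_left _ hyN).mp hc))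
    have s3 := tr _ _ _ s1 s2
    apply h.tyt_not hyN htN
    have e : (gv * (x * y))⁻¹ * (gv * (y * (x * y))) = (x * y)⁻¹ * y * (x * y) := by group
    rw [e, h.tinv] at s3
    exact s3
  have a1 := aux gw gu hcover
  have a2 := aux gu gw (fun z => by
    rcases hcover z with h1 | h1 | h1
    · exact Or.inl h1
    · exact Or.inr (Or.inr h1)
    · exact Or.inr (Or.inl h1))
  intro z
  obtain ⟨gz, rfl⟩ := QuotientGroup.mk_surjective z
  rw [hadj]
  have sy : ∀ a b : G, a⁻¹ * b ∈ N → b⁻¹ * a ∈ N := by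
    intro a b h1
    rw [show b⁻¹ * a = (a⁻¹ * b)⁻¹ by group]; exact inv_mem h1
  constructor
  · intro hz
    rcases hcover (QuotientGroup.mk gz) with h1 | h1
    · exact absurd (hal _ _ h1) hz
    · exact h1
  · rintro (h1 | h1) hc
    · exact a1 (tr gz gv gw (sy _ _ hc) (sy _ _ (hal _ _ h1)))
    · exact a2 (tr gz gv gu (sy _ _ hc) (sy _ _ (hal _ _ h1)))

end RegularMap
end

section
/- Let (G,x,y) encode a reflexive regular map that is simple, has p = 3, is not the tetrahedral map tet, and satisfies 3q² = 2|G| (density exactly 2/3). Then the even period satisfies T = 2. -/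
namespace RegularMap

variable {G : Type*} [Group G]

theorem conj_zpow_aux {H : Type*} [Group H] (b α : H) (e : ℤ) (h : b * α * b⁻¹ = α ^ e) (k : ℤ) :
    b * α ^ k * b⁻¹ = (α ^ k) ^ e := by
  rw [← conj_zpow, h, ← zpow_mul, ← zpow_mul, mul_comm]

/-- elements killed by `p` in a finite cyclic group lie in the group generated by one of order `p` -/
theorem mem_of_pow_aux {H : Type*} [Group H] [Finite H] (a α z : H) (p : ℕ) (hp : p.Prime)
    (hα : α ∈ Subgroup.zpowers a) (ho : orderOf α = p)
    (hz : z ∈ Subgroup.zpowers a) (hzp : z ^ p = 1) : z ∈ Subgroup.zpowers α := by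
  have hn : 0 < orderOf a := orderOf_pos a
  have hpn : p ∣ orderOf a := by
    obtain ⟨k, rfl⟩ := hα
    simp only at ho
    rw [← ho]
    exact orderOf_dvd_of_mem_zpowers ⟨k, rfl⟩
  obtain ⟨e, he⟩ := hpn
  have he0 : e ≠ 0 := by rintro rfl; rw [mul_zero] at he; omega
  have key : ∀ w ∈ Subgroup.zpowers a, w ^ p = 1 → w ∈ Subgroup.zpowers (a ^ e) := by
    rintro _ ⟨k, rfl⟩ hw
    simp only at hw
    rw [← zpow_natCast, ← zpow_mul] at hw
    have := orderOf_dvd_iff_zpow_eq_one.mpr hw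
    rw [he] at this
    push_cast at this
    rw [mul_comm] at this
    have hp0 : (p : ℤ) ≠ 0 := by exact_mod_cast hp.ne_zero
    obtain ⟨l, hl⟩ := Int.dvd_of_mul_dvd_mul_right hp0 this
    exact ⟨l, by simp only [hl]; rw [← zpow_natCast, ← zpow_mul]⟩
  have hoe : orderOf (a ^ e) = p := by
    rw [orderOf_pow_of_dvd he0 ⟨p, by rw [he, mul_comm]⟩, he]
    exact Nat.mul_div_cancel _ (Nat.pos_of_ne_zero he0)
  have h1 : Subgroup.zpowers α ≤ Subgroup.zpowers (a ^ e) := by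
    rw [Subgroup.zpowers_le]
    exact key α hα (by rw [← ho]; exact pow_orderOf_eq_one α)
  have h2 : Subgroup.zpowers α = Subgroup.zpowers (a ^ e) := by
    apply Subgroup.eq_of_le_of_card_ge h1
    rw [Nat.card_zpowers, Nat.card_zpowers, ho, hoe]
  rw [h2]; exact key z hz hzp

theorem core_aux {H : Type*} [Group H] [Finite H] (a b : H) (hab : orderOf b = orderOf a)
    (hfac : ∀ h : H, ∃ i j : ℤ, h = a ^ i * b ^ j)
    (hint : ∀ i j : ℤ, a ^ i = b ^ j → a ^ i = 1) (ha : a ≠ 1) :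
    ∃ m : ℕ, a ^ m ≠ 1 ∧ b⁻¹ * a ^ m * b ∈ Subgroup.zpowers a := by
  have hn : 1 < orderOf a := by
    have := orderOf_pos a
    have : orderOf a ≠ 1 := by rwa [Ne, orderOf_eq_one_iff]
    omega
  -- the cosets
  have hcard : Nat.card (H ⧸ Subgroup.zpowers a) ≤ orderOf a := by
    rw [← hab, ← Nat.card_zpowers]
    apply Nat.card_le_card_of_surjective
      (fun t : Subgroup.zpowers b => (QuotientGroup.mk (t : H) : H ⧸ Subgroup.zpowers a))
    intro q
    obtain ⟨h, rfl⟩ := QuotientGroup.mk_surjective q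
    obtain ⟨i, j, hij⟩ := hfac h⁻¹
    refine ⟨⟨b ^ (-j), ⟨-j, rfl⟩⟩, ?_⟩
    simp only
    rw [QuotientGroup.eq]
    refine ⟨-i, ?_⟩
    have : h = b ^ (-j) * a ^ (-i) := by
      rw [← inv_inv h, hij]; group
    simp only
    rw [this]; group
  by_contra hcon
  push Not at hcon
  let f : Option (Fin (orderOf a)) → H ⧸ Subgroup.zpowers a := fun o =>
    match o with
    | none => QuotientGroup.mk 1
    | some i => QuotientGroup.mk (a ^ (i : ℕ) * b)
  have hb : ∀ i : ℕ, ¬ a ^ i * b ∈ Subgroup.zpowers a := by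
    rintro i ⟨k, hk⟩
    simp only at hk
    have h1 : b = a ^ (k - i) := by
      rw [show k - (i : ℤ) = -i + k by ring, zpow_add, hk]; group
    have h2 := hint (k - i) 1 (by rw [← h1, zpow_one])
    rw [← h1] at h2
    rw [h2, orderOf_one] at hab
    omega
  have hinj : Function.Injective f := by
    have hlt : ∀ i j : Fin (orderOf a), (i : ℕ) < j → f (some i) ≠ f (some j) := by
      intro i j hij h
      simp only [f] at h
      rw [QuotientGroup.eq] at h
      refine hcon (j - i) ?_ ?_
      · exact pow_ne_one_of_lt_orderOf (by omega) (by omega)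
      · convert h using 1
        rw [pow_sub _ hij.le]
        group
    intro o o' h
    match o, o' with
    | none, none => rfl
    | none, some i =>
      simp only [f] at h
      rw [QuotientGroup.eq] at h
      exact absurd (by simpa using h) (hb i)
    | some i, none =>
      have h := h.symm
      simp only [f] at h
      rw [QuotientGroup.eq] at h
      exact absurd (by simpa using h) (hb i)
    | some i, some j =>
      rcases lt_trichotomy (i : ℕ) j with hij | hij | hij
      · exact absurd h (hlt i j hij)
      · rw [Fin.ext hij]
      · exact absurd h.symm (hlt j i hij)
  have := Nat.card_le_card_of_injective f hinj
  simp at this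
  omega


theorem conj_inv_aux {H : Type*} [Group H] (u z : H) (e : ℤ) (he : e * e = 1)
    (h : u * z * u⁻¹ = z ^ e) : u⁻¹ * z * u = z ^ e := by
  have h1 := conj_zpow_aux u z e h e
  rw [← zpow_mul, he, zpow_one] at h1
  nth_rw 1 [← h1]; group

theorem conj_even_aux {H : Type*} [Group H] (u z : H) (e : ℤ) (he : e * e = 1)
    (h : u * z * u⁻¹ = z ^ e) (k : ℤ) (hk : Even k) : Commute (u ^ k) z := by
  obtain ⟨l, rfl⟩ := hk
  have h2 : Commute (u * u) z := by
    have h1 := conj_zpow_aux u z e h e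
    rw [← zpow_mul, he, zpow_one, ← h] at h1
    have : u * u * z * (u * u)⁻¹ = z := by
      refine Eq.trans ?_ h1
      group
    exact mul_inv_eq_iff_eq_mul.mp this
  have : u ^ (l + l) = (u * u) ^ l := by
    rw [(Commute.refl u).mul_zpow, zpow_add]
  rw [this]
  exact h2.zpow_left l

theorem conj_gen_aux {H : Type*} [Group H] (u z : H) (e : ℤ) (he : e * e = 1)
    (h : u * z * u⁻¹ = z ^ e) (k : ℤ) : ∃ d : ℤ, u ^ k * z * (u ^ k)⁻¹ = z ^ d := by
  rcases Int.even_or_odd k with hk | hk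
  · refine ⟨1, ?_⟩
    rw [(conj_even_aux u z e he h k hk).eq]; group
  · obtain ⟨l, rfl⟩ := hk
    refine ⟨e, ?_⟩
    have := conj_even_aux u z e he h (2 * l) (even_two_mul l)
    rw [add_comm, zpow_add, zpow_one, ← h, mul_assoc u, this.eq]; group

universe u

theorem key_aux : ∀ (N : ℕ) (H : Type u) [Group H] [Finite H] (a b : H) (θ τ : H →* H),
    Nat.card H ≤ N → θ a = b → θ b = (a * b)⁻¹ → τ a = a⁻¹ → τ b = b⁻¹ →
    (∀ h : H, ∃ i j : ℤ, h = a ^ i * b ^ j) →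
    (∀ i j : ℤ, a ^ i = b ^ j → a ^ i = 1) → a * b = b * a := by
  intro N
  induction N with
  | zero =>
    intro H _ _ a b θ τ hc
    have := Nat.card_pos (α := H)
    omega
  | succ N ih =>
  intro H _ _ a b θ τ hc hθa hθb hτa hτb hfac hint
  by_cases ha : a = 1
  · simp [ha]
  obtain ⟨c, hcdef⟩ : ∃ c, c = (a * b)⁻¹ := ⟨_, rfl⟩
  rw [← hcdef] at hθb
  have hθc : θ c = a := by
    rw [hcdef, map_inv, map_mul, hθa, hθb, hcdef]; group
  have hθ3 : ∀ h, θ (θ (θ h)) = h := by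
    intro h
    obtain ⟨i, j, rfl⟩ := hfac h
    simp only [map_mul, map_zpow, hθa, hθb, hθc]
  have hθinj : Function.Injective θ := fun u v h => by
    rw [← hθ3 u, ← hθ3 v, h]
  have hoab : orderOf b = orderOf a := by
    rw [← hθa]; exact orderOf_injective θ hθinj a
  have hint' : ∀ i j : ℤ, a ^ i = b ^ j → b ^ j = 1 := fun i j h => h ▸ hint i j h
  have hintbc : ∀ i j : ℤ, b ^ i = c ^ j → b ^ i = 1 := by
    intro i j h
    apply hθinj; apply hθinj
    have := congrArg (fun t => θ (θ t)) h
    simp only [map_zpow, hθb, hθc, hθa, map_one] at this ⊢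
    exact hint _ _ this
  have hintac : ∀ i j : ℤ, a ^ i = c ^ j → a ^ i = 1 := by
    intro i j h
    apply hθinj
    have := congrArg θ h
    simp only [map_zpow, hθb, hθc, hθa, map_one] at this ⊢
    exact hint' _ _ this.symm
  -- element of prime order
  obtain ⟨m, hm1, hm2⟩ := core_aux a b hoab hfac hint ha
  have hd1 : orderOf (a ^ m) ≠ 1 := by rwa [Ne, orderOf_eq_one_iff]
  obtain ⟨p, hp, hpd⟩ := Nat.exists_prime_and_dvd hd1
  obtain ⟨k, α, hαk, hαp, hbα⟩ : ∃ (k : ℤ) (α : H), α = a ^ k ∧ orderOf α = p ∧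
      b⁻¹ * α * b ∈ Subgroup.zpowers a := by
    refine ⟨m * (orderOf (a ^ m) / p : ℕ), (a ^ m) ^ (orderOf (a ^ m) / p), ?_, ?_, ?_⟩
    · rw [zpow_mul, zpow_natCast, zpow_natCast]
    · exact orderOf_pow_orderOf_div (orderOf_pos _).ne' hpd
    · have : b⁻¹ * (a ^ m) ^ (orderOf (a ^ m) / p) * b
          = (b⁻¹ * a ^ m * b) ^ (orderOf (a ^ m) / p) := by
        have := conj_pow (a := b⁻¹) (b := a ^ m) (i := orderOf (a ^ m) / p)
        rw [inv_inv] at this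
        exact this.symm
      rw [this]
      exact Subgroup.pow_mem _ hm2 _
  have hα1 : α ≠ 1 := by
    intro h; rw [h, orderOf_one] at hαp; exact hp.one_lt.ne hαp
  have hαpow : α ^ p = 1 := by rw [← hαp]; exact pow_orderOf_eq_one α
  have hbα' : b⁻¹ * α * b ∈ Subgroup.zpowers α := by
    refine mem_of_pow_aux a α _ p hp ⟨k, hαk.symm⟩ hαp hbα ?_
    have := conj_pow (a := b⁻¹) (b := α) (i := p)
    rw [inv_inv] at this
    rw [this, hαpow]; group
  have hτα : τ α = α⁻¹ := by rw [hαk, map_zpow, hτa, inv_zpow]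
  obtain ⟨r, hr⟩ := hbα'
  simp only at hr
  have hr2 : b * α * b⁻¹ = α ^ r := by
    have := congrArg τ hr
    simp only [map_mul, map_zpow, map_inv, hτα, hτb] at this
    rw [← inv_inj, ← inv_zpow, this]; group
  have hαα : α ^ (r * r) = α := by
    rw [zpow_mul, ← conj_zpow_aux b α r hr2 r, hr]; group
  -- the sign
  have hε : ∃ ε : ℤ, (ε = 1 ∨ (ε = -1 ∧ p ≠ 2)) ∧ b * α * b⁻¹ = α ^ ε := by
    have h1 : (p : ℤ) ∣ (r - 1) * (r + 1) := by
      rw [← hαp, orderOf_dvd_iff_zpow_eq_one, show (r - 1) * (r + 1) = r * r - 1 by ring,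
        zpow_sub_one, hαα, mul_inv_cancel]
    have key : ∀ s : ℤ, (p : ℤ) ∣ r - s → b * α * b⁻¹ = α ^ s := by
      intro s h
      rw [hr2]
      rw [← hαp, orderOf_dvd_iff_zpow_eq_one, zpow_sub] at h
      exact mul_inv_eq_one.mp h
    rcases (Nat.prime_iff_prime_int.mp hp).dvd_or_dvd h1 with h | h
    · exact ⟨1, Or.inl rfl, key 1 h⟩
    · by_cases hp2 : p = 2
      · refine ⟨1, Or.inl rfl, key 1 ?_⟩
        rw [hp2] at h ⊢
        push_cast at h ⊢
        omega
      · exact ⟨-1, Or.inr ⟨rfl, hp2⟩, key (-1) (by simpa using h)⟩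
  obtain ⟨ε, hε, hbαε⟩ := hε
  have hεε : ε * ε = 1 := by rcases hε with h | ⟨h, -⟩ <;> rw [h] <;> norm_num
  obtain ⟨β, hβdef⟩ : ∃ β, β = θ α := ⟨_, rfl⟩
  obtain ⟨γ, hγdef⟩ : ∃ γ, γ = θ β := ⟨_, rfl⟩
  have hθγ : θ γ = α := by rw [hγdef, hβdef, hθ3]
  have hβk : β = b ^ k := by rw [hβdef, hαk, map_zpow, hθa]
  have hγk : γ = c ^ k := by rw [hγdef, hβk, map_zpow, hθb]
  have hβp : orderOf β = p := by rw [hβdef, orderOf_injective θ hθinj, hαp]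
  have hβpow : β ^ p = 1 := by rw [← hβp]; exact pow_orderOf_eq_one β
  have hγpow : γ ^ p = 1 := by rw [hγdef, ← map_pow, hβpow, map_one]
  have hβ1 : β ≠ 1 := by
    intro h; rw [h, orderOf_one] at hβp; exact hp.one_lt.ne hβp
  have hγ1 : γ ≠ 1 := by
    intro h; rw [h, map_one] at hθγ; exact hα1 hθγ.symm
  have haα : Commute a α := by rw [hαk]; exact Commute.zpow_self a k |>.symm
  have hbβ : Commute b β := by rw [hβk]; exact Commute.zpow_self b k |>.symm
  have hcγ : Commute c γ := by rw [hγk]; exact Commute.zpow_self c k |>.symm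
  have hcβ : c * β * c⁻¹ = β ^ ε := by
    have := congrArg θ hbαε
    simpa only [map_mul, map_inv, map_zpow, hθb, ← hβdef] using this
  have haγ : a * γ * a⁻¹ = γ ^ ε := by
    have := congrArg θ hcβ
    simpa only [map_mul, map_inv, map_zpow, hθc, ← hγdef] using this
  have haβ : a * β * a⁻¹ = β ^ ε := by
    have h1 := conj_inv_aux c β ε hεε hcβ
    rw [← h1, hcdef]
    have : b * β * b⁻¹ = β := by rw [hbβ.eq]; group
    nth_rw 1 [← this]; group
  have hbγ : b * γ * b⁻¹ = γ ^ ε := by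
    have h1 := conj_inv_aux a γ ε hεε haγ
    rw [← h1]
    have : c⁻¹ * γ * c = γ := by rw [mul_assoc, ← hcγ.eq]; group
    nth_rw 2 [← this]; rw [hcdef]; group
  have hcα : c * α * c⁻¹ = α ^ ε := by
    have h1 := conj_inv_aux b α ε hεε hbαε
    rw [← h1]
    have : a⁻¹ * α * a = α := by rw [mul_assoc, ← haα.eq]; group
    nth_rw 2 [← this]; rw [hcdef]; group
  have hαγ : Commute γ α := by
    obtain ⟨d, hd⟩ := conj_gen_aux c α ε hεε hcα k
    obtain ⟨d', hd'⟩ := conj_gen_aux a γ ε hεε haγ k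
    rw [← hγk] at hd
    rw [← hαk] at hd'
    have h1 : a ^ (k * d - k) = c ^ (k - k * d') := by
      rw [zpow_sub, zpow_mul, ← hαk, ← hd, zpow_sub, zpow_mul, ← hγk, ← hd']; group
    have h2 := hintac _ _ h1
    rw [zpow_sub, zpow_mul, ← hαk, ← hd, mul_inv_eq_one, mul_inv_eq_iff_eq_mul] at h2
    exact h2
  obtain ⟨i, j, hγij⟩ := hfac γ
  have hα2 : p ≠ 2 → α⁻¹ ≠ α := by
    intro hp2 h
    have : α ^ 2 = 1 := by rw [pow_two]; nth_rw 1 [← h]; simp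
    have := orderOf_dvd_of_pow_eq_one this
    rw [hαp] at this
    exact hp2 ((Nat.prime_dvd_prime_iff_eq hp Nat.prime_two).mp this)
  have hbjα : Commute (b ^ j) α := by
    have : b ^ j = (a ^ i)⁻¹ * γ := by rw [hγij]; group
    rw [this]
    exact ((haα.zpow_left i).inv_left).mul_left hαγ
  have hbjγ : Commute (b ^ j) γ := by
    rcases hε with h | ⟨h, hp2⟩
    · rw [h, zpow_one, mul_inv_eq_iff_eq_mul] at hbγ
      exact Commute.zpow_left hbγ j
    · apply conj_even_aux b γ ε hεε hbγ j
      by_contra hodd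
      rw [Int.not_even_iff_odd] at hodd
      obtain ⟨l, hl⟩ := hodd
      have h3 := conj_even_aux b α ε hεε hbαε (2 * l) (even_two_mul l)
      have h4 : Commute b α := by
        have : b = (b ^ (2 * l))⁻¹ * b ^ j := by rw [hl]; group
        rw [this]
        exact h3.inv_left.mul_left hbjα
      rw [h4.eq, h] at hbαε
      apply hα2 hp2
      rw [← zpow_neg_one, ← hbαε]; group
  have hij : Commute (a ^ i) (b ^ j) := by
    have : a ^ i = γ * (b ^ j)⁻¹ := by rw [hγij]; group
    rw [this]
    exact (hbjγ.symm).mul_left (Commute.refl _).inv_left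
  have hip : (a ^ i) ^ p = 1 ∧ (b ^ j) ^ p = 1 := by
    have h1 : (a ^ i) ^ p * (b ^ j) ^ p = 1 := by rw [← hij.mul_pow, ← hγij, hγpow]
    have h2 : a ^ (i * p) = b ^ (-(j * p)) := by
      rw [zpow_neg, zpow_mul, zpow_mul, zpow_natCast, zpow_natCast]
      exact eq_inv_of_mul_eq_one_left h1
    have h3 := hint _ _ h2
    rw [zpow_mul, zpow_natCast] at h3
    rw [h3, one_mul] at h1
    exact ⟨h3, h1⟩
  obtain ⟨s, hs⟩ := mem_of_pow_aux a α (a ^ i) p hp ⟨k, hαk.symm⟩ hαp ⟨i, rfl⟩ hip.1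
  obtain ⟨t, ht⟩ := mem_of_pow_aux b β (b ^ j) p hp ⟨k, hβk.symm⟩ hβp ⟨j, rfl⟩ hip.2
  simp only at hs ht
  have hγbj : γ ≠ b ^ j := by
    intro h
    have := hintbc j k (by rw [← hγk, h])
    exact hγ1 (h.trans this)
  have hcomm : Commute b α ∧ Commute a β := by
    rcases hε with h | ⟨h, hp2⟩
    · rw [h, zpow_one, mul_inv_eq_iff_eq_mul] at hbαε haβ
      exact ⟨hbαε, haβ⟩
    · exfalso
      have h1 : a * b ^ j * a⁻¹ = (b ^ j)⁻¹ := by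
        rw [← ht, conj_zpow_aux a β ε haβ t, h, zpow_neg_one]
      rw [h, zpow_neg_one, hγij] at haγ
      have h2 : a ^ i * (b ^ j)⁻¹ = (a ^ i)⁻¹ * (b ^ j)⁻¹ := by
        calc a ^ i * (b ^ j)⁻¹ = a ^ i * (a * b ^ j * a⁻¹) := by rw [h1]
          _ = a * (a ^ i * b ^ j) * a⁻¹ := by group
          _ = (a ^ i * b ^ j)⁻¹ := haγ
          _ = (a ^ i)⁻¹ * (b ^ j)⁻¹ := by
            rw [mul_inv_rev]; exact hij.symm.inv_inv.eq
      have h3 : a ^ i = (a ^ i)⁻¹ := mul_right_cancel h2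
      have h4 : (a ^ i) ^ 2 = 1 := by rw [pow_two]; nth_rw 2 [h3]; simp
      have h5 : orderOf (a ^ i) ∣ Nat.gcd 2 p :=
        Nat.dvd_gcd (orderOf_dvd_of_pow_eq_one h4) (orderOf_dvd_of_pow_eq_one hip.1)
      have h6 : Nat.gcd 2 p = 1 := (Nat.coprime_primes Nat.prime_two hp).mpr (Ne.symm hp2)
      rw [h6, Nat.dvd_one, orderOf_eq_one_iff] at h5
      rw [h5, one_mul] at hγij
      exact hγbj hγij
  obtain ⟨hbα1, haβ1⟩ := hcomm
  have hαc : ∀ h, Commute α h := by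
    intro h
    obtain ⟨i, j, rfl⟩ := hfac h
    exact (haα.symm.zpow_right i).mul_right (hbα1.symm.zpow_right j)
  have hβc : ∀ h, Commute β h := by
    intro h
    obtain ⟨i, j, rfl⟩ := hfac h
    exact (haβ1.symm.zpow_right i).mul_right (hbβ.symm.zpow_right j)
  have hγst : γ = α ^ s * β ^ t := by rw [hs, ht, hγij]
  let K : Subgroup H :=
    { carrier := {h | ∃ s t : ℤ, h = α ^ s * β ^ t}
      one_mem' := ⟨0, 0, by simp⟩
      mul_mem' := by
        rintro _ _ ⟨s, t, rfl⟩ ⟨s', t', rfl⟩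
        refine ⟨s + s', t + t', ?_⟩
        rw [zpow_add, zpow_add, mul_assoc, mul_assoc, ← mul_assoc (β ^ t),
          ((hβc (α ^ s')).zpow_left t).eq, mul_assoc]
      inv_mem' := by
        rintro _ ⟨s, t, rfl⟩
        refine ⟨-s, -t, ?_⟩
        rw [mul_inv_rev, zpow_neg, zpow_neg]
        exact (((hβc α).zpow_left t).zpow_right s).inv_inv.eq }
  have hKc : ∀ g ∈ K, ∀ h, Commute g h := by
    rintro _ ⟨s, t, rfl⟩ h
    exact ((hαc h).zpow_left s).mul_left ((hβc h).zpow_left t)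
  have hKn : K.Normal := ⟨fun g hg h => by
    rw [← (hKc g hg h).eq]; simpa using hg⟩
  have hαK : α ∈ K := ⟨1, 0, by simp⟩
  have hβK : β ∈ K := ⟨0, 1, by simp⟩
  have hγK : γ ∈ K := ⟨s, t, hγst⟩
  have hθK : K ≤ K.comap θ := by
    rintro _ ⟨s, t, rfl⟩
    rw [Subgroup.mem_comap, map_mul, map_zpow, map_zpow, ← hβdef, ← hγdef]
    exact K.mul_mem (K.zpow_mem hβK s) (K.zpow_mem hγK t)
  have hτβ : τ β = β⁻¹ := by rw [hβk, map_zpow, hτb, inv_zpow]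
  have hτg : ∀ g ∈ K, τ g = g⁻¹ := by
    rintro _ ⟨s, t, rfl⟩
    rw [map_mul, map_zpow, map_zpow, hτα, hτβ, mul_inv_rev, inv_zpow, inv_zpow]
    exact (((hαc β).zpow_left s).zpow_right t).inv_inv.eq
  have hτK : K ≤ K.comap τ := by
    intro g hg
    rw [Subgroup.mem_comap, hτg g hg]
    exact K.inv_mem hg
  have hcardQ : Nat.card (H ⧸ K) ≤ N := by
    have h1 := Subgroup.card_eq_card_quotient_mul_card_subgroup K
    have h2 : 1 < Nat.card K := by
      rw [Finite.one_lt_card_iff_nontrivial]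
      exact ⟨⟨⟨α, hαK⟩, 1, fun h => hα1 (congrArg Subtype.val h)⟩⟩
    have h3 := Nat.card_pos (α := H ⧸ K)
    nlinarith
  have hquot := ih (H ⧸ K) (QuotientGroup.mk a) (QuotientGroup.mk b)
    (QuotientGroup.map K K θ hθK) (QuotientGroup.map K K τ hτK) hcardQ
    (by rw [QuotientGroup.map_mk, hθa])
    (by rw [QuotientGroup.map_mk, hθb, hcdef]; rfl)
    (by rw [QuotientGroup.map_mk, hτa]; rfl)
    (by rw [QuotientGroup.map_mk, hτb]; rfl)
    (by
      intro q
      obtain ⟨h, rfl⟩ := QuotientGroup.mk_surjective q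
      obtain ⟨i, j, rfl⟩ := hfac h
      exact ⟨i, j, rfl⟩)
    (by
      intro i j h
      have h1 : (QuotientGroup.mk (a ^ i) : H ⧸ K) = QuotientGroup.mk (b ^ j) := h
      rw [QuotientGroup.eq] at h1
      obtain ⟨s, t, hst⟩ := h1
      have h2 : a ^ (i + k * s) = b ^ (j - k * t) := by
        rw [zpow_add, zpow_sub, zpow_mul, zpow_mul, ← hαk, ← hβk]
        rw [eq_mul_inv_iff_mul_eq, mul_assoc, ← hst]; group
      have h3 := hint _ _ h2
      rw [zpow_add, zpow_mul, ← hαk] at h3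
      change (QuotientGroup.mk (a ^ i) : H ⧸ K) = 1
      rw [QuotientGroup.eq_one_iff, eq_inv_of_mul_eq_one_left h3]
      exact K.inv_mem (K.zpow_mem hαK s))
  have hq2 : (QuotientGroup.mk (b * a) : H ⧸ K) = QuotientGroup.mk (a * b) := hquot.symm
  rw [QuotientGroup.eq] at hq2
  obtain ⟨g, hg⟩ : ∃ g, g = (b * a)⁻¹ * (a * b) := ⟨_, rfl⟩
  rw [← hg] at hq2
  have hgab : a * b = b * a * g := by rw [hg]; group
  have hgc := hKc g hq2
  have hg2 : g ^ 2 = 1 := by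
    have h1 := congrArg τ hgab
    rw [map_mul, map_mul, map_mul, hτg g hq2, hτa, hτb] at h1
    have h2 : b * a = g * (a * b) := by
      rw [← inv_inj, mul_inv_rev, mul_inv_rev, h1, mul_inv_rev]
    rw [hgab, ← (hgc (b * a)).eq, ← mul_assoc] at h2
    rw [pow_two]
    exact (right_eq_mul.mp h2)
  have hθg : θ g = g := by
    rw [hg, map_mul, map_inv, map_mul, map_mul, hθa, hθb, hcdef]
    have h1 : ((a * b)⁻¹ * b)⁻¹ * (b * (a * b)⁻¹) = b⁻¹ * (a * b) * a⁻¹ := by group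
    have h2 : b⁻¹ * (a * b) * a⁻¹ = g := by
      rw [hgab, mul_assoc b, ← (hgc a).eq]; group
    rw [h1, h2, hg]
  have hgp : g ^ p = 1 := by
    obtain ⟨s, t, rfl⟩ := hq2
    rw [((hαc (β ^ t)).zpow_left s).mul_pow, ← zpow_natCast, ← zpow_natCast, zpow_comm, zpow_natCast,
      hαpow, zpow_comm, zpow_natCast, hβpow]
    simp
  suffices g = 1 by rw [hgab, this, mul_one]
  by_cases hp2 : p = 2
  · subst hp2
    have h2 : ∀ z : H, z ^ 2 = 1 → ∀ l : ℤ, z ^ l = 1 ∨ z ^ l = z := by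
      intro z hz l
      have hz' : z ^ (2 : ℤ) = 1 := by exact_mod_cast hz
      rcases Int.even_or_odd' l with ⟨w, hw | hw⟩
      · left; rw [hw, zpow_mul, hz', one_zpow]
      · right; rw [hw, zpow_add, zpow_mul, hz', one_zpow, one_mul, zpow_one]
    have hαβ : α ≠ β := fun h => hα1 (by
      have := hint k k (by rw [← hαk, ← hβk, h])
      rwa [← hαk] at this)
    have hβγ : β ≠ γ := fun h => hβ1 (by
      have := hintbc k k (by rw [← hβk, ← hγk, h])
      rwa [← hβk] at this)
    have hαγ' : α ≠ γ := fun h => hα1 (by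
      have := hintac k k (by rw [← hαk, ← hγk, h])
      rwa [← hαk] at this)
    obtain ⟨s, t, hst⟩ := hq2
    rcases h2 α hαpow s with h | h <;> rcases h2 β hβpow t with h' | h' <;>
      rw [h, h'] at hst
    · rw [hst, one_mul]
    · rw [one_mul] at hst
      rw [hst, ← hγdef] at hθg
      exact absurd hθg.symm hβγ
    · rw [mul_one] at hst
      rw [hst, ← hβdef] at hθg
      exact absurd hθg.symm hαβ
    · rw [hst, map_mul, ← hβdef, ← hγdef, (hβc γ).eq] at hθg
      exact absurd (mul_right_cancel hθg).symm hαγ'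
  · have h5 : orderOf g ∣ Nat.gcd 2 p :=
      Nat.dvd_gcd (orderOf_dvd_of_pow_eq_one hg2) (orderOf_dvd_of_pow_eq_one hgp)
    have h6 : Nat.gcd 2 p = 1 := (Nat.coprime_primes Nat.prime_two hp).mpr (Ne.symm hp2)
    rwa [h6, Nat.dvd_one, orderOf_eq_one_iff] at h5


theorem inv_mem_aux {G : Type*} [Group G] [Finite G] (S : Submonoid G) {g : G} (hg : g ∈ S) :
    g⁻¹ ∈ S := by
  have h1 : g * g ^ (orderOf g - 1) = 1 := by
    rw [← pow_succ', Nat.sub_add_cancel (orderOf_pos g), pow_orderOf_eq_one]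
  rw [inv_eq_of_mul_eq_one_right h1]
  exact S.pow_mem hg _

theorem closure_aux {G : Type*} [Group G] [Finite G] (S : Submonoid G) (s : Set G)
    (hs : ∀ g ∈ s, g ∈ S) : ∀ g ∈ Subgroup.closure s, g ∈ S := by
  intro g hg
  induction hg using Subgroup.closure_induction with
  | mem g hg => exact hs g hg
  | one => exact S.one_mem
  | mul g h _ _ hg hh => exact S.mul_mem hg hh
  | inv g _ hg => exact inv_mem_aux S hg


theorem w1 (x y : G) (hyxy : y * x * y = x⁻¹) : y * (x * y ^ 2 * x⁻¹) * y⁻¹ = x⁻¹ * y ^ 2 * x := by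
  have h1 : x⁻¹ * y⁻¹ = y * x := by rw [← hyxy]; group
  calc y * (x * y ^ 2 * x⁻¹) * y⁻¹ = (y * x * y) * y * (x⁻¹ * y⁻¹) := by
        simp only [pow_two]; group
    _ = x⁻¹ * y ^ 2 * x := by rw [hyxy, h1, pow_two]; group

theorem w2 (x y : G) (hyxy : y * x * y = x⁻¹) (hx2 : x⁻¹ * x⁻¹ = x) : x⁻¹ * y ^ 2 * x = (y ^ 2 * (x * y ^ 2 * x⁻¹))⁻¹ := by
  apply eq_inv_of_mul_eq_one_right
  calc y ^ 2 * (x * y ^ 2 * x⁻¹) * (x⁻¹ * y ^ 2 * x)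
      = y * (y * x * y) * y * (x⁻¹ * x⁻¹) * y * y * x := by
        simp only [pow_two]; group
    _ = y * x⁻¹ * y * x * y * y * x := by rw [hyxy, hx2]
    _ = y * x⁻¹ * (y * x * y) * y * x := by group
    _ = y * (x⁻¹ * x⁻¹) * y * x := by rw [hyxy]; group
    _ = (y * x * y) * x := by rw [hx2]
    _ = 1 := by rw [hyxy]; group

/-- A simple reflexive regular map with p = 3, not the tetrahedron, of density exactly
2/3, has even period `T = 2`. -/
theorem evenPeriod_eq_two
    (G : Type*) [Group G] [Finite G] (x y : G)
    (hgen : Subgroup.closure {x, y} = ⊤) (hxy : (x * y) ^ 2 = 1)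
    (hrefl : IsReflexive x y) (hsimple : IsSimple x y)
    (hp : orderOf x = 3) (hnt : ¬ IsTet G x y)
    (hden : 3 * orderOf y ^ 2 = 2 * Nat.card G) :
    evenPeriod x y = 2 := by
  have hx3 : x ^ 3 = 1 := by rw [← hp]; exact pow_orderOf_eq_one x
  have hx1 : x ≠ 1 := by rintro rfl; simp at hp
  have hx2 : x⁻¹ * x⁻¹ = x := by
    have : x * (x * x) = 1 := by
      rw [← hx3]; simp only [pow_succ, pow_zero, one_mul, mul_assoc]
    rw [← mul_inv_rev]; exact inv_eq_of_mul_eq_one_left this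
  have hyxy : y * x * y = x⁻¹ := by
    apply eq_inv_of_mul_eq_one_right
    rw [← hxy, pow_two]; group
  obtain ⟨σ, hσx, hσy⟩ := hrefl
  have hq0 : 0 < orderOf y := orderOf_pos y
  obtain ⟨n, hn⟩ : ∃ n, orderOf y = 2 * n := by
    have : Even (orderOf y) := by
      have h1 : Even (3 * orderOf y ^ 2) := by rw [hden]; exact even_two_mul _
      rw [Nat.even_mul, Nat.even_pow] at h1
      rcases h1 with h1 | h1
      · exact absurd h1 (by decide)
      · exact h1.1
    obtain ⟨n, hn⟩ := this
    exact ⟨n, by omega⟩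
  -- vertex stabilisers of adjacent vertices meet trivially
  have hA : ∀ k l : ℤ, y ^ k = x * y ^ l * x⁻¹ → y ^ k = 1 := by
    intro k l h
    have e1 : (QuotientGroup.mk (1 : G) : Vertex y) = QuotientGroup.mk (y ^ k) := by
      rw [QuotientGroup.eq]; exact ⟨k, by simp⟩
    have e2 : (QuotientGroup.mk (1 * x * y) : Vertex y) = QuotientGroup.mk (y ^ k * x * y) := by
      rw [QuotientGroup.eq]
      refine ⟨l, ?_⟩
      simp only
      rw [h]; group
    have h3 := hsimple.2 1 (y ^ k) (by rw [e1, e2])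
    rw [QuotientGroup.eq] at h3
    obtain ⟨j, hj⟩ := h3
    simp only [inv_one, one_mul] at hj
    have hxy' : (x * y) ^ (2 : ℤ) = 1 := by exact_mod_cast hxy
    rcases Int.even_or_odd' j with ⟨w, hw | hw⟩
    · rw [← hj, hw, zpow_mul, hxy', one_zpow]
    · exfalso
      rw [hw, zpow_add, zpow_mul, hxy', one_zpow, one_mul, zpow_one] at hj
      apply hsimple.1 1
      rw [one_mul, QuotientGroup.eq]
      exact ⟨k, by simp [hj]⟩
  obtain ⟨a, ha⟩ : ∃ a, a = y ^ 2 := ⟨_, rfl⟩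
  obtain ⟨b, hb⟩ : ∃ b, b = x * a * x⁻¹ := ⟨_, rfl⟩
  have hyb : y * b * y⁻¹ = x⁻¹ * a * x := by rw [hb, ha]; exact w1 x y hyxy
  have hc : x⁻¹ * a * x = (a * b)⁻¹ := by rw [hb, ha]; exact w2 x y hyxy hx2
  have hya : y * a * y⁻¹ = a := by rw [ha]; group
  have hxb : x * b * x⁻¹ = (a * b)⁻¹ := by
    rw [← hc, hb]
    have h1 : x * x = x⁻¹ := by rw [← inv_inj, mul_inv_rev, hx2, inv_inv]
    calc x * (x * a * x⁻¹) * x⁻¹ = (x * x) * a * (x * x)⁻¹ := by group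
      _ = _ := by rw [h1, inv_inv]
  have hσa : σ a = a⁻¹ := by rw [ha, map_pow, hσy, inv_pow]
  have hσb : σ b = a * b := by
    rw [hb, map_mul, map_mul, map_inv, hσx, hσa, inv_inv]
    rw [← hb, ← inv_inv (a * b), ← hc]; group
  -- diagonal neighbours are not neighbours
  have hF3 : ∀ i j : ℤ, b ≠ y ^ i * x * y ^ j := by
    intro i j h
    have h1 := congrArg σ h
    rw [hσb, map_mul, map_mul, map_zpow, map_zpow, hσx, hσy, ← hyxy, h, ha] at h1
    have h2 : y ^ (2 * i + 1) = x * y ^ (1 - 2 * j) * x⁻¹ := by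
      have h3 := congrArg (fun t => y ^ (i - 1) * t * y ^ (-j) * x⁻¹) h1
      calc y ^ (2 * i + 1) = y ^ (i - 1) * (y ^ 2 * (y ^ i * x * y ^ j)) * y ^ (-j) * x⁻¹ := by
            group
        _ = _ := h3
        _ = _ := by
            rw [inv_zpow, inv_zpow]
            group
    have h4 := orderOf_dvd_iff_zpow_eq_one.mpr (hA _ _ h2)
    rw [hn] at h4
    push_cast at h4
    obtain ⟨w, hw⟩ := h4
    have : (2 : ℤ) * (n * w) = 2 * i + 1 := by rw [hw]; ring
    omega
  -- pigeonhole
  have hF4 : ∃ m : ℕ, y ^ m ≠ 1 ∧ b⁻¹ * y ^ m * b ∈ Subgroup.zpowers y := by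
    by_contra hcon
    push Not at hcon
    have hcon' : ∀ m : ℕ, y ^ m ≠ 1 → x⁻¹ * y ^ m * x ∉ Subgroup.zpowers y := by
      rintro m hm ⟨l, hl⟩
      simp only at hl
      apply hm
      have := hA m l (by rw [hl, zpow_natCast]; group)
      rwa [zpow_natCast] at this
    have hlt : ∀ g : G, (∀ m : ℕ, y ^ m ≠ 1 → g⁻¹ * y ^ m * g ∉ Subgroup.zpowers y) →
        Function.Injective (fun i : Fin (orderOf y) =>
          (QuotientGroup.mk (y ^ (i : ℕ) * g) : Vertex y)) := by
      intro g hg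
      have hlt : ∀ i j : Fin (orderOf y), (i : ℕ) < j →
          (QuotientGroup.mk (y ^ (i : ℕ) * g) : Vertex y) ≠ QuotientGroup.mk (y ^ (j : ℕ) * g) := by
        intro i j hij h
        rw [QuotientGroup.eq] at h
        refine hg (j - i) ?_ ?_
        · exact pow_ne_one_of_lt_orderOf (by omega) (by omega)
        · convert h using 1
          rw [pow_sub _ hij.le]
          group
      intro i j h
      rcases lt_trichotomy (i : ℕ) j with hij | hij | hij
      · exact absurd h (hlt i j hij)
      · exact Fin.ext hij
      · exact absurd h.symm (hlt j i hij)
    have hinj : Function.Injective (Sum.elim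
        (fun i : Fin (orderOf y) => (QuotientGroup.mk (y ^ (i : ℕ) * x) : Vertex y))
        (fun i : Fin (orderOf y) => (QuotientGroup.mk (y ^ (i : ℕ) * b) : Vertex y))) := by
      apply (hlt x hcon').sumElim (hlt b hcon)
      intro i j h
      rw [QuotientGroup.eq] at h
      obtain ⟨l, hl⟩ := h
      simp only at hl
      apply hF3 (-(j : ℕ) + (i : ℕ)) l
      rw [hl, zpow_add, zpow_neg, zpow_natCast, zpow_natCast]
      group
    have h1 := Nat.card_le_card_of_injective _ hinj
    have h2 := Subgroup.card_eq_card_quotient_mul_card_subgroup (Subgroup.zpowers y)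
    rw [Nat.card_zpowers] at h2
    simp only [Nat.card_sum, Nat.card_eq_fintype_card (α := Fin _), Fintype.card_fin] at h1
    nlinarith
  -- the subgroup
  let H : Subgroup G := Subgroup.closure {a, b}
  have haH : a ∈ H := Subgroup.subset_closure (by simp)
  have hbH : b ∈ H := Subgroup.subset_closure (by simp)
  have hcH : (a * b)⁻¹ ∈ H := H.inv_mem (H.mul_mem haH hbH)
  have hHle : ∀ f : G →* G, f a ∈ H → f b ∈ H → ∀ h ∈ H, f h ∈ H := by
    intro f h1 h2
    have : H ≤ H.comap f := by
      rw [Subgroup.closure_le]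
      rintro z (rfl | rfl)
      · exact h1
      · exact h2
    exact this
  have hHn : H.Normal := by
    let S : Submonoid G :=
      { carrier := {g | ∀ h ∈ H, g * h * g⁻¹ ∈ H}
        one_mem' := by intro h hh; simpa using hh
        mul_mem' := by
          intro g g' hg hg' h hh
          have := hg _ (hg' h hh)
          simpa [mul_assoc] using this }
    have := closure_aux S {x, y} (by
      rintro z (rfl | rfl)
      · intro h hh
        exact hHle (MulAut.conj z).toMonoidHom (by simpa [← hb] using hbH)
          (by simpa [hxb] using hcH) h hh
      · intro h hh
        exact hHle (MulAut.conj z).toMonoidHom (by simpa [hya] using haH)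
          (by simpa [hyb, hc] using hcH) h hh)
    rw [hgen] at this
    exact ⟨fun h hh g => this g trivial h hh⟩
  -- x is not in the subgroup
  have hxH : x ∉ H := by
    intro hxH
    obtain ⟨m, hm1, hm2⟩ := hF4
    have hd1 : orderOf (y ^ m) ≠ 1 := by rwa [Ne, orderOf_eq_one_iff]
    obtain ⟨p, hp, hpd⟩ := Nat.exists_prime_and_dvd hd1
    obtain ⟨k, α, hαk, hαp, hbα⟩ : ∃ (k : ℤ) (α : G), α = y ^ k ∧ orderOf α = p ∧
        b⁻¹ * α * b ∈ Subgroup.zpowers y := by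
      refine ⟨m * (orderOf (y ^ m) / p : ℕ), (y ^ m) ^ (orderOf (y ^ m) / p), ?_, ?_, ?_⟩
      · rw [zpow_mul, zpow_natCast, zpow_natCast]
      · exact orderOf_pow_orderOf_div (orderOf_pos _).ne' hpd
      · have : b⁻¹ * (y ^ m) ^ (orderOf (y ^ m) / p) * b
            = (b⁻¹ * y ^ m * b) ^ (orderOf (y ^ m) / p) := by
          have := conj_pow (a := b⁻¹) (b := y ^ m) (i := orderOf (y ^ m) / p)
          rw [inv_inv] at this
          exact this.symm
        rw [this]
        exact Subgroup.pow_mem _ hm2 _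
    have hbα' : b⁻¹ * α * b ∈ Subgroup.zpowers α := by
      refine mem_of_pow_aux y α _ p hp ⟨k, hαk.symm⟩ hαp hbα ?_
      have := conj_pow (a := b⁻¹) (b := α) (i := p)
      rw [inv_inv] at this
      rw [this, ← hαp, pow_orderOf_eq_one]; group
    let S : Submonoid G :=
      { carrier := {g | g⁻¹ * α * g ∈ Subgroup.zpowers α}
        one_mem' := by simp
        mul_mem' := by
          rintro g g' ⟨r, hr⟩ ⟨r', hr'⟩
          simp only at hr hr'
          refine ⟨r' * r, ?_⟩
          have := conj_zpow (a := g'⁻¹) (b := α) (i := r)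
          rw [inv_inv] at this
          simp only
          rw [zpow_mul, hr', this, hr]; group }
    have h1 := closure_aux S {a, b} (by
      rintro z (rfl | rfl)
      · refine ⟨1, ?_⟩
        simp only
        rw [hαk, ha]; group
      · exact hbα') x hxH
    obtain ⟨r, hr⟩ := h1
    simp only at hr
    have h2 := hA k (k * r) (by rw [zpow_mul, ← hαk, hr]; group)
    rw [← hαk] at h2
    rw [h2, orderOf_one] at hαp
    exact hp.one_lt.ne hαp
  have hcardH : Nat.card H ≤ n * n := by
    have h1 := Subgroup.card_eq_card_quotient_mul_card_subgroup H
    have hX : orderOf (QuotientGroup.mk x : G ⧸ H) = 3 := by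
      have : Fact (Nat.Prime 3) := ⟨Nat.prime_three⟩
      apply orderOf_eq_prime
      · rw [← QuotientGroup.mk_pow, hx3]; rfl
      · rwa [Ne, QuotientGroup.eq_one_iff]
    have hY : orderOf (QuotientGroup.mk y : G ⧸ H) = 2 := by
      have : Fact (Nat.Prime 2) := ⟨Nat.prime_two⟩
      apply orderOf_eq_prime
      · rw [← QuotientGroup.mk_pow, QuotientGroup.eq_one_iff, ← ha]; exact haH
      · rw [Ne, QuotientGroup.eq_one_iff]
        intro hy
        apply hxH
        have h3 : (QuotientGroup.mk y : G ⧸ H) = 1 := (QuotientGroup.eq_one_iff y).mpr hy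
        have h4 : (QuotientGroup.mk (y * x * y) : G ⧸ H) = QuotientGroup.mk x := by
          rw [QuotientGroup.mk_mul, QuotientGroup.mk_mul, h3, one_mul, mul_one]
        rw [hyxy, QuotientGroup.eq, inv_inv] at h4
        have h5 : x = (x * x)⁻¹ := by rw [mul_inv_rev, hx2]
        rw [h5]
        exact H.inv_mem h4
    have h2 : 3 ∣ Nat.card (G ⧸ H) := hX ▸ orderOf_dvd_natCard _
    have h3 : 2 ∣ Nat.card (G ⧸ H) := hY ▸ orderOf_dvd_natCard _
    have h4 : 0 < Nat.card (G ⧸ H) := Nat.card_pos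
    have h5 : 6 ≤ Nat.card (G ⧸ H) := by omega
    rw [hn] at hden
    nlinarith
  have hinab : ∀ i j : ℤ, a ^ i = b ^ j → a ^ i = 1 := by
    intro i j h
    rw [hb, conj_zpow, ha, ← zpow_natCast, ← zpow_mul, ← zpow_mul] at h
    have := hA _ _ h
    rwa [zpow_mul, zpow_natCast, ← ha] at this
  have hoa : orderOf a = n := by
    rw [ha, orderOf_pow_of_dvd (by norm_num) ⟨n, hn⟩, hn]; omega
  have hob : orderOf b = n := by
    rw [← hoa, hb]
    exact orderOf_injective (MulAut.conj x).toMonoidHom (MulAut.conj x).injective a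
  have hfac : ∀ h ∈ H, ∃ i j : ℤ, h = a ^ i * b ^ j := by
    let f : Subgroup.zpowers a × Subgroup.zpowers b → H := fun t =>
      ⟨t.1 * t.2, H.mul_mem ((Subgroup.zpowers_le.mpr haH) t.1.2)
        ((Subgroup.zpowers_le.mpr hbH) t.2.2)⟩
    have hf : Function.Injective f := by
      rintro ⟨⟨_, i, rfl⟩, ⟨_, j, rfl⟩⟩ ⟨⟨_, i', rfl⟩, ⟨_, j', rfl⟩⟩ h
      have h1 : a ^ i * b ^ j = a ^ i' * b ^ j' := congrArg Subtype.val h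
      have h2 : a ^ (i - i') = b ^ (j' - j) := by
        rw [show i - i' = -i' + i by ring, zpow_add, zpow_sub, eq_mul_inv_iff_mul_eq, mul_assoc, h1]
        group
      have h3 := hinab _ _ h2
      have h4 : b ^ (j' - j) = 1 := h2 ▸ h3
      rw [zpow_sub, mul_inv_eq_one] at h3 h4
      simp only [Prod.mk.injEq]
      exact ⟨Subtype.ext h3, Subtype.ext h4.symm⟩
    have hbij : Function.Bijective f := by
      have h1 := Nat.card_le_card_of_injective f hf
      have h2 : Nat.card (Subgroup.zpowers a × Subgroup.zpowers b) = n * n := by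
        rw [Nat.card_prod, Nat.card_zpowers, Nat.card_zpowers, hoa, hob]
      exact (Nat.bijective_iff_injective_and_card f).mpr ⟨hf, by omega⟩
    intro h hh
    obtain ⟨⟨⟨_, i, rfl⟩, ⟨_, j, rfl⟩⟩, hij⟩ := hbij.2 ⟨h, hh⟩
    exact ⟨i, j, (congrArg Subtype.val hij).symm⟩
  -- commutativity
  have hτ : ∀ h ∈ H, ((MulAut.conj y⁻¹).toMonoidHom.comp σ.toMonoidHom) h ∈ H := by
    apply hHle
    · have : y⁻¹ * a⁻¹ * y = a⁻¹ := by rw [ha]; group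
      simpa [hσa, this] using haH
    · have := hHn.conj_mem _ (H.mul_mem haH hbH) y⁻¹
      simpa [hσb] using this
  have hab : a * b = b * a := by
    have := key_aux (Nat.card H) H ⟨a, haH⟩ ⟨b, hbH⟩
      (((MulAut.conj x).toMonoidHom.comp H.subtype).codRestrict H
        (fun h => by simpa using hHn.conj_mem h h.2 x))
      ((((MulAut.conj y⁻¹).toMonoidHom.comp σ.toMonoidHom).comp H.subtype).codRestrict H
        (fun h => hτ h h.2)) le_rfl
      (Subtype.ext (by simp [hb]))
      (Subtype.ext (by simpa using hxb))
      (Subtype.ext (by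
        have : y⁻¹ * a⁻¹ * y = a⁻¹ := by rw [ha]; group
        simpa [hσa] using this))
      (Subtype.ext (by
        have h1 : y⁻¹ * (a * b) * y = b⁻¹ := by
          rw [← inv_inv (a * b), ← hc, ← hyb]; group
        simpa [hσb] using h1))
      (by
        rintro ⟨h, hh⟩
        obtain ⟨i, j, hij⟩ := hfac h hh
        exact ⟨i, j, Subtype.ext (by simpa using hij)⟩)
      (by
        intro i j h
        apply Subtype.ext
        have := hinab i j (by simpa using congrArg Subtype.val h)
        simpa using this)
    exact congrArg Subtype.val this
  have hcomm : ∀ g ∈ H, ∀ h ∈ H, g * h = h * g := by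
    intro g hg h hh
    obtain ⟨i, j, rfl⟩ := hfac g hg
    obtain ⟨i', j', rfl⟩ := hfac h hh
    have hab : Commute a b := hab
    have h1 : ∀ i : ℤ, Commute (a ^ i) (a ^ i' * b ^ j') := fun i =>
      ((Commute.refl a).zpow_zpow i i').mul_right (hab.zpow_zpow i j')
    have h2 : ∀ j : ℤ, Commute (b ^ j) (a ^ i' * b ^ j') := fun j =>
      (hab.symm.zpow_zpow j i').mul_right ((Commute.refl b).zpow_zpow j j')
    exact (h1 i).mul_left (h2 j)
  have hrot : ∀ v : Vertex y, rot y v ^ 2 ∈ H := by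
    intro v
    obtain ⟨g, rfl⟩ := QuotientGroup.mk_surjective v
    change (g * y * g⁻¹) ^ 2 ∈ H
    rw [conj_pow, ← ha]
    exact hHn.conj_mem a haH g
  have hfix : ∀ v : Vertex y, rot y v ^ 2 • v = v := by
    intro v
    obtain ⟨g, rfl⟩ := QuotientGroup.mk_surjective v
    change (QuotientGroup.mk ((g * y * g⁻¹) ^ 2 * g) : Vertex y) = QuotientGroup.mk g
    rw [QuotientGroup.eq]
    refine ⟨-2, ?_⟩
    simp only
    rw [conj_pow]; group
  have hmem : 2 ∈ {j : ℕ | 1 ≤ j ∧ ∀ v v' : Vertex y, Aligned x y v v' →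
      rot y v ^ j • v' = v'} := by
    refine ⟨by norm_num, ?_⟩
    intro v v' hal
    have : ∃ h ∈ H, v' = h • v := by
      induction hal with
      | refl => exact ⟨1, H.one_mem, by simp⟩
      | tail _ hd ih =>
        obtain ⟨h, hh, rfl⟩ := ih
        obtain ⟨w, -, rfl⟩ := hd
        exact ⟨rot y w ^ 2 * h, H.mul_mem (hrot w) hh, by rw [mul_smul]⟩
    obtain ⟨h, hh, rfl⟩ := this
    rw [← mul_smul, hcomm _ (hrot v) h hh, mul_smul, hfix]
  have h1 : primPeriod x y ≤ 2 := Nat.sInf_le hmem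
  have h2 : 1 ≤ primPeriod x y := (Nat.sInf_mem ⟨2, hmem⟩).1
  unfold evenPeriod
  have h3 : primPeriod x y = 1 ∨ primPeriod x y = 2 := by omega
  rcases h3 with h | h <;> rw [h] <;> decide

end RegularMap
end

section
/- Let (G,x,y) encode a reflexive regular map that is simple, is not the tetrahedral map tet, and satisfies 2q² > |G| (density exceeding 1/2). Then [x,y]³ = 1 in G, where [x,y] = x*y*x⁻¹*y⁻¹. -/
namespace RegularMap

variable {G : Type*} [Group G]

section aux

variable {G : Type*} [Group G]

lemma aux_cyc [Finite G] {y z h : G} (hz : z ∈ Subgroup.zpowers y) (hh : h ∈ Subgroup.zpowers y)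
    (ho : orderOf h = orderOf z) : h ∈ Subgroup.zpowers z := by
  have hy : 0 < orderOf y := orderOf_pos y
  obtain ⟨a, rfl⟩ := (mem_powers_iff_mem_zpowers (x := y)).2 hz
  obtain ⟨b, rfl⟩ := (mem_powers_iff_mem_zpowers (x := y)).2 hh
  simp only at *
  rw [orderOf_pow, orderOf_pow] at ho
  have hg : (orderOf y).gcd b = (orderOf y).gcd a := by
    have h1 := Nat.div_mul_cancel (Nat.gcd_dvd_left (orderOf y) a)
    have h2 := Nat.div_mul_cancel (Nat.gcd_dvd_left (orderOf y) b)
    rw [ho] at h2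
    have h3 : 0 < orderOf y / (orderOf y).gcd a :=
      Nat.div_pos (Nat.le_of_dvd hy (Nat.gcd_dvd_left _ _)) (Nat.gcd_pos_of_pos_left _ hy)
    exact Nat.eq_of_mul_eq_mul_left h3 (h2.trans h1.symm)
  have hb : (orderOf y).gcd a ∣ b := hg ▸ Nat.gcd_dvd_right _ _
  obtain ⟨c, hc⟩ := hb
  have hk : y ^ ((orderOf y).gcd a) ∈ Subgroup.zpowers (y ^ a) := by
    refine ⟨(orderOf y).gcdB a, ?_⟩
    have := Nat.gcd_eq_gcd_ab (orderOf y) a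
    simp only
    rw [← zpow_natCast y (Nat.gcd _ _), this, zpow_add, zpow_mul, zpow_natCast, pow_orderOf_eq_one,
      one_zpow, one_mul, zpow_mul, zpow_natCast]
  rw [hc, pow_mul]
  exact Subgroup.pow_mem _ hk c

lemma aux_card [Finite G] {y g : G}
    (hg : ∀ z ∈ Subgroup.zpowers y, g⁻¹ * z * g ∈ Subgroup.zpowers y → z = 1) :
    (Set.range (fun p : Subgroup.zpowers y × Subgroup.zpowers y => (p.1 : G) * g * p.2)).ncard
      = orderOf y ^ 2 := by
  rw [← Nat.card_coe_set_eq, Nat.card_range_of_injective, Nat.card_prod, Nat.card_zpowers, sq]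
  rintro ⟨a, b⟩ ⟨c, d⟩ h
  simp only at h
  have h1 : (c : G)⁻¹ * a = 1 := by
    apply hg _ (mul_mem (inv_mem c.2) a.2)
    have : g⁻¹ * ((c : G)⁻¹ * a) * g = d * (b : G)⁻¹ := by
      have : (a : G) * g = c * g * d * (b : G)⁻¹ := by rw [← h]; group
      calc g⁻¹ * ((c : G)⁻¹ * a) * g = g⁻¹ * (c : G)⁻¹ * (a * g) := by group
        _ = _ := by rw [this]; group
    rw [this]
    exact mul_mem d.2 (inv_mem b.2)
  have h2 : a = c := by
    ext; exact (inv_mul_eq_one.1 h1).symm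
  subst h2
  have h3 : b = d := by ext; exact mul_left_cancel h
  rw [h3]

lemma aux_key [Finite G] {e y : G} (he : e * e = 1)
    (hs : ∀ z ∈ Subgroup.zpowers y, e * z * e ∈ Subgroup.zpowers y → z = 1)
    (hden : 2 * orderOf y ^ 2 > Nat.card G) (g : G) :
    (∃ i j : ℤ, g = y ^ i * e * y ^ j) ∨ ∃ K : Subgroup G, y ∈ K ∧ e ∉ K ∧ g ∈ K := by
  have hei : e⁻¹ = e := inv_eq_of_mul_eq_one_left he
  by_contra! hcon
  obtain ⟨h1, h2⟩ := hcon
  have hg : ∀ z ∈ Subgroup.zpowers y, g⁻¹ * z * g ∈ Subgroup.zpowers y → z = 1 := by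
    intro z hz hgz
    by_contra hne
    have ho : orderOf (g⁻¹ * z * g) = orderOf z := by
      have : g⁻¹ * z * g = MulAut.conj g⁻¹ z := by simp
      rw [this]; exact orderOf_injective (MulAut.conj g⁻¹).toMonoidHom (MulEquiv.injective _) z
    have hm := aux_cyc hz hgz ho
    have hm' := aux_cyc hgz hz ho.symm
    refine h2 (Subgroup.normalizer (Subgroup.zpowers z : Set G)) ?_ ?_ ?_
    · rw [Subgroup.mem_normalizer_iff_map_conj_eq, MonoidHom.map_zpowers]
      congr 1
      obtain ⟨k, rfl⟩ := hz
      simp only [MonoidHom.coe_coe, MulAut.conj_apply]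
      group
    · intro hmem
      rw [Subgroup.mem_normalizer_iff] at hmem
      have := (hmem z).1 (Subgroup.mem_zpowers z)
      rw [hei] at this
      exact hne (hs z hz ((Subgroup.zpowers_le.2 hz) this))
    · rw [← inv_mem_iff, Subgroup.mem_normalizer_iff_map_conj_eq, MonoidHom.map_zpowers]
      simp only [MonoidHom.coe_coe, MulAut.conj_apply, inv_inv]
      exact le_antisymm (Subgroup.zpowers_le.2 hm) (Subgroup.zpowers_le.2 hm')
  have c1 := aux_card hg
  have c2 := aux_card (y := y) (g := e) (by rwa [hei])
  have hd : Disjoint (Set.range (fun p : Subgroup.zpowers y × Subgroup.zpowers y =>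
      (p.1 : G) * g * p.2)) (Set.range (fun p : Subgroup.zpowers y × Subgroup.zpowers y =>
      (p.1 : G) * e * p.2)) := by
    rw [Set.disjoint_left]
    rintro _ ⟨⟨⟨_, a, rfl⟩, ⟨_, b, rfl⟩⟩, rfl⟩ ⟨⟨⟨_, c, rfl⟩, ⟨_, d, rfl⟩⟩, h⟩
    simp only at h
    apply h1 (c - a) (d - b)
    have : g = (y ^ a)⁻¹ * (y ^ a * g * y ^ b) * (y ^ b)⁻¹ := by group
    rw [this, ← h]; group
  have := Set.ncard_union_eq hd
  have h3 := Set.ncard_le_card (Set.range (fun p : Subgroup.zpowers y × Subgroup.zpowers y =>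
      (p.1 : G) * g * p.2) ∪ Set.range (fun p : Subgroup.zpowers y × Subgroup.zpowers y =>
      (p.1 : G) * e * p.2))
  omega

lemma aux_bound [Finite G] {e y : G} (he : e * e = 1)
    (hs : ∀ z ∈ Subgroup.zpowers y, e * z * e ∈ Subgroup.zpowers y → z = 1)
    (L : Subgroup G) (hy : y ∈ L) (k : ℕ) (hk : 0 < k) (hL : e * y ^ k * e ∈ L) :
    orderOf y ^ 2 ≤ k * Nat.card L := by
  have hei : e⁻¹ = e := inv_eq_of_mul_eq_one_left he
  rw [← aux_card (y := y) (g := e) (by rwa [hei])]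
  have : Set.range (fun p : Subgroup.zpowers y × Subgroup.zpowers y =>
      (p.1 : G) * e * p.2) ⊆ Set.range (fun p : Fin k × L => y ^ (p.1 : ℕ) * e * p.2) := by
    rintro _ ⟨⟨⟨_, a, rfl⟩, ⟨_, b, rfl⟩⟩, rfl⟩
    have hk' : (0 : ℤ) < k := by exact_mod_cast hk
    have h0 := Int.emod_nonneg a hk'.ne'
    have h1 := Int.emod_lt_of_pos a hk'
    have h2 : (e * y ^ k * e) ^ (a / k) * y ^ b ∈ L := mul_mem (zpow_mem hL _) (zpow_mem hy _)
    have h3 : (e * y ^ k * e) ^ (a / k) = e * y ^ (k * (a / k)) * e := by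
      have := conj_zpow (i := a / k) (a := e) (b := y ^ k)
      rw [hei] at this
      rw [this, zpow_mul, zpow_natCast]
    refine ⟨⟨⟨(a % k).toNat, by omega⟩, ⟨_, h2⟩⟩, ?_⟩
    simp only [h3]
    rw [← zpow_natCast, Int.toNat_of_nonneg h0]
    conv_rhs => rw [← Int.emod_add_mul_ediv a k, zpow_add]
    calc _ = y ^ (a % k) * (e * e) * y ^ (k * (a / k)) * e * y ^ b := by simp only [mul_assoc]
      _ = _ := by rw [he]; simp only [mul_assoc, one_mul]
  refine (Set.ncard_le_ncard this).trans ?_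
  rw [← Nat.card_coe_set_eq]
  refine (Finite.card_range_le _).trans ?_
  simp

lemma aux_tri {e y : G} (he : e * e = 1)
    (hs : ∀ z ∈ Subgroup.zpowers y, e * z * e ∈ Subgroup.zpowers y → z = 1)
    (τ : G ≃* G) (t1 : τ e = e) (t2 : τ y = y⁻¹) (a b c : ℤ)
    (h : e * y ^ a * (e * y ^ b) * (e * y ^ c) = 1) : y ^ b = y ^ c := by
  have hei : e⁻¹ = e := inv_eq_of_mul_eq_one_left he
  have h1 := congrArg τ h
  simp only [map_mul, map_zpow, t1, t2, map_one] at h1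
  have h2 := congrArg (·⁻¹) h1
  simp only [mul_inv_rev, inv_zpow, inv_inv, hei, inv_one] at h2
  have h3 : y ^ b * e * y ^ c = y ^ c * e * y ^ b := by
    have p1 : (e * y ^ a * e) * (y ^ b * e * y ^ c) = 1 := by
      rw [← h]; simp only [mul_assoc]
    have p2 : (y ^ c * e * y ^ b) * (e * y ^ a * e) = 1 := by
      rw [← h2]; simp only [mul_assoc]
    exact (left_inv_eq_right_inv p2 p1).symm
  have h4 : y ^ (b - c) = 1 := by
    apply hs _ ⟨_, rfl⟩
    refine ⟨b - c, ?_⟩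
    simp only
    have p : y ^ (b - c) * e = e * y ^ (b - c) := by
      calc y ^ (b - c) * e = (y ^ c)⁻¹ * (y ^ b * e * y ^ c) * (y ^ c)⁻¹ := by group
        _ = _ := by rw [h3]; group
    rw [← p, mul_assoc, he, mul_one]
  rw [← mul_inv_eq_one, ← zpow_neg, ← zpow_add]; exact h4

lemma aux_tri3 {e y : G} (he : e * e = 1)
    (hs : ∀ z ∈ Subgroup.zpowers y, e * z * e ∈ Subgroup.zpowers y → z = 1)
    (τ : G ≃* G) (t1 : τ e = e) (t2 : τ y = y⁻¹) (a i j : ℤ)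
    (h : e * y ^ a * e = y ^ i * e * y ^ j) : e * y ^ a * (e * y ^ a) * (e * y ^ a) = 1 := by
  have h1 : e * y ^ a * (e * y ^ (-j)) * (e * y ^ (-i)) = 1 := by
    calc _ = (e * y ^ a * e) * y ^ (-j) * e * y ^ (-i) := by simp only [mul_assoc]
      _ = y ^ i * (e * e) * y ^ (-i) := by rw [h]; group
      _ = 1 := by rw [he]; group
  have h2 : e * y ^ (-j) * (e * y ^ (-i)) * (e * y ^ a) = 1 := by
    rw [mul_assoc] at h1
    exact mul_eq_one_comm.1 h1
  have e1 := aux_tri he hs τ t1 t2 _ _ _ h1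
  have e2 := aux_tri he hs τ t1 t2 _ _ _ h2
  rw [e1, e2] at h1
  exact h1

lemma aux_T [Finite G] {e y : G} (he : e * e = 1)
    (hs : ∀ z ∈ Subgroup.zpowers y, e * z * e ∈ Subgroup.zpowers y → z = 1)
    (hden : 2 * orderOf y ^ 2 > Nat.card G)
    (τ : G ≃* G) (t1 : τ e = e) (t2 : τ y = y⁻¹) (a : ℤ) :
    e * y ^ a * (e * y ^ a) * (e * y ^ a) = 1 ∨
      ∃ K : Subgroup G, y ∈ K ∧ e ∉ K ∧ e * y ^ a * e ∈ K ∧ e * y * e ∉ K := by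
  rcases aux_key he hs hden (e * y ^ a * e) with ⟨i, j, h⟩ | ⟨K, h1, h2, h3⟩
  · exact Or.inl (aux_tri3 he hs τ t1 t2 a i j h)
  · refine Or.inr ⟨K, h1, h2, h3, fun h4 => ?_⟩
    have := aux_bound he hs K h1 1 one_pos (by simpa using h4)
    have hi := K.card_mul_index
    have h5 : K.index ≠ 1 := fun h => h2 (by rw [Subgroup.index_eq_one.1 h]; trivial)
    have h6 : K.index ≠ 0 := Subgroup.index_ne_zero_of_finite
    have h7 : 2 ≤ K.index := by omega
    nlinarith

lemma aux_index (K : Subgroup G) [Finite G] {n : ℕ} (f : Fin n → G)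
    (hf : ∀ i j, i < j → (f i)⁻¹ * f j ∉ K) : n ≤ K.index := by
  have : Function.Injective (fun i => (f i : G ⧸ K)) := by
    intro i j h
    simp only [QuotientGroup.eq] at h
    rcases lt_trichotomy i j with h1 | h1 | h1
    · exact (hf _ _ h1 h).elim
    · exact h1
    · refine (hf _ _ h1 ?_).elim
      rw [← inv_mem_iff]; simpa using h
  have := Nat.card_le_card_of_injective _ this
  simpa [Subgroup.index] using this

lemma aux_count [Finite G] {e y : G} (he : e * e = 1)
    (hs : ∀ z ∈ Subgroup.zpowers y, e * z * e ∈ Subgroup.zpowers y → z = 1)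
    (hden : 2 * orderOf y ^ 2 > Nat.card G)
    (K K' : Subgroup G) (h1 : y ∈ K) (h2 : e ∉ K) (h3 : e * y ^ 2 * e ∈ K) (h4 : e * y * e ∉ K)
    (h1' : y ∈ K') (h2' : e ∉ K') (h3' : e * y ^ 3 * e ∈ K') (h4' : e * y * e ∉ K') : False := by
  have hei : e⁻¹ = e := inv_eq_of_mul_eq_one_left he
  have hpow : ∀ n : ℕ, (e * y * e) ^ n = e * y ^ n * e := by
    intro n
    have := conj_pow (i := n) (a := e) (b := y)
    rwa [hei] at this
  have h5' : e * y ^ 2 * e ∉ K' := by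
    intro h
    apply h4'
    have : e * y * e = (e * y ^ 2 * e)⁻¹ * (e * y ^ 3 * e) := by
      rw [← hpow, ← hpow]; group
    rw [this]; exact mul_mem (inv_mem h) h3'
  have i3 : 3 ≤ K.index := by
    refine aux_index K ![1, e, y * e] ?_
    intro i j hij
    fin_cases i <;> fin_cases j <;> simp at hij ⊢
    · exact h2
    · rwa [Subgroup.mul_mem_cancel_left _ h1]
    · rwa [hei, ← mul_assoc]
  have i4 : 4 ≤ K'.index := by
    refine aux_index K' ![1, e, y * e, y ^ 2 * e] ?_
    intro i j hij
    fin_cases i <;> fin_cases j <;> simp at hij ⊢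
    · exact h2'
    · rwa [Subgroup.mul_mem_cancel_left _ h1']
    · rwa [Subgroup.mul_mem_cancel_left _ (pow_mem h1' 2)]
    · rwa [hei, ← mul_assoc]
    · rwa [hei, ← mul_assoc]
    · rw [hei]
      have : e * y⁻¹ * (y ^ 2 * e) = e * y * e := by group
      rwa [this]
  have b2 := aux_bound he hs K h1 2 (by norm_num) h3
  have b3 := aux_bound he hs K' h1' 3 (by norm_num) h3'
  have b6 := aux_bound he hs (K ⊓ K') ⟨h1, h1'⟩ 6 (by norm_num) (by
    rw [← hpow] at h3 h3' ⊢
    refine ⟨?_, ?_⟩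
    · have := pow_mem h3 3
      rwa [← pow_mul] at this
    · have := pow_mem h3' 2
      rwa [← pow_mul] at this)
  have c2 := K.card_mul_index
  have c3 := K'.card_mul_index
  have c6 := (K ⊓ K').card_mul_index
  have j3 : K.index < 4 := by
    by_contra! h
    nlinarith
  have j4 : K'.index < 6 := by
    by_contra! h
    nlinarith
  have d1 : K.index ∣ (K ⊓ K').index := Subgroup.index_dvd_of_le inf_le_left
  have d2 : K'.index ∣ (K ⊓ K').index := Subgroup.index_dvd_of_le inf_le_right
  have h0 : (K ⊓ K').index ≠ 0 := Subgroup.index_ne_zero_of_finite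
  have k3 : K.index = 3 := by omega
  have : 12 ≤ (K ⊓ K').index := by
    rw [k3] at d1
    have : K'.index = 4 ∨ K'.index = 5 := by omega
    rcases this with h | h <;> rw [h] at d2 <;> omega
  nlinarith

lemma aux_conj {e y : G} (he : e * e = 1) {a : ℤ}
    (h : e * y ^ a * (e * y ^ a) * (e * y ^ a) = 1) : e * y ^ a * e = y ^ (-a) * e * y ^ (-a) := by
  have hei : e⁻¹ = e := inv_eq_of_mul_eq_one_left he
  have : (e * y ^ a * e) * (y ^ a * e * y ^ a) = 1 := by rw [← h]; simp only [mul_assoc]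
  rw [eq_inv_of_mul_eq_one_left this]
  simp only [mul_inv_rev, hei, zpow_neg, mul_assoc]

lemma aux_y3 {e y : G} (he : e * e = 1)
    (hs : ∀ z ∈ Subgroup.zpowers y, e * z * e ∈ Subgroup.zpowers y → z = 1)
    (T1 : e * y ^ (1 : ℤ) * (e * y ^ (1 : ℤ)) * (e * y ^ (1 : ℤ)) = 1)
    (T2 : e * y ^ (2 : ℤ) * (e * y ^ (2 : ℤ)) * (e * y ^ (2 : ℤ)) = 1) : y ^ 3 = 1 := by
  have hei : e⁻¹ = e := inv_eq_of_mul_eq_one_left he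
  have c1 := aux_conj he T1
  have c2 := aux_conj he T2
  have c3 : e * y ^ (-2 : ℤ) * e = y ^ (2 : ℤ) * e * y ^ (2 : ℤ) := by
    have := congrArg (·⁻¹) c2
    simp only [mul_inv_rev, hei, zpow_neg, inv_inv, ← mul_assoc] at this
    rw [zpow_neg, this]
  have c4 : e * y ^ (2 : ℤ) * e = (e * y ^ (1 : ℤ) * e) * (e * y ^ (1 : ℤ) * e) := by
    calc _ = e * y ^ (1 : ℤ) * 1 * y ^ (1 : ℤ) * e := by
          rw [show (2 : ℤ) = 1 + 1 from rfl, zpow_add, mul_one]; simp only [mul_assoc]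
      _ = _ := by rw [← he]; simp only [mul_assoc]
  have c5 : y ^ (-2 : ℤ) * e * y ^ (-2 : ℤ) = y ^ (1 : ℤ) * e * y ^ (1 : ℤ) := by
    rw [← c2, c4, c1]
    calc _ = y ^ (-1 : ℤ) * (e * y ^ (-2 : ℤ) * e) * y ^ (-1 : ℤ) := by group
      _ = _ := by rw [c3]; group
  apply hs _ (pow_mem (Subgroup.mem_zpowers y) 3)
  have c6 : e = y ^ 3 * e * y ^ 3 := by
    calc e = y ^ (2 : ℤ) * (y ^ (-2 : ℤ) * e * y ^ (-2 : ℤ)) * y ^ (2 : ℤ) := by group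
      _ = _ := by rw [c5]; group
  have c7 : e * y ^ 3 * e = (y ^ 3)⁻¹ := by
    rw [eq_inv_iff_mul_eq_one]
    calc e * y ^ 3 * e * y ^ 3 = e * (y ^ 3 * e * y ^ 3) := by simp only [mul_assoc]
      _ = 1 := by rw [← c6, he]
  rw [c7]
  exact inv_mem (pow_mem (Subgroup.mem_zpowers y) 3)

lemma aux_nf {P : Type*} [Group P] {x y : P} (hx : x ^ 3 = 1) (hy : y ^ 3 = 1)
    (hxy : (x * y) ^ 2 = 1) (hgen : Subgroup.closure {x, y} = ⊤) (g : P) :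
    (∃ i : ℤ, g = y ^ i) ∨ ∃ i j : ℤ, g = y ^ i * (x * y) * y ^ j := by
  set e := x * y with he
  have hee : e * e = 1 := by rw [← sq, hxy]
  have hei : e⁻¹ = e := inv_eq_of_mul_eq_one_left hee
  have hxe : x = e * y ^ (-1 : ℤ) := by rw [he]; group
  have T : e * y ^ (-1 : ℤ) * (e * y ^ (-1 : ℤ)) * (e * y ^ (-1 : ℤ)) = 1 := by
    rw [← hxe, ← hx, pow_succ, sq]
  have c := aux_conj hee T
  have c' : e * y ^ (1 : ℤ) * e = y ^ (-1 : ℤ) * e * y ^ (-1 : ℤ) := by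
    have := congrArg (·⁻¹) c
    simpa [mul_inv_rev, hei, mul_assoc] using this
  have hym : ∀ i : ℤ, y ^ i = 1 ∨ y ^ i = y ^ (1 : ℤ) ∨ y ^ i = y ^ (-1 : ℤ) := by
    intro i
    have hy' : y ^ (3 : ℤ) = 1 := by exact_mod_cast hy
    obtain ⟨k, hk⟩ : ∃ k : ℤ, i = 3 * k ∨ i = 3 * k + 1 ∨ i = 3 * k + (-1) :=
      ⟨(i + 1) / 3, by omega⟩
    rcases hk with rfl | rfl | rfl
    · left; rw [zpow_mul, hy', one_zpow]
    · right; left; rw [zpow_add, zpow_mul, hy', one_zpow, one_mul]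
    · right; right; rw [zpow_add, zpow_mul, hy', one_zpow, one_mul]
  have stepy : ∀ (g : P) (k : ℤ), ((∃ i : ℤ, g = y ^ i) ∨ ∃ i j : ℤ, g = y ^ i * e * y ^ j) →
      ((∃ i : ℤ, g * y ^ k = y ^ i) ∨ ∃ i j : ℤ, g * y ^ k = y ^ i * e * y ^ j) := by
    rintro g k (⟨i, rfl⟩ | ⟨i, j, rfl⟩)
    · exact Or.inl ⟨i + k, by group⟩
    · exact Or.inr ⟨i, j + k, by group⟩
  have stepe : ∀ g : P, ((∃ i : ℤ, g = y ^ i) ∨ ∃ i j : ℤ, g = y ^ i * e * y ^ j) →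
      ((∃ i : ℤ, g * e = y ^ i) ∨ ∃ i j : ℤ, g * e = y ^ i * e * y ^ j) := by
    rintro g (⟨i, rfl⟩ | ⟨i, j, rfl⟩)
    · exact Or.inr ⟨i, 0, by group⟩
    · rcases hym j with h | h | h <;> rw [h]
      · left; exact ⟨i, by rw [mul_one, mul_assoc, hee, mul_one]⟩
      · right; exact ⟨i - 1, -1, by
          rw [mul_assoc, mul_assoc, ← mul_assoc e, c']; group⟩
      · right; exact ⟨i + 1, 1, by
          rw [mul_assoc, mul_assoc, ← mul_assoc e, c]; group⟩
  have hg : g ∈ Subgroup.closure {x, y} := by rw [hgen]; trivial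
  induction hg using Subgroup.closure_induction_right with
  | one => exact Or.inl ⟨0, by simp⟩
  | mul_right g _ z hz ih =>
    rcases hz with rfl | rfl
    · rw [hxe, ← mul_assoc]; exact stepy _ _ (stepe _ ih)
    · have := stepy _ 1 ih
      rwa [zpow_one] at this
  | mul_inv_cancel g _ z hz ih =>
    rcases hz with rfl | rfl
    · have : z⁻¹ = y ^ (1 : ℤ) * e := by rw [hxe]; simp [mul_inv_rev, hei]
      rw [this, ← mul_assoc]; exact stepe _ (stepy _ _ ih)
    · have := stepy _ (-1) ih
      rwa [zpow_neg, zpow_one] at this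

end aux

/-- A simple reflexive regular map, not the tetrahedron, of density exceeding 1/2
satisfies the relation `[x,y]³ = 1`. -/
theorem commutator_cubed_eq_one
    (G : Type*) [Group G] [Finite G] (x y : G)
    (hgen : Subgroup.closure {x, y} = ⊤) (hxy : (x * y) ^ 2 = 1)
    (hrefl : IsReflexive x y) (hsimple : IsSimple x y)
    (hnt : ¬ IsTet G x y)
    (hden : 2 * orderOf y ^ 2 > Nat.card G) :
    (x * y * x⁻¹ * y⁻¹) ^ 3 = 1 := by
  obtain ⟨e, hedef⟩ : ∃ e, e = x * y := ⟨_, rfl⟩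
  have he : e * e = 1 := by rw [hedef, ← sq, hxy]
  have hei : e⁻¹ = e := inv_eq_of_mul_eq_one_left he
  have hxe : x = e * y ^ (-1 : ℤ) := by rw [hedef]; group
  have hne : e ∉ Subgroup.zpowers y := by
    intro h
    apply hsimple.1 1
    rw [QuotientGroup.eq]
    simpa [← hedef] using h
  have hs : ∀ z ∈ Subgroup.zpowers y, e * z * e ∈ Subgroup.zpowers y → z = 1 := by
    intro z hz hz'
    have h1 := hsimple.2 1 z (by
      have e1 : (QuotientGroup.mk 1 : Vertex y) = QuotientGroup.mk z := by
        rw [QuotientGroup.eq]; simpa using hz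
      have e2 : (QuotientGroup.mk (1 * x * y) : Vertex y) = QuotientGroup.mk (z * x * y) := by
        rw [QuotientGroup.eq, one_mul, mul_assoc z, ← hedef, hei, ← mul_assoc]; exact hz'
      rw [e1, e2])
    rw [QuotientGroup.eq, inv_one, one_mul, ← hedef] at h1
    obtain ⟨k, hk⟩ := h1
    simp only at hk
    rcases Int.even_or_odd' k with ⟨c, rfl | rfl⟩
    · rw [← hk, zpow_mul, zpow_two, he, one_zpow]
    · rw [zpow_add, zpow_mul, zpow_two, he, one_zpow, one_mul, zpow_one] at hk
      exact (hne (hk ▸ hz)).elim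
  obtain ⟨σ, s1, s2⟩ := hrefl
  let τ : G ≃* G := σ.trans (MulAut.conj y⁻¹)
  have t2 : τ y = y⁻¹ := by simp [τ, s2]
  have t1 : τ e = e := by
    have : τ e = y⁻¹ * (x⁻¹ * y⁻¹) * y := by simp [τ, hedef, s1, s2]
    rw [this, ← hei, hedef]; group
  have T1 : e * y ^ (1 : ℤ) * (e * y ^ (1 : ℤ)) * (e * y ^ (1 : ℤ)) = 1 := by
    rcases aux_T he hs hden τ t1 t2 1 with h | ⟨K, _, _, h3, h4⟩
    · exact h
    · exact (h4 (by simpa using h3)).elim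
  have c1 := aux_conj he T1
  rcases aux_T he hs hden τ t1 t2 2 with T2 | ⟨K, h1, h2, h3, h4⟩
  · exfalso
    apply hnt
    have hy3 := aux_y3 he hs T1 T2
    have hx3 : x ^ 3 = 1 := by
      have := congrArg τ T1
      simp only [map_mul, map_zpow, map_one, t1, t2, zpow_one] at this
      rw [hxe, pow_succ, sq, zpow_neg, zpow_one]
      exact this
    have hr : ∀ r ∈ tetRels, FreeGroup.lift ![x, y] r = 1 := by
      rintro r (rfl | rfl | rfl) <;> simp [hx3, hy3, hxy]
    let φ := PresentedGroup.toGroup hr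
    have f0 : φ (PresentedGroup.of 0) = x := by simp [φ]
    have f1 : φ (PresentedGroup.of 1) = y := by simp [φ]
    have r0 : (PresentedGroup.of 0 : PresentedGroup tetRels) ^ 3 = 1 :=
      PresentedGroup.one_of_mem (rels := tetRels) (x := FreeGroup.of 0 ^ 3) (by simp [tetRels])
    have r1 : (PresentedGroup.of 1 : PresentedGroup tetRels) ^ 3 = 1 :=
      PresentedGroup.one_of_mem (rels := tetRels) (x := FreeGroup.of 1 ^ 3) (by simp [tetRels])
    have r2 : ((PresentedGroup.of 0 : PresentedGroup tetRels) * PresentedGroup.of 1) ^ 2 = 1 :=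
      PresentedGroup.one_of_mem (rels := tetRels) (x := (FreeGroup.of 0 * FreeGroup.of 1) ^ 2)
        (by simp [tetRels])
    have rg : Subgroup.closure
        {(PresentedGroup.of 0 : PresentedGroup tetRels), PresentedGroup.of 1} = ⊤ := by
      rw [← PresentedGroup.closure_range_of]
      congr 1
      ext z
      simp [Fin.exists_fin_two, eq_comm]
    have hinj : Function.Injective φ := by
      rw [injective_iff_map_eq_one]
      intro g hg
      have hcube : ∀ i : ℤ, y ^ i = 1 →
          (PresentedGroup.of 1 : PresentedGroup tetRels) ^ i = 1 := by
        intro i hi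
        have hy1 : y ≠ 1 := by
          rintro rfl
          simp only [orderOf_one] at hden
          have hc : Nat.card G ≤ 1 := by omega
          have := (Finite.card_le_one_iff_subsingleton (α := G)).1 hc
          exact hne (by rw [Subsingleton.elim e 1]; exact one_mem _)
        have ho : orderOf y = 3 := orderOf_eq_prime hy3 hy1
        have hd := orderOf_dvd_iff_zpow_eq_one.2 hi
        rw [ho] at hd
        obtain ⟨k, rfl⟩ := hd
        rw [zpow_mul]
        have : (PresentedGroup.of 1 : PresentedGroup tetRels) ^ ((3 : ℕ) : ℤ) = 1 := by
          rw [zpow_natCast]; exact r1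
        rw [this, one_zpow]
      rcases aux_nf r0 r1 r2 rg g with ⟨i, rfl⟩ | ⟨i, j, rfl⟩
      · rw [map_zpow, f1] at hg
        exact hcube i hg
      · rw [map_mul, map_mul, map_mul, map_zpow, map_zpow, f0, f1, ← hedef] at hg
        refine (hne ⟨-i - j, ?_⟩).elim
        simp only
        have : e = (y ^ i)⁻¹ * (y ^ i * e * y ^ j) * (y ^ j)⁻¹ := by group
        rw [this, hg]; group
    have hsurj : Function.Surjective φ := by
      rw [← MonoidHom.range_eq_top, eq_top_iff, ← hgen, Subgroup.closure_le]
      rintro z (rfl | rfl)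
      · exact ⟨_, f0⟩
      · exact ⟨_, f1⟩
    exact ⟨MulEquiv.ofBijective φ ⟨hinj, hsurj⟩, f0, f1⟩
  · rcases aux_T he hs hden τ t1 t2 (-3) with T3 | ⟨K', h1', h2', h3', h4'⟩
    · have hcomm : x * y * x⁻¹ * y⁻¹ = y⁻¹ * (e * y ^ (-3 : ℤ)) * y⁻¹⁻¹ := by
        calc x * y * x⁻¹ * y⁻¹ = e * (y ^ (1 : ℤ) * e⁻¹) * y⁻¹ := by
              rw [hedef]; group
          _ = (e * y ^ (1 : ℤ) * e) * y⁻¹ := by rw [hei]; simp only [mul_assoc]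
          _ = _ := by rw [c1]; group
      rw [hcomm, conj_pow, pow_succ, sq, T3]; group
    · refine (aux_count he hs hden K K' h1 h2 (by exact_mod_cast h3) h4 h1' h2' ?_ h4').elim
      rw [← inv_mem_iff] at h3'
      simp only [mul_inv_rev, hei, zpow_neg, inv_inv, ← mul_assoc] at h3'
      exact_mod_cast h3'


end RegularMap
end

section
/- For every integer n ≥ 1, the Fermat group G_n is finite of order 6n²; moreover the image of the generator X in G_n has order 3 and the image of the generator Y in G_n has order 2n. -/
namespace RegularMap

variable {G : Type*} [Group G]

section FermatAux

variable {P : Type*} [Group P]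

theorem fa_inv {x : P} (hx : x ^ 3 = 1) : x⁻¹ = x * x := by
  rw [inv_eq_iff_mul_eq_one, ← hx, pow_succ, pow_two, mul_assoc]

theorem fa_yxy {x y : P} (hxy : (x * y) ^ 2 = 1) : y * x * y = x⁻¹ := by
  rw [eq_inv_iff_mul_eq_one, ← mul_eq_one_comm, ← hxy]
  simp [pow_two, mul_assoc]

theorem fa_xyx {x y : P} (hxy : (x * y) ^ 2 = 1) : x * y * x = y⁻¹ := by
  rw [eq_inv_iff_mul_eq_one, ← hxy]
  simp [pow_two, mul_assoc]

/-- the three conjugates multiply to one -/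
theorem fa_abc {x y : P} (hx : x ^ 3 = 1) (hxy : (x * y) ^ 2 = 1) :
    (x * (y * y) * x⁻¹) * (x⁻¹ * (y * y) * x) = (y * y)⁻¹ := by
  have h1 := fa_yxy hxy
  have h2 := fa_xyx hxy
  have h3 : x⁻¹ * x⁻¹ = x := by rw [fa_inv hx]; calc
      x * x * (x * x) = x ^ 3 * x := by simp only [pow_succ, pow_zero, one_mul, mul_assoc]
      _ = x := by rw [hx, one_mul]
  calc (x * (y * y) * x⁻¹) * (x⁻¹ * (y * y) * x)
      = x * y * y * (x⁻¹ * x⁻¹) * y * y * x := by group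
    _ = x * y * (y * x * y) * y * x := by rw [h3]; group
    _ = x * y * x⁻¹ * y * x := by rw [h1]
    _ = (x * y * x) * (x⁻¹ * x⁻¹) * (y * x * y) * y⁻¹ := by group
    _ = (y * y)⁻¹ := by rw [h1, h2, h3]; group

theorem fa_acb {x y : P} (hx : x ^ 3 = 1) (hxy : (x * y) ^ 2 = 1)
    (hc : (x * y * x⁻¹ * y⁻¹) ^ 3 = 1) :
    (x⁻¹ * (y * y) * x) * (x * (y * y) * x⁻¹) = (y * y)⁻¹ := by
  have h2 := fa_xyx hxy
  have h3 : x⁻¹ * x⁻¹ = x := by rw [fa_inv hx]; calc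
      x * x * (x * x) = x ^ 3 * x := by simp only [pow_succ, pow_zero, one_mul, mul_assoc]
      _ = x := by rw [hx, one_mul]
  have h4 : x * y * x⁻¹ * y⁻¹ = y⁻¹ * x * y⁻¹ := by
    calc x * y * x⁻¹ * y⁻¹ = (x * y * x) * (x⁻¹ * x⁻¹) * y⁻¹ := by group
      _ = _ := by rw [h2, h3]
  rw [h4] at hc
  have h5 : x * (y * y)⁻¹ * x * (y * y)⁻¹ * x * (y * y)⁻¹ = 1 := by
    calc x * (y * y)⁻¹ * x * (y * y)⁻¹ * x * (y * y)⁻¹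
        = y * (y⁻¹ * x * y⁻¹) ^ 3 * y⁻¹ := by simp [pow_succ, mul_assoc]
      _ = 1 := by rw [hc]; group
  have h6 : (x⁻¹ * (y * y) * x) * (x * (y * y) * x⁻¹)
     = (y * y)⁻¹ * (x * (y * y)⁻¹ * x * (y * y)⁻¹ * x * (y * y)⁻¹)⁻¹ *
       (x * x * x) := by
    have : x * x * x = 1 := by rw [← hx, pow_succ, pow_two]
    have h7 : x * x = x⁻¹ := (fa_inv hx).symm
    calc (x⁻¹ * (y * y) * x) * (x * (y * y) * x⁻¹)
        = x⁻¹ * (y * y) * (x * x) * (y * y) * x⁻¹ := by group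
      _ = x⁻¹ * (y * y) * x⁻¹ * (y * y) * x⁻¹ := by rw [h7]
      _ = _ := by rw [this]; simp [mul_assoc]
  rw [h6, h5]
  have : x * x * x = 1 := by rw [← hx, pow_succ, pow_two]
  rw [this]; group

/-- Normal form. -/
theorem fa_form {x y : P} (hx : x ^ 3 = 1) (hxy : (x * y) ^ 2 = 1)
    (hc : (x * y * x⁻¹ * y⁻¹) ^ 3 = 1) (a b : P) (ha : a = y * y)
    (hb : b = x * (y * y) * x⁻¹) :
    a * b = b * a ∧ x * a = b * x ∧ x * b = (a⁻¹ * b⁻¹) * x ∧ y * a = a * y ∧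
    y * b = (a⁻¹ * b⁻¹) * y ∧ y * x = a * b * (x * x) * y ∧ y * (x * x) = a * x * y ∧
    y * x * y = x * x ∧ y * (x * x) * y = a * b * x := by
  have h1 := fa_yxy hxy
  have h2 := fa_xyx hxy
  have h3 := fa_inv hx
  have e1 := fa_abc hx hxy
  have e2 := fa_acb hx hxy hc
  set c := x⁻¹ * (y * y) * x with hcdef
  rw [← hb, ← ha] at e1 e2
  have hcab : c = b⁻¹ * a⁻¹ := by rw [← e1]; group
  have hcba : c = a⁻¹ * b⁻¹ := by rw [← e2]; group
  have hab : a * b = b * a := by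
    have := hcab.symm.trans hcba
    rw [← mul_inv_rev, ← mul_inv_rev] at this
    exact inv_injective this
  have hxa : x * a = b * x := by rw [ha, hb]; group
  have hxb : x * b = c * x := by
    rw [hb, hcdef]
    calc x * (x * (y * y) * x⁻¹) = (x * x) * (y * y) * x⁻¹ := by group
      _ = x⁻¹ * (y * y) * (x * x) := by rw [← h3]
      _ = _ := by group
  have hyb : y * b = c * y := by
    calc y * b = (y * x * y) * y * x⁻¹ := by rw [hb]; group
      _ = x⁻¹ * y * (y * x * y) := by rw [h1]
      _ = _ := by rw [hcdef]; group
  have hcx : x⁻¹ * a = c * x⁻¹ := by rw [ha, hcdef]; group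
  have hci : a * b = c⁻¹ := by rw [hcab]; group
  have hyxx : y * (x * x) = a * x * y := by
    calc y * (x * x) = y * (y * x * y) := by rw [h1, h3]
      _ = _ := by rw [ha]; group
  refine ⟨hab, hxa, hcba ▸ hxb, by rw [ha]; group, hcba ▸ hyb, ?_, hyxx, by rw [h1, h3], ?_⟩
  · rw [hci, ← h3]
    calc y * x = (y * x * y) * y⁻¹ := by group
      _ = x⁻¹ * a⁻¹ * y := by rw [h1, ha]; group
      _ = _ := by
        congr 1
        rw [eq_inv_mul_iff_mul_eq, ← mul_assoc, ← hcx]; group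
  · rw [hyxx]
    calc a * x * y * y = a * (x * a) := by rw [ha]; group
      _ = _ := by rw [hxa]; group

def faW (a b x y : P) (i j : ℤ) (k : Fin 3) (e : Fin 2) : P :=
  a ^ i * b ^ j * (x ^ (k : ℕ) * y ^ (e : ℕ))

theorem fa_left_x {x y : P} (hx : x ^ 3 = 1) (hxy : (x * y) ^ 2 = 1)
    (hc : (x * y * x⁻¹ * y⁻¹) ^ 3 = 1) (a b : P) (ha : a = y * y)
    (hb : b = x * (y * y) * x⁻¹) (i j : ℤ) (k : Fin 3) (e : Fin 2) :
    ∃ i' j' k' e', x * faW a b x y i j k e = faW a b x y i' j' k' e' := by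
  obtain ⟨hab, hxa, hxb, -⟩ := fa_form hx hxy hc a b ha hb
  have h1 : x * a ^ i = b ^ i * x := (SemiconjBy.zpow_right (show SemiconjBy x a b from hxa) i).eq
  have h2 : x * b ^ j = (a⁻¹ * b⁻¹) ^ j * x :=
    (SemiconjBy.zpow_right (show SemiconjBy x b _ from hxb) j).eq
  have hcm : Commute a b := hab
  have h3 : b ^ i * (a⁻¹ * b⁻¹) ^ j = a ^ (-j) * b ^ (i - j) := by
    rw [(hcm.inv_inv).mul_zpow, ← mul_assoc, ((hcm.inv_left).symm.zpow_zpow i j).eq, mul_assoc]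
    simp [zpow_sub]
  have key : x * faW a b x y i j k e = a ^ (-j) * b ^ (i - j) * (x * x ^ (k : ℕ) * y ^ (e : ℕ)) := by
    unfold faW
    rw [← h3]
    calc _ = (x * a ^ i) * b ^ j * (x ^ (k : ℕ) * y ^ (e : ℕ)) := by simp only [mul_assoc]
      _ = b ^ i * (x * b ^ j) * (x ^ (k : ℕ) * y ^ (e : ℕ)) := by rw [h1]; simp only [mul_assoc]
      _ = _ := by rw [h2]; simp only [mul_assoc]
  refine ⟨-j, i - j, k + 1, e, ?_⟩
  rw [key, faW]
  congr 2
  fin_cases k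
  · simp
  · simp [pow_two]
  · simp [← pow_succ', hx]

theorem fa_left_y {x y : P} (hx : x ^ 3 = 1) (hxy : (x * y) ^ 2 = 1)
    (hc : (x * y * x⁻¹ * y⁻¹) ^ 3 = 1) (a b : P) (ha : a = y * y)
    (hb : b = x * (y * y) * x⁻¹) (i j : ℤ) (k : Fin 3) (e : Fin 2) :
    ∃ i' j' k' e', y * faW a b x y i j k e = faW a b x y i' j' k' e' := by
  obtain ⟨hab, -, -, hya, hyb, r1, r2, r3, r4⟩ := fa_form hx hxy hc a b ha hb
  have h1 : y * a ^ i = a ^ i * y := (SemiconjBy.zpow_right (show SemiconjBy y a a from hya) i).eq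
  have h2 : y * b ^ j = (a⁻¹ * b⁻¹) ^ j * y :=
    (SemiconjBy.zpow_right (show SemiconjBy y b _ from hyb) j).eq
  have hcm : Commute a b := hab
  have h3 : a ^ i * (a⁻¹ * b⁻¹) ^ j = a ^ (i - j) * b ^ (- j) := by
    rw [(hcm.inv_inv).mul_zpow, ← mul_assoc]
    simp [zpow_sub]
  have key : y * faW a b x y i j k e = a ^ (i-j) * b ^ (-j) * (y * x ^ (k : ℕ) * y ^ (e : ℕ)) := by
    unfold faW
    rw [← h3]
    calc _ = (y * a ^ i) * b ^ j * (x ^ (k : ℕ) * y ^ (e : ℕ)) := by simp only [mul_assoc]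
      _ = a ^ i * (y * b ^ j) * (x ^ (k : ℕ) * y ^ (e : ℕ)) := by rw [h1]; simp only [mul_assoc]
      _ = _ := by rw [h2]; simp only [mul_assoc]
  have s : ∀ (u v : ℤ) (r : P), a ^ (i-j) * b ^ (-j) * (a ^ u * b ^ v * r) =
      a ^ (i - j + u) * b ^ (-j + v) * r := by
    intro u v r
    rw [zpow_add, zpow_add]
    have := (hcm.zpow_zpow u (-j)).eq
    calc _ = a ^ (i-j) * (b ^ (-j) * a ^ u) * b ^ v * r := by simp only [mul_assoc]
      _ = _ := by rw [← this]; simp only [mul_assoc]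
  have fin : ∀ (u v : ℤ) (k' : Fin 3) (e' : Fin 2),
      y * x ^ (k : ℕ) * y ^ (e : ℕ) = a ^ u * b ^ v * (x ^ (k' : ℕ) * y ^ (e' : ℕ)) →
      ∃ i' j' k' e', y * faW a b x y i j k e = faW a b x y i' j' k' e' := by
    intro u v k' e' h
    exact ⟨_, _, k', e', by rw [key, h, s]; rfl⟩
  fin_cases k <;> fin_cases e
  · exact fin 0 0 0 1 (by simp)
  · exact fin 1 0 0 0 (by simp [ha])
  · exact fin 1 1 2 1 (by simpa [pow_two, mul_assoc] using r1)
  · exact fin 0 0 2 0 (by simpa [pow_two, mul_assoc] using r3)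
  · exact fin 1 0 1 1 (by simpa [pow_two, mul_assoc] using r2)
  · exact fin 1 1 1 0 (by simpa [pow_two, mul_assoc] using r4)

/-- The set on which the model acts. -/
abbrev FaS (n : ℕ) : Type := ZMod n × ZMod n × Fin 3 × Fin 2

def faX (n : ℕ) : Equiv.Perm (FaS n) where
  toFun s := (-s.2.1, s.1 - s.2.1, s.2.2.1 + 1, s.2.2.2)
  invFun s := (s.2.1 - s.1, - s.1, s.2.2.1 - 1, s.2.2.2)
  left_inv := by rintro ⟨i, j, k, e⟩; simp
  right_inv := by rintro ⟨i, j, k, e⟩; simp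

def faU : Fin 3 → Fin 2 → ℤ
  | 0, 0 => 0
  | 1, 0 => 1
  | 2, 0 => 1
  | 0, 1 => 1
  | 1, 1 => 0
  | 2, 1 => 1

def faV : Fin 3 → Fin 2 → ℤ
  | 0, 0 => 0
  | 1, 0 => 1
  | 2, 0 => 0
  | 0, 1 => 0
  | 1, 1 => 0
  | 2, 1 => 1

def faYf (n : ℕ) (s : FaS n) : FaS n :=
  (s.1 - s.2.1 + faU s.2.2.1 s.2.2.2, - s.2.1 + faV s.2.2.1 s.2.2.2, -s.2.2.1, s.2.2.2 + 1)

theorem faYf_sq (n : ℕ) (s : FaS n) : faYf n (faYf n s) = (s.1 + 1, s.2) := by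
  obtain ⟨i, j, k, e⟩ := s
  have h1 : ((faU (-k) (e + 1) + faU k e - faV k e : ℤ) : ZMod n) = (1 : ℤ) := by
    congr 1; clear * -; revert k e; decide
  have h2 : faV (-k) (e + 1) = faV k e := by clear * -; revert k e; decide
  have h3 : e + 1 + 1 = e := by clear * -; revert e; decide
  push_cast at h1
  simp only [faYf, h2, h3, neg_neg, Prod.mk.injEq, and_true]
  constructor
  · rw [← h1]; ring
  · ring

def faY (n : ℕ) : Equiv.Perm (FaS n) where
  toFun := faYf n
  invFun s := faYf n (s.1 - 1, s.2)
  left_inv s := by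
    have h := faYf_sq n (s.1 - 1, s.2)
    have : faYf n (s.1 - 1, s.2) = ((faYf n s).1 - 1, (faYf n s).2) := by
      simp [faYf]; ring
    change faYf n ((faYf n s).1 - 1, (faYf n s).2) = s
    rw [← this, h]; simp
  right_inv s := by rw [faYf_sq]; simp

theorem faX_apply (n : ℕ) (i j : ZMod n) (k e) :
  faX n (i, j, k, e) = (-j, i - j, k + 1, e) := rfl

theorem faY_apply (n : ℕ) (i j : ZMod n) (k e) :
  faY n (i, j, k, e) = (i - j + faU k e, -j + faV k e, -k, e + 1) := rfl

theorem faX_cube (n : ℕ) : faX n ^ 3 = 1 := by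
  ext1 ⟨i, j, k, e⟩
  have h3 : k + 1 + 1 + 1 = k := by clear * -; revert k; decide
  simp only [pow_succ, pow_zero, one_mul, Equiv.Perm.mul_apply, faX_apply, h3]
  simp only [Equiv.Perm.one_apply, Prod.mk.injEq, and_true]
  constructor <;> ring

theorem faY_sq (n : ℕ) (s) : (faY n ^ 2) s = (s.1 + 1, s.2) := by
  rw [pow_two]; exact faYf_sq n s

theorem faY_pow (n m : ℕ) (s) : (faY n ^ (2 * m)) s = (s.1 + m, s.2) := by
  rw [pow_mul]
  induction m with
  | zero => simp
  | succ m ih => rw [pow_succ', Equiv.Perm.mul_apply, ih, faY_sq]; simp [add_assoc]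

theorem faXY (n : ℕ) : (faX n * faY n) ^ 2 = 1 := by
  ext1 ⟨i, j, k, e⟩
  have h1 : ((faU k e - faV k e - faV (-k + 1) (e + 1) : ℤ) : ZMod n) = (0 : ℤ) := by
    congr 1; clear * -; revert k e; decide
  have h2 : ((-faV k e + faU (-k + 1) (e + 1) - faV (-k + 1) (e + 1) : ℤ) : ZMod n)
      = (0 : ℤ) := by
    congr 1; clear * -; revert k e; decide
  have h3 : e + 1 + 1 = e := by clear * -; revert e; decide
  have h4 : -(-k + 1) + 1 = k := by clear * -; revert k; decide
  push_cast at h1 h2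
  simp only [pow_two, Equiv.Perm.mul_apply, faX_apply, faY_apply, h3, h4, Equiv.Perm.one_apply,
    Prod.mk.injEq, and_true]
  constructor
  · linear_combination h1
  · linear_combination h2

theorem faC (n : ℕ) : (faX n * faY n * (faX n)⁻¹ * (faY n)⁻¹) ^ 3 = 1 := by
  have hx := faX_cube n
  have hxy := faXY n
  have h2 := fa_xyx hxy
  have h3 : (faX n)⁻¹ * (faX n)⁻¹ = faX n := by rw [fa_inv hx]; calc
      faX n * faX n * (faX n * faX n) = faX n ^ 3 * faX n := by
        simp only [pow_succ, pow_zero, one_mul, mul_assoc]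
      _ = faX n := by rw [hx, one_mul]
  have h4 : faX n * faY n * (faX n)⁻¹ * (faY n)⁻¹ = (faY n)⁻¹ * faX n * (faY n)⁻¹ := by
    calc _ = (faX n * faY n * faX n) * ((faX n)⁻¹ * (faX n)⁻¹) * (faY n)⁻¹ := by group
      _ = _ := by rw [h2, h3]
  have h5 : (faY n ^ 2 * (faX n)⁻¹) ^ 3 = 1 := by
    rw [fa_inv hx]
    ext1 ⟨i, j, k, e⟩
    rw [pow_succ, pow_two]
    have h3 : k + 1 + 1 + 1 + 1 + 1 + 1 = k := by clear * -; revert k; decide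
    simp only [Equiv.Perm.mul_apply, faX_apply, faY_sq, h3, Equiv.Perm.one_apply,
      Prod.mk.injEq, and_true]
    constructor <;> ring
  have h6 : ((faY n)⁻¹ * faX n * (faY n)⁻¹) ^ 3 =
     (faY n)⁻¹ * ((faY n ^ 2 * (faX n)⁻¹) ^ 3)⁻¹ * faY n := by
    simp [pow_succ, mul_assoc]
  rw [h4, h6, h5]; simp

theorem fa_cond (n : ℕ) : ∀ r ∈ fermatRels n, FreeGroup.lift ![faX n, faY n] r = 1 := by
  intro r hr
  simp only [fermatRels, Set.mem_insert_iff, Set.mem_singleton_iff] at hr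
  rcases hr with rfl | rfl | rfl | rfl
  · simpa using faX_cube n
  · ext1 s
    simp [faY_pow]
  · simpa using faXY n
  · simpa using faC n

def faHom (n : ℕ) : PresentedGroup (fermatRels n) →* Equiv.Perm (FaS n) :=
  PresentedGroup.toGroup (fa_cond n)

theorem faHom_x (n : ℕ) : faHom n (PresentedGroup.of 0) = faX n := by simp [faHom]
theorem faHom_y (n : ℕ) : faHom n (PresentedGroup.of 1) = faY n := by simp [faHom]

theorem fa_a_zpow (n : ℕ) (i : ℤ) (s) : ((faY n * faY n) ^ i) s = (s.1 + i, s.2) := by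
  rw [← pow_two]
  have nat : ∀ (m : ℕ) s, ((faY n ^ 2) ^ m) s = (s.1 + m, s.2) := fun m s => by
    rw [← pow_mul, faY_pow]
  obtain ⟨m, rfl | rfl⟩ := i.eq_nat_or_neg
  · simp [nat]
  · rw [zpow_neg, Equiv.Perm.inv_eq_iff_eq, zpow_natCast, nat]; simp

theorem fa_b_zpow (n : ℕ) (i : ℤ) (s) :
    ((faX n * (faY n * faY n) * (faX n)⁻¹) ^ i) s = (s.1, s.2.1 + i, s.2.2) := by
  rw [conj_zpow, Equiv.Perm.mul_apply, Equiv.Perm.mul_apply, fa_a_zpow]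
  obtain ⟨t, rfl⟩ := (faX n).surjective s
  obtain ⟨i, j, k, e⟩ := t
  have h : (faX n)⁻¹ ((faX n) (i, j, k, e)) = (i, j, k, e) := (faX n).symm_apply_apply _
  rw [h, faX_apply, faX_apply]
  simp only [Prod.mk.injEq, and_true, true_and]; ring

theorem fa_base (n : ℕ) (i j : ℤ) (k : Fin 3) (e : Fin 2) :
    faW (faY n * faY n) (faX n * (faY n * faY n) * (faX n)⁻¹) (faX n) (faY n) i j k e
      (0, 0, 0, 0) = (↑i, ↑j, k, e) := by
  unfold faW
  simp only [Equiv.Perm.mul_apply, fa_a_zpow, fa_b_zpow]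
  fin_cases k <;> fin_cases e <;> simp [pow_two, faX_apply, faY_apply, faU, faV]

end FermatAux

/-- The Fermat group `G_n` is finite of order `6n²`, with `X` of order 3 and `Y` of
order `2n`. -/
theorem fermat_group_card_and_orders (n : ℕ) (hn : 1 ≤ n) :
    Finite (PresentedGroup (fermatRels n)) ∧
    Nat.card (PresentedGroup (fermatRels n)) = 6 * n ^ 2 ∧
    orderOf (PresentedGroup.of (rels := fermatRels n) 0) = 3 ∧
    orderOf (PresentedGroup.of (rels := fermatRels n) 1) = 2 * n := by
  have : NeZero n := ⟨by omega⟩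
  set x := PresentedGroup.of (rels := fermatRels n) 0 with hxd
  set y := PresentedGroup.of (rels := fermatRels n) 1 with hyd
  have hx : x ^ 3 = 1 :=
    PresentedGroup.one_of_mem (rels := fermatRels n) (x := FreeGroup.of 0 ^ 3) (by simp [fermatRels])
  have hy : y ^ (2 * n) = 1 :=
    PresentedGroup.one_of_mem (rels := fermatRels n) (x := FreeGroup.of 1 ^ (2 * n))
      (by simp [fermatRels])
  have hxy : (x * y) ^ 2 = 1 :=
    PresentedGroup.one_of_mem (rels := fermatRels n)
      (x := (FreeGroup.of 0 * FreeGroup.of 1) ^ 2) (by simp [fermatRels])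
  have hc : (x * y * x⁻¹ * y⁻¹) ^ 3 = 1 :=
    PresentedGroup.one_of_mem (rels := fermatRels n)
      (x := (FreeGroup.of 0 * FreeGroup.of 1 * (FreeGroup.of 0)⁻¹ * (FreeGroup.of 1)⁻¹) ^ 3)
      (by simp [fermatRels])
  have fx : faHom n x = faX n := faHom_x n
  have fy : faHom n y = faY n := faHom_y n
  obtain ⟨a, ha⟩ : ∃ a, a = y * y := ⟨_, rfl⟩
  obtain ⟨b, hb⟩ : ∃ b, b = x * (y * y) * x⁻¹ := ⟨_, rfl⟩
  have han : a ^ n = 1 := by rw [ha, ← pow_two, ← pow_mul, hy]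
  have hbn : b ^ n = 1 := by rw [hb, conj_pow, ← ha, han]; group
  have form : ∀ p : PresentedGroup (fermatRels n), ∃ i j k e, p = faW a b x y i j k e := by
    have hfin : ∀ (g : PresentedGroup (fermatRels n)) (m : ℕ), 
        (∀ p, (∃ i j k e, p = faW a b x y i j k e) → ∃ i j k e, g * p = faW a b x y i j k e) →
        ∀ p, (∃ i j k e, p = faW a b x y i j k e) → ∃ i j k e, g ^ m * p = faW a b x y i j k e := by
      intro g m hg
      induction m with
      | zero => intro p hp; simpa using hp
      | succ m ih =>
        intro p hp
        rw [pow_succ', mul_assoc]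
        exact hg _ (ih p hp)
    have hX : ∀ p, (∃ i j k e, p = faW a b x y i j k e) → ∃ i j k e, x * p = faW a b x y i j k e := by
      rintro _ ⟨i, j, k, e, rfl⟩
      exact fa_left_x hx hxy hc a b ha hb i j k e
    have hY : ∀ p, (∃ i j k e, p = faW a b x y i j k e) → ∃ i j k e, y * p = faW a b x y i j k e := by
      rintro _ ⟨i, j, k, e, rfl⟩
      exact fa_left_y hx hxy hc a b ha hb i j k e
    have hxi : x⁻¹ = x ^ 2 := by rw [fa_inv hx, pow_two]
    have hyi : y⁻¹ = y ^ (2 * n - 1) := by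
      rw [inv_eq_iff_mul_eq_one, ← pow_succ', ← hy]; congr 1; omega
    intro p
    have hp : p ∈ Subgroup.closure (Set.range (PresentedGroup.of (rels := fermatRels n))) := by
      rw [PresentedGroup.closure_range_of]; trivial
    induction hp using Subgroup.closure_induction_left with
    | one => exact ⟨0, 0, 0, 0, by simp [faW]⟩
    | mul_left g hg p _ ih =>
      obtain ⟨t, rfl⟩ := hg
      fin_cases t
      · exact hX _ ih
      · exact hY _ ih
    | inv_mul_cancel g hg p _ ih =>
      obtain ⟨t, rfl⟩ := hg
      fin_cases t
      · change ∃ i j k e, x⁻¹ * p = _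
        rw [hxi]; exact hfin x _ hX p ih
      · change ∃ i j k e, y⁻¹ * p = _
        rw [hyi]; exact hfin y _ hY p ih
  have act : ∀ i j k e, faHom n (faW a b x y i j k e) (0, 0, 0, 0) = (↑i, ↑j, k, e) := by
    intro i j k e
    rw [← fa_base n i j k e]
    simp [faW, fx, fy, ha, hb]
  have zeq : ∀ (g : PresentedGroup (fermatRels n)), g ^ n = 1 → ∀ i j : ℤ,
      (i : ZMod n) = j → g ^ i = g ^ j := by
    intro g hg i j hij
    rw [ZMod.intCast_eq_intCast_iff] at hij
    rw [zpow_eq_zpow_iff_modEq]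
    exact hij.of_dvd (Int.natCast_dvd_natCast.mpr (orderOf_dvd_of_pow_eq_one hg))
  have bij : Function.Bijective (fun p => faHom n p (0, 0, 0, 0)) := by
    constructor
    · intro p q hpq
      obtain ⟨i, j, k, e, rfl⟩ := form p
      obtain ⟨i', j', k', e', rfl⟩ := form q
      simp only [act, Prod.mk.injEq] at hpq
      obtain ⟨h1, h2, rfl, rfl⟩ := hpq
      unfold faW
      rw [zeq a han _ _ h1, zeq b hbn _ _ h2]
    · rintro ⟨i, j, k, e⟩
      obtain ⟨i, rfl⟩ := ZMod.intCast_surjective i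
      obtain ⟨j, rfl⟩ := ZMod.intCast_surjective j
      exact ⟨_, act i j k e⟩
  let E := Equiv.ofBijective _ bij
  refine ⟨Finite.of_equiv _ E.symm, ?_, ?_, ?_⟩
  · rw [Nat.card_congr E]
    simp [Nat.card_prod]; ring
  · refine orderOf_eq_prime hx ?_
    intro h
    have := congrArg (fun f => (f (0, 0, 0, 0)).2.2.1) fx
    rw [h] at this
    simp [faX_apply] at this
  · refine Nat.dvd_antisymm (orderOf_dvd_of_pow_eq_one hy) ?_
    set m := orderOf y with hm
    have h1 : faY n ^ m = 1 := by rw [← fy, ← map_pow, pow_orderOf_eq_one, map_one]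
    have h2 := congrArg (fun f => f (0, 0, 0, 0)) h1
    rcases Nat.even_or_odd' m with ⟨l, hl | hl⟩
    · rw [hl] at h2 ⊢
      simp [faY_pow] at h2
      exact Nat.mul_dvd_mul_left 2 ((ZMod.natCast_eq_zero_iff _ _).mp h2)
    · rw [hl, pow_succ'] at h2
      simp [faY_pow, faY_apply] at h2

end RegularMap
end

section
/- For every integer n ≥ 1, there exists a group homomorphism φ from the symmetric group Sym(3) to the automorphism group of (ℤ/nℤ) × (ℤ/nℤ) such that the Fermat group G_n is isomorphic to the semidirect product ((ℤ/nℤ) × (ℤ/nℤ)) ⋊_φ Sym(3). -/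
namespace RegularMap

variable {G : Type*} [Group G]

/-- Coordinates on `Fin 3` representing a class modulo the diagonal. -/
def ext3 {n : ℕ} (v : ZMod n × ZMod n) : Fin 3 → ZMod n := ![v.1, v.2, 0]

def act3 {n : ℕ} (σ : Equiv.Perm (Fin 3)) (v : ZMod n × ZMod n) : ZMod n × ZMod n :=
  (ext3 v (σ⁻¹ 0) - ext3 v (σ⁻¹ 2), ext3 v (σ⁻¹ 1) - ext3 v (σ⁻¹ 2))

theorem ext3_act {n : ℕ} (σ : Equiv.Perm (Fin 3)) (v : ZMod n × ZMod n) (i : Fin 3) :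
    ext3 (act3 σ v) i = ext3 v (σ⁻¹ i) - ext3 v (σ⁻¹ 2) := by
  fin_cases i <;> simp [ext3, act3]

theorem act3_one {n : ℕ} (v : ZMod n × ZMod n) : act3 1 v = v := by
  simp [act3, ext3]

theorem act3_mul {n : ℕ} (σ τ : Equiv.Perm (Fin 3)) (v : ZMod n × ZMod n) :
    act3 (σ * τ) v = act3 σ (act3 τ v) := by
  conv_rhs => rw [act3]
  simp only [ext3_act]
  simp [act3]

theorem ext3_add {n : ℕ} (v w : ZMod n × ZMod n) (i : Fin 3) :
    ext3 (v + w) i = ext3 v i + ext3 w i := by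
  fin_cases i <;> simp [ext3]

theorem act3_add {n : ℕ} (σ : Equiv.Perm (Fin 3)) (v w : ZMod n × ZMod n) :
    act3 σ (v + w) = act3 σ v + act3 σ w := by
  simp only [act3, ext3_add, Prod.mk_add_mk]
  congr 1 <;> ring

def fphi (n : ℕ) : Equiv.Perm (Fin 3) →* MulAut (Multiplicative (ZMod n × ZMod n)) where
  toFun σ :=
    { toFun := fun v => Multiplicative.ofAdd (act3 σ v.toAdd)
      invFun := fun v => Multiplicative.ofAdd (act3 σ⁻¹ v.toAdd)
      left_inv := fun v => by simp [← act3_mul, act3_one]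
      right_inv := fun v => by simp [← act3_mul, act3_one]
      map_mul' := fun v w => by simp [act3_add] }
  map_one' := by ext v <;> simp [act3_one]
  map_mul' σ τ := by ext v <;> simp [act3_mul]

theorem fphi_apply (n : ℕ) (σ : Equiv.Perm (Fin 3)) (v : Multiplicative (ZMod n × ZMod n)) :
    fphi n σ v = Multiplicative.ofAdd (act3 σ v.toAdd) := rfl

set_option linter.unusedSimpArgs false

/-- Group-theoretic core. -/
theorem core {H : Type*} [Group H] (X s : H) (hX : X ^ 3 = 1) (hs : s ^ 2 = 1)
    (hc : (s * X⁻¹ * s * X) ^ 3 = 1) (g : H) (hg : g ∈ Subgroup.closure {X, s}) :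
    ∃ (i j : ℤ) (k : Fin 3) (e : Fin 2),
      g = ((X⁻¹ * s) ^ 2) ^ i * (X * (X⁻¹ * s) ^ 2 * X⁻¹) ^ j *
        (s * X⁻¹ * s * X) ^ (k : ℕ) * s ^ (e : ℕ) := by
  have s1 : s * s = 1 := by rw [← pow_two, hs]
  have s2 : ∀ g, s * (s * g) = g := fun g => by rw [← mul_assoc, s1, one_mul]
  have s3 : s⁻¹ = s := inv_eq_of_mul_eq_one_left s1
  have x1 : X * X = X⁻¹ := by
    rw [eq_inv_iff_mul_eq_one, ← pow_two, ← pow_succ, hX]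
  have x2 : ∀ g, X * (X * g) = X⁻¹ * g := fun g => by rw [← mul_assoc, x1]
  have x3 : X⁻¹ * X⁻¹ = X := by rw [← mul_inv_rev, x1, inv_inv]
  have x4 : ∀ g, X⁻¹ * (X⁻¹ * g) = X * g := fun g => by rw [← mul_assoc, x3]
  obtain ⟨a, ha⟩ : ∃ a, a = (X⁻¹ * s) ^ 2 := ⟨_, rfl⟩
  obtain ⟨b, hb⟩ : ∃ b, b = X * a * X⁻¹ := ⟨_, rfl⟩
  obtain ⟨c, hcd⟩ : ∃ c, c = s * X⁻¹ * s * X := ⟨_, rfl⟩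
  rw [← ha, ← hb, ← hcd]
  rw [← hcd] at hc
  have e1 : s * a * s⁻¹ = b := by
    simp only [hb, ha, pow_two, mul_assoc, s1, s2, s3, x1, x2, x3, x4, mul_inv_cancel_left,
      inv_mul_cancel_left, mul_one]
  have e2 : s * b * s⁻¹ = a := by rw [← e1, s3]; simp only [mul_assoc, s1, s2, mul_one]
  have e3 : X * c = (a * b)⁻¹ := by
    simp only [hcd, hb, ha, pow_two, mul_assoc, mul_inv_rev, inv_inv, s1, s2, s3, x1, x2, x3, x4,
      mul_inv_cancel_left, inv_mul_cancel_left, mul_one]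
  have e4 : c ^ 3 = b * a * (X * c) := by
    simp only [hcd, hb, ha, pow_succ, pow_zero, one_mul, mul_assoc, mul_inv_rev, inv_inv, s1, s2,
      s3, x1, x2, x3, x4, mul_inv_cancel_left, inv_mul_cancel_left, mul_one]
  have comm : a * b = b * a := by
    rw [hc, e3] at e4
    exact (mul_inv_eq_one.mp e4.symm).symm
  have hC : Commute a b := comm
  have e5 : X * a * X⁻¹ = b := hb.symm
  have e6 : X * b * X⁻¹ = (a * b)⁻¹ := by
    simp only [hb, ha, pow_two, mul_assoc, mul_inv_rev, inv_inv, s1, s2, s3, x1, x2, x3, x4,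
      mul_inv_cancel_left, inv_mul_cancel_left, mul_one]
  have c2 : X = (a * b)⁻¹ * c ^ 2 := by
    rw [← e3, mul_assoc, ← pow_succ', hc, mul_one]
  have sc : s * c = c ^ 2 * s := by
    have : c ^ 2 = c⁻¹ := by rw [eq_inv_iff_mul_eq_one, ← pow_succ, hc]
    rw [this]
    simp only [hcd, mul_assoc, mul_inv_rev, inv_inv, s1, s2, s3, x1, x2, x3, x4,
      mul_inv_cancel_left, inv_mul_cancel_left, mul_one]
  -- closure under left multiplication
  have key_c : ∀ (k : Fin 3) (e : Fin 2), ∃ (k' : Fin 3) (e' : Fin 2),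
      c ^ 2 * (c ^ (k : ℕ) * s ^ (e : ℕ)) = c ^ (k' : ℕ) * s ^ (e' : ℕ) := by
    intro k e
    refine ⟨k + 2, e, ?_⟩
    rw [← mul_assoc, ← pow_add]
    congr 1
    fin_cases k
    · simp
    · simp [hc]
    · simp [pow_succ c 3, hc]
  have key_s : ∀ (k : Fin 3) (e : Fin 2), ∃ (k' : Fin 3) (e' : Fin 2),
      s * (c ^ (k : ℕ) * s ^ (e : ℕ)) = c ^ (k' : ℕ) * s ^ (e' : ℕ) := by
    intro k e
    refine ⟨2 * k, e + 1, ?_⟩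
    have h1 : s * c ^ (k : ℕ) = c ^ ((2 * k : Fin 3) : ℕ) * s := by
      fin_cases k
      · simp
      · simpa using sc
      · have : s * c ^ 2 = c * s := by
          rw [pow_two, ← mul_assoc, sc, mul_assoc, sc, ← mul_assoc, ← pow_add, pow_succ c 3, hc,
            one_mul]
        simpa using this
    have h2 : s * s ^ (e : ℕ) = s ^ ((e + 1 : Fin 2) : ℕ) := by
      fin_cases e
      · simp
      · simp [s1]
    rw [← mul_assoc, h1, mul_assoc, h2]
  have conjX : ∀ i j : ℤ, X * (a ^ i * b ^ j) = b ^ i * ((a * b)⁻¹) ^ j * X := by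
    intro i j
    have h1 : b ^ i = X * a ^ i * X⁻¹ := by rw [← e5, conj_zpow]
    have h2 : ((a * b)⁻¹) ^ j = X * b ^ j * X⁻¹ := by rw [← e6, conj_zpow]
    rw [h1, h2]
    simp only [mul_assoc, inv_mul_cancel_left, inv_mul_cancel, mul_one]
  have conjS : ∀ i j : ℤ, s * (a ^ i * b ^ j) = b ^ i * a ^ j * s := by
    intro i j
    have h1 : b ^ i = s * a ^ i * s⁻¹ := by rw [← e1, conj_zpow]
    have h2 : a ^ j = s * b ^ j * s⁻¹ := by rw [← e2, conj_zpow]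
    rw [h1, h2]
    simp [mul_assoc]
  have hmulX : ∀ g, (∃ (i j : ℤ) (k : Fin 3) (e : Fin 2),
      g = a ^ i * b ^ j * c ^ (k : ℕ) * s ^ (e : ℕ)) → ∃ (i j : ℤ) (k : Fin 3) (e : Fin 2),
      X * g = a ^ i * b ^ j * c ^ (k : ℕ) * s ^ (e : ℕ) := by
    rintro g ⟨i, j, k, e, rfl⟩
    obtain ⟨k', e', h⟩ := key_c k e
    refine ⟨-j - 1, i - j - 1, k', e', ?_⟩
    have h3 : b ^ i * ((a * b)⁻¹) ^ j * (a * b)⁻¹ = a ^ (-j - 1) * b ^ (i - j - 1) := by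
      have : ((a * b)⁻¹) ^ j * (a * b)⁻¹ = a ^ (-j-1) * b ^ (-j-1) := by
        rw [← zpow_add_one, inv_zpow', hC.mul_zpow]
        congr 2 <;> ring
      rw [mul_assoc, this, ← mul_assoc, ((hC.zpow_zpow (-j-1) i).eq).symm, mul_assoc, ← zpow_add]
      congr 2; ring
    calc X * (a ^ i * b ^ j * c ^ (k : ℕ) * s ^ (e : ℕ))
        = (X * (a ^ i * b ^ j)) * (c ^ (k : ℕ) * s ^ (e : ℕ)) := by simp only [mul_assoc]
      _ = b ^ i * ((a * b)⁻¹) ^ j * X * (c ^ (k : ℕ) * s ^ (e : ℕ)) := by rw [conjX]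
      _ = b ^ i * ((a * b)⁻¹) ^ j * ((a * b)⁻¹ * c ^ 2) * (c ^ (k : ℕ) * s ^ (e : ℕ)) := by
          rw [← c2]
      _ = (b ^ i * ((a * b)⁻¹) ^ j * (a * b)⁻¹) * (c ^ 2 * (c ^ (k : ℕ) * s ^ (e : ℕ))) := by
          simp only [mul_assoc]
      _ = _ := by rw [h3, h]; simp only [mul_assoc]
  have hmulS : ∀ g, (∃ (i j : ℤ) (k : Fin 3) (e : Fin 2),
      g = a ^ i * b ^ j * c ^ (k : ℕ) * s ^ (e : ℕ)) → ∃ (i j : ℤ) (k : Fin 3) (e : Fin 2),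
      s * g = a ^ i * b ^ j * c ^ (k : ℕ) * s ^ (e : ℕ) := by
    rintro g ⟨i, j, k, e, rfl⟩
    obtain ⟨k', e', h⟩ := key_s k e
    refine ⟨j, i, k', e', ?_⟩
    calc s * (a ^ i * b ^ j * c ^ (k : ℕ) * s ^ (e : ℕ))
        = (s * (a ^ i * b ^ j)) * (c ^ (k : ℕ) * s ^ (e : ℕ)) := by simp only [mul_assoc]
      _ = b ^ i * a ^ j * s * (c ^ (k : ℕ) * s ^ (e : ℕ)) := by rw [conjS]
      _ = (a ^ j * b ^ i) * (s * (c ^ (k : ℕ) * s ^ (e : ℕ))) := by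
          rw [(hC.zpow_zpow j i).eq]; simp only [mul_assoc]
      _ = _ := by rw [h]; simp only [mul_assoc]
  induction hg using Subgroup.closure_induction_left with
  | one => exact ⟨0, 0, 0, 0, by simp⟩
  | mul_left x hx y hy ih =>
    rcases hx with rfl | rfl
    · exact hmulX _ ih
    · exact hmulS _ ih
  | inv_mul_cancel x hx y hy ih =>
    rcases hx with rfl | rfl
    · rw [← x1, mul_assoc]; exact hmulX _ (hmulX _ ih)
    · rw [s3]; exact hmulS _ ih

abbrev SD (n : ℕ) :=
  SemidirectProduct (Multiplicative (ZMod n × ZMod n)) (Equiv.Perm (Fin 3)) (fphi n)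

def sx (n : ℕ) : SD n := ⟨Multiplicative.ofAdd (-1, -1), finRotate 3⟩
def ss (n : ℕ) : SD n := ⟨1, Equiv.swap 0 1⟩

theorem sd_mul {n : ℕ} (u v : ZMod n × ZMod n) (σ τ : Equiv.Perm (Fin 3)) :
    ((⟨Multiplicative.ofAdd u, σ⟩ : SD n) * ⟨Multiplicative.ofAdd v, τ⟩) =
      ⟨Multiplicative.ofAdd (u + act3 σ v), σ * τ⟩ := rfl

theorem sd_one {n : ℕ} : (1 : SD n) = ⟨Multiplicative.ofAdd (0, 0), 1⟩ := rfl

theorem act3_rot {n : ℕ} (p q : ZMod n) : act3 (finRotate 3) (p, q) = (-q, p - q) := by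
  have h0 : (finRotate 3)⁻¹ 0 = 2 := by decide
  have h1 : (finRotate 3)⁻¹ 1 = 0 := by decide
  have h2 : (finRotate 3)⁻¹ 2 = 1 := by decide
  simp [act3, h0, h1, h2, ext3]

theorem act3_rot_inv {n : ℕ} (p q : ZMod n) :
    act3 (finRotate 3)⁻¹ (p, q) = (q - p, -p) := by
  have h0 : ((finRotate 3)⁻¹)⁻¹ 0 = 1 := by decide
  have h1 : ((finRotate 3)⁻¹)⁻¹ 1 = 2 := by decide
  have h2 : ((finRotate 3)⁻¹)⁻¹ 2 = 0 := by decide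
  simp only [act3, h0, h1, h2, ext3]
  simp

theorem act3_swap {n : ℕ} (p q : ZMod n) : act3 (Equiv.swap 0 1) (p, q) = (q, p) := by
  have h0 : (Equiv.swap (0 : Fin 3) 1)⁻¹ 0 = 1 := by decide
  have h1 : (Equiv.swap (0 : Fin 3) 1)⁻¹ 1 = 0 := by decide
  have h2 : (Equiv.swap (0 : Fin 3) 1)⁻¹ 2 = 2 := by decide
  simp only [act3, h0, h1, h2, ext3]
  simp

theorem ss_def (n : ℕ) : ss n = ⟨Multiplicative.ofAdd (0, 0), Equiv.swap 0 1⟩ := rfl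

theorem sx_inv (n : ℕ) : (sx n)⁻¹ = ⟨Multiplicative.ofAdd (0, -1), (finRotate 3)⁻¹⟩ := by
  rw [inv_eq_iff_mul_eq_one, sx, sd_mul, act3_rot, sd_one]
  simp

theorem sx_pow (n : ℕ) : sx n ^ 3 = 1 := by
  rw [pow_succ, pow_two, sx, sd_mul, sd_mul, act3_rot, sd_one]
  have h : finRotate 3 * finRotate 3 * finRotate 3 = 1 := by decide
  have h' : ∀ v : ZMod n × ZMod n, act3 (finRotate 3 * finRotate 3) v =
    act3 (finRotate 3) (act3 (finRotate 3) v) := act3_mul _ _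
  rw [h, h', act3_rot, act3_rot]
  simp

theorem ss_pow (n : ℕ) : ss n ^ 2 = 1 := by
  rw [pow_two, ss_def, sd_mul, act3_swap, sd_one]
  simp

theorem sa (n : ℕ) : ((sx n)⁻¹ * ss n) ^ 2 = SemidirectProduct.inl (Multiplicative.ofAdd (1, 0)) := by
  rw [pow_two, sx_inv, ss_def, sd_mul, sd_mul, act3_mul, act3_rot_inv, act3_swap]
  have h : (finRotate 3)⁻¹ * Equiv.swap 0 1 * ((finRotate 3)⁻¹ * Equiv.swap 0 1) = 1 := by decide
  rw [h]
  simp [act3_rot_inv, act3_swap]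

theorem sb (n : ℕ) : sx n * ((sx n)⁻¹ * ss n) ^ 2 * (sx n)⁻¹ =
    SemidirectProduct.inl (Multiplicative.ofAdd (0, 1)) := by
  have : (SemidirectProduct.inl (Multiplicative.ofAdd ((1 : ZMod n), (0 : ZMod n))) : SD n) =
    ⟨Multiplicative.ofAdd (1, 0), 1⟩ := rfl
  rw [sa, this, sx_inv, sx, sd_mul, sd_mul, mul_one, act3_rot, act3_rot]
  simp

theorem sc (n : ℕ) : ss n * (sx n)⁻¹ * ss n * sx n =
    SemidirectProduct.inr (finRotate 3)⁻¹ := by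
  rw [sx_inv, sx, ss_def, sd_mul, sd_mul, sd_mul]
  simp only [act3_mul, act3_rot_inv, act3_swap]
  have h : Equiv.swap 0 1 * (finRotate 3)⁻¹ * Equiv.swap 0 1 * finRotate 3 =
    (finRotate 3)⁻¹ := by decide
  rw [h]
  simp [act3_rot_inv, act3_swap]
  rfl

theorem inl_zpow_prod {n : ℕ} (i j : ℤ) :
    (Multiplicative.ofAdd ((1 : ZMod n), (0 : ZMod n))) ^ i *
      (Multiplicative.ofAdd ((0 : ZMod n), (1 : ZMod n))) ^ j =
      Multiplicative.ofAdd ((i : ZMod n), (j : ZMod n)) := by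
  rw [← ofAdd_zsmul, ← ofAdd_zsmul, ← ofAdd_add]
  simp

def gens (n : ℕ) : Fin 2 → SD n := ![sx n, (sx n)⁻¹ * ss n]

theorem gens_rels (n : ℕ) : ∀ r ∈ fermatRels n, FreeGroup.lift (gens n) r = 1 := by
  rintro r (rfl | rfl | rfl | rfl)
  · simp [gens, sx_pow]
  · simp only [map_pow, FreeGroup.lift_apply_of, gens, Matrix.cons_val_one, Matrix.cons_val_fin_one]
    rw [pow_mul, sa, ← map_pow, ← ofAdd_nsmul]
    simp
    rfl
  · simp [gens, ss_pow]
  · have : FreeGroup.lift (gens n)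
      (FreeGroup.of 0 * FreeGroup.of 1 * (FreeGroup.of 0)⁻¹ * (FreeGroup.of 1)⁻¹) =
        ss n * (sx n)⁻¹ * ss n * sx n := by
      have h : (ss n)⁻¹ = ss n := by rw [inv_eq_iff_mul_eq_one, ← pow_two, ss_pow]
      simp [gens, h, mul_assoc]
    rw [map_pow, this, sc, ← map_pow]
    have h : ((finRotate 3)⁻¹) ^ 3 = 1 := by decide
    rw [h, map_one]

/-- The Fermat group `G_n` is a semidirect product `(ℤ/nℤ)² ⋊ Sym(3)`. -/
theorem fermat_group_semidirect_structure (n : ℕ) (hn : 1 ≤ n) :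
    ∃ φ : Equiv.Perm (Fin 3) →* MulAut (Multiplicative (ZMod n × ZMod n)),
      Nonempty (PresentedGroup (fermatRels n) ≃*
        SemidirectProduct (Multiplicative (ZMod n × ZMod n)) (Equiv.Perm (Fin 3)) φ) := by
  refine ⟨fphi n, ?_⟩
  let f : PresentedGroup (fermatRels n) →* SD n := PresentedGroup.toGroup (gens_rels n)
  obtain ⟨X, hXd⟩ : ∃ X : PresentedGroup (fermatRels n), X = PresentedGroup.of 0 := ⟨_, rfl⟩
  obtain ⟨Y, hYd⟩ : ∃ Y : PresentedGroup (fermatRels n), Y = PresentedGroup.of 1 := ⟨_, rfl⟩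
  have rel : ∀ r ∈ fermatRels n, PresentedGroup.mk (fermatRels n) r = 1 := fun r hr =>
    PresentedGroup.one_of_mem hr
  have r1 : X ^ 3 = 1 := by
    rw [hXd]; exact rel (FreeGroup.of 0 ^ 3) (by simp [fermatRels])
  have r2 : Y ^ (2 * n) = 1 := by
    rw [hYd]; exact rel (FreeGroup.of 1 ^ (2 * n)) (by simp [fermatRels])
  have r3 : (X * Y) ^ 2 = 1 := by
    rw [hXd, hYd]; exact rel ((FreeGroup.of 0 * FreeGroup.of 1) ^ 2) (by simp [fermatRels])
  have r4 : (X * Y * X⁻¹ * Y⁻¹) ^ 3 = 1 := by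
    rw [hXd, hYd]
    exact rel ((FreeGroup.of 0 * FreeGroup.of 1 * (FreeGroup.of 0)⁻¹ * (FreeGroup.of 1)⁻¹) ^ 3)
      (by simp [fermatRels])
  obtain ⟨s, hsd⟩ : ∃ s, s = X * Y := ⟨_, rfl⟩
  have hY : Y = X⁻¹ * s := by rw [hsd]; simp
  have hs : s ^ 2 = 1 := by rw [hsd, r3]
  have hsi : s⁻¹ = s := by rw [inv_eq_iff_mul_eq_one, ← pow_two, hs]
  have hc : (s * X⁻¹ * s * X) ^ 3 = 1 := by
    have : s * X⁻¹ * s * X = X * Y * X⁻¹ * Y⁻¹ := by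
      rw [hY]; simp [mul_assoc, hsi]
    rw [this, r4]
  have hcl : Subgroup.closure {X, s} = ⊤ := by
    rw [eq_top_iff, ← PresentedGroup.closure_range_of (fermatRels n), Subgroup.closure_le]
    have hXm : X ∈ Subgroup.closure {X, s} := Subgroup.subset_closure (by simp)
    have hsm : s ∈ Subgroup.closure {X, s} := Subgroup.subset_closure (by simp)
    rintro _ ⟨i, rfl⟩
    fin_cases i
    · rw [hXd] at hXm ⊢
      exact hXm
    · change PresentedGroup.of 1 ∈ _
      rw [← hYd, hY]
      exact mul_mem (inv_mem hXm) hsm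
  have fX : f X = sx n := by rw [hXd]; simp [f, gens]
  have fs : f s = ss n := by rw [hsd, hXd, hYd]; simp [f, gens]
  have han : ((X⁻¹ * s) ^ 2) ^ n = 1 := by rw [← hY, ← pow_mul, r2]
  have hbn : (X * (X⁻¹ * s) ^ 2 * X⁻¹) ^ n = 1 := by rw [conj_pow, han]; simp
  have fval : ∀ (i j : ℤ) (k : Fin 3) (e : Fin 2),
      f (((X⁻¹ * s) ^ 2) ^ i * (X * (X⁻¹ * s) ^ 2 * X⁻¹) ^ j *
        (s * X⁻¹ * s * X) ^ (k : ℕ) * s ^ (e : ℕ)) =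
      ⟨Multiplicative.ofAdd ((i : ZMod n), (j : ZMod n)),
        ((finRotate 3)⁻¹) ^ (k : ℕ) * (Equiv.swap 0 1) ^ (e : ℕ)⟩ := by
    intro i j k e
    have hss : ss n = SemidirectProduct.inr (Equiv.swap 0 1) := rfl
    have h1 : f ((X⁻¹ * s) ^ 2) = SemidirectProduct.inl (Multiplicative.ofAdd (1, 0)) := by
      rw [← sa]; simp [fX, fs]
    have h2 : f (X * (X⁻¹ * s) ^ 2 * X⁻¹) =
        SemidirectProduct.inl (Multiplicative.ofAdd (0, 1)) := by
      rw [← sb]; simp [fX, fs]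
    have h3 : f (s * X⁻¹ * s * X) = SemidirectProduct.inr (finRotate 3)⁻¹ := by
      rw [← sc]; simp [fX, fs]
    rw [map_mul, map_mul, map_mul, map_zpow, map_zpow, h1, h2, map_pow, map_pow, h3, fs, hss,
      SemidirectProduct.mk_eq_inl_mul_inr, ← inl_zpow_prod,
      map_mul SemidirectProduct.inl, map_mul SemidirectProduct.inr,
      map_zpow SemidirectProduct.inl, map_zpow SemidirectProduct.inl,
      map_pow SemidirectProduct.inr, map_pow SemidirectProduct.inr, mul_assoc]
  refine ⟨MulEquiv.ofBijective f ⟨?_, ?_⟩⟩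
  · rw [injective_iff_map_eq_one]
    intro g hg
    obtain ⟨i, j, k, e, rfl⟩ := core X s r1 hs hc g (by rw [hcl]; trivial)
    rw [fval, sd_one] at hg
    have h1 := congrArg SemidirectProduct.left hg
    have h2 := congrArg SemidirectProduct.right hg
    have h1' := Multiplicative.ofAdd.injective h1
    rw [Prod.mk.injEq, ZMod.intCast_zmod_eq_zero_iff_dvd, ZMod.intCast_zmod_eq_zero_iff_dvd] at h1'
    obtain ⟨⟨i', rfl⟩, ⟨j', rfl⟩⟩ := h1'
    have hd : ∀ (k : Fin 3) (e : Fin 2), ((finRotate 3)⁻¹) ^ (k : ℕ) *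
      (Equiv.swap 0 1) ^ (e : ℕ) = 1 → k = 0 ∧ e = 0 := by decide
    obtain ⟨rfl, rfl⟩ := hd k e h2
    rw [zpow_mul, zpow_mul, zpow_natCast, zpow_natCast, han, hbn]
    simp
  · rintro ⟨v, σ⟩
    obtain ⟨i, hi⟩ := ZMod.intCast_surjective v.toAdd.1
    obtain ⟨j, hj⟩ := ZMod.intCast_surjective v.toAdd.2
    have hd : ∀ σ : Equiv.Perm (Fin 3), ∃ (k : Fin 3) (e : Fin 2), ((finRotate 3)⁻¹) ^ (k : ℕ) *
      (Equiv.swap 0 1) ^ (e : ℕ) = σ := by decide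
    obtain ⟨k, e, rfl⟩ := hd σ
    refine ⟨_, (fval i j k e).trans ?_⟩
    rw [hi, hj]
    rfl

end RegularMap
end
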